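/- For N ∈ ℕ, let A(N) be the number of Gaussian primes 𝔭 = x + yi with |x| ≤ N and |y| ≤ N that are congruent to −1−6i modulo 16, and let B(N) be the total number of Gaussian primes 𝔭 = x + yi with |x| ≤ N and |y| ≤ N. Then the ratio A(N)/B(N) converges to 1/128 as N → ∞. -/

import Mathlib

noncomputable section

/-- The imaginary unit `i` as a Gaussian integer, so `ℤ[i] = ℤ + ℤ·gi`. -/
def gi : GaussianInt := ⟨0, 1⟩

/-- A Gaussian prime congruent to `-1 - 6i` modulo `16`. -/
def GoodPrime (π : GaussianInt) : Prop :=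
  Prime π ∧ (16 : GaussianInt) ∣ (π - (-1 - 6 * gi))

/-- The number of Gaussian primes `x + yi` with `|x| ≤ N`, `|y| ≤ N` that are congruent to
`-1 - 6i` modulo `16`. -/
def Acount (N : ℕ) : ℕ :=
  Set.ncard {z : GaussianInt | Prime z ∧ |z.re| ≤ (N : ℤ) ∧ |z.im| ≤ (N : ℤ) ∧
    (16 : GaussianInt) ∣ (z - (-1 - 6 * gi))}

/-- The total number of Gaussian primes `x + yi` with `|x| ≤ N`, `|y| ≤ N`. -/
def Bcount (N : ℕ) : ℕ :=
  Set.ncard {z : GaussianInt | Prime z ∧ |z.re| ≤ (N : ℤ) ∧ |z.im| ≤ (N : ℤ)}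

noncomputable section
open Filter Topology MeasureTheory Set Complex

/-- Fejér kernel -/
def fk (y : ℝ) : ℝ := if y = 0 then 1 else 2 * (1 - Real.cos y) / y ^ 2

lemma fk_nonneg (y : ℝ) : 0 ≤ fk y := by
  unfold fk; split_ifs
  · norm_num
  · have := Real.cos_le_one y
    apply div_nonneg <;> nlinarith [sq_nonneg y]

lemma fk_le (y : ℝ) : fk y ≤ 5 * (1 + y ^ 2)⁻¹ := by
  unfold fk; split_ifs with h
  · subst h; norm_num
  · have h1 := Real.one_sub_sq_div_two_le_cos (x := y)
    have h2 := Real.neg_one_le_cos y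
    have h3 : 0 < y ^ 2 := by positivity
    rw [← div_eq_mul_inv, div_le_div_iff₀ h3 (by positivity)]
    nlinarith

lemma fk_meas : Measurable fk := by
  unfold fk
  apply Measurable.ite (measurableSet_singleton 0) measurable_const
  fun_prop

lemma fk_integrable : Integrable fk := by
  refine (integrable_inv_one_add_sq.const_mul 5).mono' fk_meas.aestronglyMeasurable ?_
  filter_upwards with y
  rw [Real.norm_of_nonneg (fk_nonneg y)]
  exact fk_le y

lemma fk_eq_cos (y : ℝ) : ∫ t in (0:ℝ)..1, (1 - t) * Real.cos (t * y) = fk y / 2 := by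
  unfold fk; split_ifs with h
  · subst h
    simp only [mul_zero, Real.cos_zero, mul_one]
    rw [intervalIntegral.integral_sub (by simp) (by simp)]
    simp
    norm_num
  · have : ∀ t ∈ uIcc (0:ℝ) 1, HasDerivAt (fun t => (1 - t) * (Real.sin (t * y) / y) - Real.cos (t * y) / y ^ 2)
        ((1 - t) * Real.cos (t * y)) t := by
      intro t _
      have e1 : HasDerivAt (fun t : ℝ => t * y) y t := by simpa using (hasDerivAt_id t).mul_const y
      have e2 := ((hasDerivAt_id t).const_sub 1).mul (e1.sin.div_const y)
      have e3 := e1.cos.div_const (y ^ 2)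
      refine (e2.sub e3).congr_deriv ?_
      simp only [id]
      field_simp
      ring
    rw [intervalIntegral.integral_eq_sub_of_hasDerivAt this (Continuous.intervalIntegrable (by fun_prop) _ _)]
    simp
    field_simp
    ring

lemma fk_fourier (y : ℝ) :
    ∫ t in (-1:ℝ)..1, ((1 - |t| : ℝ) : ℂ) * cexp (t * y * I) = fk y := by
  have hc : Continuous fun t : ℝ => ((1 - |t| : ℝ) : ℂ) * cexp (t * y * I) := by fun_prop
  rw [← intervalIntegral.integral_add_adjacent_intervals (hc.intervalIntegrable _ 0) (hc.intervalIntegrable 0 _)]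
  have h1 : ∫ t in (-1:ℝ)..0, ((1 - |t| : ℝ) : ℂ) * cexp (t * y * I)
      = ∫ t in (0:ℝ)..1, ((1 - |t| : ℝ) : ℂ) * cexp (-(t * y * I)) := by
    have := intervalIntegral.integral_comp_neg (a := (0:ℝ)) (b := 1)
      (fun t : ℝ => ((1 - |t| : ℝ) : ℂ) * cexp (t * y * I))
    simp only [neg_zero] at this
    rw [← this]
    simp
  rw [h1, ← intervalIntegral.integral_add (Continuous.intervalIntegrable (by fun_prop) _ _)
    (Continuous.intervalIntegrable (by fun_prop) _ _)]
  have h2 : ∀ t ∈ uIcc (0:ℝ) 1, ((1 - |t| : ℝ) : ℂ) * cexp (-(t * y * I)) + ((1 - |t| : ℝ) : ℂ) * cexp (t * y * I)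
      = ((2 * ((1 - t) * Real.cos (t * y)) : ℝ) : ℂ) := by
    intro t ht
    rw [uIcc_of_le zero_le_one] at ht
    rw [abs_of_nonneg ht.1]
    push_cast
    rw [Complex.cos]
    rw [show -((t:ℂ) * y) * I = -(t * y * I) by ring]
    ring
  rw [intervalIntegral.integral_congr h2, intervalIntegral.integral_ofReal,
    intervalIntegral.integral_const_mul, fk_eq_cos]
  congr 1; ring
end

noncomputable section
open Filter Topology MeasureTheory Set Complex

lemma fk_fub (g : ℝ → ℂ) (hg : Integrable g) (l u : ℝ) :
    ∫ y, g y * (fk (l * (y - u)) : ℂ) =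
      ∫ t in (-1:ℝ)..1, ((1 - |t| : ℝ) : ℂ) * cexp (-(l * t * u * I)) * ∫ y, g y * cexp (l * t * y * I) := by
  simp_rw [← fk_fourier, intervalIntegral.integral_of_le (show (-1:ℝ) ≤ 1 by norm_num),
    ← MeasureTheory.integral_const_mul]
  rw [MeasureTheory.integral_integral_swap]
  · congr 1; ext t; congr 1; ext y
    rw [show ((t:ℂ) * ((l * (y - u) : ℝ) : ℂ) * I) = -(l * t * u * I) + l * t * y * I by push_cast; ring, Complex.exp_add]
    ring
  · have h1 : Integrable (fun p : ℝ × ℝ => g p.1 * (1:ℂ)) (volume.prod (volume.restrict (Ioc (-1:ℝ) 1))) :=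
      Integrable.mul_prod hg (integrable_const (1:ℂ))
    have h2 := h1.bdd_mul (c := 2) (f := fun p : ℝ × ℝ => ((1 - |p.2| : ℝ) : ℂ) * cexp (p.2 * ((l * (p.1 - u) : ℝ):ℂ) * I))
      (Continuous.aestronglyMeasurable (by fun_prop)) ?_
    · refine h2.congr (ae_of_all _ fun p => ?_)
      simp [Function.uncurry]
      ring
    · have : ∀ᵐ p ∂(volume.prod (volume.restrict (Ioc (-1:ℝ) 1)) : Measure (ℝ × ℝ)), p.2 ∈ Ioc (-1:ℝ) 1 := by
        have h3 : ∀ᵐ t ∂(volume.restrict (Ioc (-1:ℝ) 1)), t ∈ Ioc (-1:ℝ) 1 := ae_restrict_mem measurableSet_Ioc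
        exact Measure.quasiMeasurePreserving_snd.ae h3
      filter_upwards [this] with p hp
      rw [norm_mul, show (p.2:ℂ) * ((l * (p.1 - u) : ℝ):ℂ) * I = ((p.2 * (l * (p.1 - u)) : ℝ):ℂ) * I by push_cast; ring,
        Complex.norm_exp_ofReal_mul_I, mul_one, Complex.norm_real, Real.norm_eq_abs]
      have : |p.2| ≤ 1 := abs_le.mpr ⟨hp.1.le, hp.2⟩
      rw [abs_le]; constructor <;> linarith [abs_nonneg p.2]

/-- oscillatory integral attached to a boundary function. -/
def oscR (Γ : ℂ → ℂ) (l ε u : ℝ) : ℂ :=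
  ∫ t in (-1:ℝ)..1, ((1 - |t| : ℝ) : ℂ) * cexp (-(l * t * u * I)) * Γ (ε - l * t * I)

lemma oscR_contOn (Γ : ℂ → ℂ) (hΓ : ContinuousOn Γ {s | 0 ≤ s.re}) (l : ℝ) {ε : ℝ} (hε : 0 ≤ ε) :
    Continuous (fun t : ℝ => Γ (ε - l * t * I)) := by
  refine hΓ.comp_continuous (by fun_prop) (fun t => ?_)
  simp [hε]

lemma oscR_tendsto_zero (Γ : ℂ → ℂ) (hΓ : ContinuousOn Γ {s | 0 ≤ s.re}) (l u : ℝ) :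
    Tendsto (fun ε => oscR Γ l ε u) (𝓝[>] 0) (𝓝 (oscR Γ l 0 u)) := by
  have hK : IsCompact ((fun p : ℝ × ℝ => ((p.1:ℂ) - l * p.2 * I)) '' (Icc 0 1 ×ˢ Icc (-1) 1)) :=
    (isCompact_Icc.prod isCompact_Icc).image (by fun_prop)
  obtain ⟨C, hC⟩ := hK.exists_bound_of_continuousOn (hΓ.mono (by
    rintro _ ⟨p, hp, rfl⟩
    simpa using hp.1.1))
  unfold oscR
  apply intervalIntegral.tendsto_integral_filter_of_dominated_convergence (fun _ => C)
  · filter_upwards [self_mem_nhdsWithin] with ε hε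
    have := oscR_contOn Γ hΓ l (le_of_lt hε)
    refine Continuous.aestronglyMeasurable (Continuous.mul (by fun_prop) this)
  · have : ∀ᶠ ε : ℝ in 𝓝[>] 0, ε ≤ 1 := by
      apply mem_nhdsWithin_of_mem_nhds
      exact Iic_mem_nhds (by norm_num)
    filter_upwards [self_mem_nhdsWithin, this] with ε hε hε1
    refine ae_of_all _ fun t ht => ?_
    rw [uIoc_of_le (by norm_num)] at ht
    have h1 := hC _ ⟨(ε, t), ⟨⟨le_of_lt hε, hε1⟩, ⟨ht.1.le, ht.2⟩⟩, rfl⟩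
    rw [norm_mul, norm_mul, show -((l:ℂ) * t * u * I) = ((-(l * t * u) : ℝ):ℂ) * I by push_cast; ring,
        Complex.norm_exp_ofReal_mul_I, mul_one, Complex.norm_real, Real.norm_eq_abs]
    have : |t| ≤ 1 := abs_le.mpr ⟨ht.1.le, ht.2⟩
    have h2 : |(1 - |t|)| ≤ 1 := by
      rw [abs_le]; constructor <;> linarith [abs_nonneg t]
    calc _ ≤ 1 * ‖Γ (ε - l * t * I)‖ := by gcongr
      _ ≤ C := by simpa using h1
  · exact intervalIntegrable_const
  · refine ae_of_all _ fun t ht => ?_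
    apply Tendsto.const_mul
    have h1 := hΓ ((0:ℝ) - l * t * I) (by simp)
    refine h1.tendsto.comp ?_
    apply tendsto_nhdsWithin_iff.mpr
    constructor
    · have : Continuous fun ε : ℝ => ((ε:ℂ) - l * t * I) := by fun_prop
      exact (this.tendsto 0).mono_left nhdsWithin_le_nhds
    · filter_upwards [self_mem_nhdsWithin] with ε hε
      simpa using le_of_lt hε

lemma oscR_RL (Γ : ℂ → ℂ) {l : ℝ} (hl : 0 < l) :
    Tendsto (fun u => oscR Γ l 0 u) atTop (𝓝 0) := by
  have h := Real.tendsto_integral_exp_smul_cocompact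
    (fun t : ℝ => (Ioc (-1:ℝ) 1).indicator (fun t : ℝ => ((1 - |t| : ℝ) : ℂ) * Γ (((0:ℝ):ℂ) - l * t * I)) t)
  have h2 : Tendsto (fun u : ℝ => l / (2 * Real.pi) * u) atTop (cocompact ℝ) :=
    (tendsto_id.const_mul_atTop (by positivity)).mono_right atTop_le_cocompact
  refine (h.comp h2).congr fun u => ?_
  simp only [Function.comp, oscR]
  rw [intervalIntegral.integral_of_le (by norm_num), ← integral_indicator measurableSet_Ioc]
  congr 1; ext t
  by_cases ht : t ∈ Ioc (-1:ℝ) 1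
  · rw [indicator_of_mem ht, indicator_of_mem ht, Circle.smul_def, Real.fourierChar_apply, smul_eq_mul]
    rw [show ((2 * Real.pi * -(t * (l / (2 * Real.pi) * u)) : ℝ) : ℂ) * I = -(l * t * u * I) by
      push_cast
      have : (Real.pi : ℂ) ≠ 0 := by exact_mod_cast Real.pi_ne_zero
      field_simp]
    ring
  · simp [indicator_of_notMem ht]
end

noncomputable section
open Filter Topology MeasureTheory Set Complex

def fkI : ℝ := ∫ x, fk x
def fkM (M : ℝ) : ℝ := ∫ x in (-M)..M, fk x

lemma fkM_tendsto : Tendsto fkM atTop (𝓝 fkI) :=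
  intervalIntegral_tendsto_integral fk_integrable tendsto_neg_atTop_atBot tendsto_id

lemma fkM_le {M : ℝ} (hM : 0 ≤ M) : fkM M ≤ fkI := by
  unfold fkM fkI
  rw [intervalIntegral.integral_of_le (by linarith)]
  exact setIntegral_le_integral fk_integrable (ae_of_all _ fk_nonneg)

lemma fkI_pos : 0 < fkI := by
  unfold fkI
  rw [integral_pos_iff_support_of_nonneg fk_nonneg fk_integrable]
  have : Ioo (0:ℝ) 1 ⊆ Function.support fk := by
    intro y hy
    have h1 : Real.cos y < 1 := by
      have := Real.cos_lt_cos_of_nonneg_of_le_pi_div_two le_rfl (by linarith [Real.pi_gt_three, hy.2]) hy.1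
      simpa using this
    have : y ≠ 0 := hy.1.ne'
    simp only [Function.mem_support, fk, this, if_false]
    have : 0 < 1 - Real.cos y := by linarith
    positivity
  refine lt_of_lt_of_le ?_ (measure_mono this)
  simp

lemma fk_scale {l : ℝ} (hl : 0 < l) (u : ℝ) : ∫ y, fk (l * (y - u)) = fkI / l := by
  rw [integral_sub_right_eq_self (fun y => fk (l * y)) u, Measure.integral_comp_mul_left]
  rw [abs_of_pos (by positivity), smul_eq_mul, fkI]
  ring

lemma fk_scaleM {l : ℝ} (hl : 0 < l) (u δ : ℝ) :
    ∫ y in (u - δ)..(u + δ), fk (l * (y - u)) = fkM (l * δ) / l := by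
  rw [intervalIntegral.integral_comp_sub_right (fun y => fk (l * y)) u,
    intervalIntegral.integral_comp_mul_left _ hl.ne', fkM, smul_eq_mul]
  rw [show u + δ - u = δ by ring, show l * (u - δ - u) = -(l * δ) by ring]
  ring

lemma fk_scale_integrable {l : ℝ} (hl : 0 < l) (u : ℝ) : Integrable fun y => fk (l * (y - u)) :=
  (fk_integrable.comp_mul_left' hl.ne').comp_sub_right u

lemma fk_le_five (y : ℝ) : fk y ≤ 5 := by
  refine (fk_le y).trans ?_
  have : (1 + y ^ 2)⁻¹ ≤ 1 := inv_le_one_of_one_le₀ (by nlinarith [sq_nonneg y])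
  linarith

section core
lemma wi_key (B : ℝ → ℝ) (hBm : Measurable B) (hB0 : ∀ u, 0 ≤ B u)
    (hInt : ∀ ε : ℝ, 0 < ε → Integrable (fun y => B y * Real.exp (-ε * y)))
    (c : ℝ) (Γ : ℂ → ℂ)
    (hL : ∀ s : ℂ, 0 < s.re → (∫ y, (B y : ℂ) * cexp (-s * y)) - c / s = Γ s)
    {l : ℝ} (hl : 0 < l) (u : ℝ) {ε : ℝ} (hε : 0 < ε) :
    (∫ y, B y * Real.exp (-ε * y) * fk (l * (y - u))) -
      c * ∫ y in Ioi (0:ℝ), Real.exp (-ε * y) * fk (l * (y - u)) = (oscR Γ l ε u).re := by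
  have hi1 : Integrable (fun y => ((B y * Real.exp (-ε * y) : ℝ) : ℂ)) := (hInt ε hε).ofReal
  have hi2' : IntegrableOn (fun y : ℝ => Real.exp (-ε * y)) (Ioi 0) := integrableOn_exp_mul_Ioi (by linarith) 0
  have hi2 : Integrable ((Ioi (0:ℝ)).indicator fun y : ℝ => ((Real.exp (-ε * y) : ℝ) : ℂ)) :=
    (integrable_indicator_iff measurableSet_Ioi).mpr hi2'.ofReal
  have e1 := fk_fub _ hi1 l u
  have e2 := fk_fub _ hi2 l u
  have hcont : ∀ g : ℝ → ℂ, Integrable g → Continuous fun t : ℝ => ∫ y, g y * cexp (l * t * y * I) := by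
    intro g hg
    apply continuous_of_dominated (bound := fun y => ‖g y‖)
    · intro t
      exact hg.aestronglyMeasurable.mul (Continuous.aestronglyMeasurable (by fun_prop))
    · intro t; refine ae_of_all _ fun y => ?_
      rw [norm_mul, show (l:ℂ) * t * y * I = ((l * t * y : ℝ):ℂ) * I by push_cast; ring, Complex.norm_exp_ofReal_mul_I, mul_one]
    · exact hg.norm
    · refine ae_of_all _ fun y => by fun_prop
  have key : ((∫ y, ((B y * Real.exp (-ε * y) : ℝ) : ℂ) * (fk (l * (y - u)) : ℂ)) -
      c * ∫ y, (Ioi (0:ℝ)).indicator (fun y : ℝ => ((Real.exp (-ε * y) : ℝ) : ℂ)) y * (fk (l * (y - u)) : ℂ)) = oscR Γ l ε u := by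
    rw [e1, e2, oscR, ← intervalIntegral.integral_const_mul, ← intervalIntegral.integral_sub]
    · congr 1; ext t
      have hre : 0 < ((ε:ℂ) - l * t * I).re := by simpa using hε
      rw [← hL _ hre]
      have a1 : ∫ y, ((B y * Real.exp (-ε * y) : ℝ) : ℂ) * cexp (l * t * y * I)
          = ∫ y, (B y : ℂ) * cexp (-(ε - l * t * I) * y) := by
        congr 1; ext y
        rw [show -((ε:ℂ) - l * t * I) * y = (-ε * y : ℂ) + l * t * y * I by ring, Complex.exp_add]
        push_cast; ring
      have a2 : ∫ y, (Ioi (0:ℝ)).indicator (fun y : ℝ => ((Real.exp (-ε * y) : ℝ) : ℂ)) y * cexp (l * t * y * I)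
          = 1 / (ε - l * t * I) := by
        have : ∀ y : ℝ, (Ioi (0:ℝ)).indicator (fun y : ℝ => ((Real.exp (-ε * y) : ℝ) : ℂ)) y * cexp (l * t * y * I)
          = (Ioi (0:ℝ)).indicator (fun y : ℝ => cexp (-(ε - l * t * I) * y)) y := by
          intro y
          by_cases hy : y ∈ Ioi (0:ℝ)
          · rw [indicator_of_mem hy, indicator_of_mem hy]
            rw [show -((ε:ℂ) - l * t * I) * y = (-ε * y : ℂ) + l * t * y * I by ring, Complex.exp_add]
            push_cast; ring
          · simp [indicator_of_notMem hy]
        simp_rw [this]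
        rw [integral_indicator measurableSet_Ioi, integral_exp_mul_complex_Ioi (by
          rw [neg_re]; linarith)]
        simp only [ofReal_zero, mul_zero, Complex.exp_zero]
        rw [neg_div_neg_eq]
      rw [a1, a2]; ring
    · exact Continuous.intervalIntegrable (Continuous.mul (by fun_prop) (hcont _ hi1)) _ _
    · exact Continuous.intervalIntegrable (Continuous.mul continuous_const (Continuous.mul (by fun_prop) (hcont _ hi2))) _ _
  rw [← key]
  have b1 : ∫ y, ((B y * Real.exp (-ε * y) : ℝ) : ℂ) * (fk (l * (y - u)) : ℂ) =
      ((∫ y, B y * Real.exp (-ε * y) * fk (l * (y - u)) : ℝ) : ℂ) := by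
    refine Eq.trans ?_ integral_complex_ofReal
    congr 1; ext y; push_cast; ring
  have b2 : ∫ y, (Ioi (0:ℝ)).indicator (fun y : ℝ => ((Real.exp (-ε * y) : ℝ) : ℂ)) y * (fk (l * (y - u)) : ℂ) =
      ((∫ y in Ioi (0:ℝ), Real.exp (-ε * y) * fk (l * (y - u)) : ℝ) : ℂ) := by
    rw [← integral_indicator measurableSet_Ioi]
    refine Eq.trans ?_ integral_complex_ofReal
    congr 1; ext y
    by_cases hy : y ∈ Ioi (0:ℝ)
    · rw [indicator_of_mem hy, indicator_of_mem hy]; push_cast; ring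
    · simp [indicator_of_notMem hy]
  rw [b1, b2, sub_re, ofReal_re, ← ofReal_mul, ofReal_re]

lemma wi_upper (B : ℝ → ℝ) (hBm : Measurable B) (hB0 : ∀ u, 0 ≤ B u)
    (σ₀ : ℝ) (hσ : 0 ≤ σ₀) (hmono : ∀ u v, u ≤ v → B u ≤ Real.exp (σ₀ * (v - u)) * B v)
    (hInt : ∀ ε : ℝ, 0 < ε → Integrable (fun y => B y * Real.exp (-ε * y)))
    (c : ℝ) (hc : 0 ≤ c) (Γ : ℂ → ℂ) (hΓ : ContinuousOn Γ {s | 0 ≤ s.re})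
    (hL : ∀ s : ℂ, 0 < s.re → (∫ y, (B y : ℂ) * cexp (-s * y)) - c / s = Γ s)
    {l δ : ℝ} (hl : 0 < l) (hδ : 0 < δ) (v : ℝ) :
    B v * Real.exp (-(2 * σ₀ * δ)) * fkM (l * δ) ≤ c * fkI + l * (oscR Γ l 0 (v + δ)).re := by
  have hlim := (Complex.continuous_re.tendsto _).comp (oscR_tendsto_zero Γ hΓ l (v + δ))
  have hR : Tendsto (fun ε => c * fkI + l * (oscR Γ l ε (v + δ)).re) (𝓝[>] 0)
    (𝓝 (c * fkI + l * (oscR Γ l 0 (v + δ)).re)) := (hlim.const_mul l).const_add _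
  have hLft : Tendsto (fun ε => B v * Real.exp (-(2 * σ₀ * δ)) * fkM (l * δ) * Real.exp (-ε * |v + 2 * δ|)) (𝓝[>] 0)
    (𝓝 (B v * Real.exp (-(2 * σ₀ * δ)) * fkM (l * δ))) := by
    have : Continuous fun ε => B v * Real.exp (-(2 * σ₀ * δ)) * fkM (l * δ) * Real.exp (-ε * |v + 2 * δ|) := by fun_prop
    have h := (this.tendsto 0).mono_left (nhdsWithin_le_nhds (s := Ioi 0))
    simpa using h
  refine le_of_tendsto_of_tendsto hLft hR ?_
  filter_upwards [self_mem_nhdsWithin] with ε hε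
  have hε : 0 < ε := hε
  have key := wi_key B hBm hB0 hInt c Γ hL hl (v + δ) hε
  have hii := fk_scale_integrable hl (v + δ)
  have hprod : Integrable fun y => B y * Real.exp (-ε * y) * fk (l * (y - (v + δ))) := by
    refine (hInt ε hε).mul_bdd (c := 5) hii.aestronglyMeasurable (ae_of_all _ fun y => ?_)
    rw [Real.norm_of_nonneg (fk_nonneg _)]; exact fk_le_five _
  have h1 : c * ∫ y in Ioi (0:ℝ), Real.exp (-ε * y) * fk (l * (y - (v + δ))) ≤ c * (fkI / l) := by
    gcongr
    rw [← fk_scale hl (v + δ)]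
    refine le_trans (setIntegral_mono_on ?_ hii.integrableOn measurableSet_Ioi ?_) (setIntegral_le_integral hii (ae_of_all _ fun y => fk_nonneg _))
    · refine Integrable.bdd_mul (c := 1) hii.integrableOn (Continuous.aestronglyMeasurable (by fun_prop)) ?_
      filter_upwards [ae_restrict_mem measurableSet_Ioi] with y hy
      rw [Real.norm_of_nonneg (Real.exp_pos _).le, Real.exp_le_one_iff]
      have : 0 < y := hy
      nlinarith
    · intro y hy
      have : 0 < y := hy
      have : Real.exp (-ε * y) ≤ 1 := by rw [Real.exp_le_one_iff]; nlinarith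
      nlinarith [fk_nonneg (l * (y - (v + δ)))]
  have h2 : B v * Real.exp (-(2 * σ₀ * δ)) * Real.exp (-ε * |v + 2 * δ|) * (fkM (l * δ) / l) ≤
      ∫ y, B y * Real.exp (-ε * y) * fk (l * (y - (v + δ))) := by
    rw [← fk_scaleM hl (v + δ) δ, intervalIntegral.integral_of_le (by linarith), ← integral_const_mul]
    refine le_trans (setIntegral_mono_on (hii.integrableOn.const_mul _) hprod.integrableOn measurableSet_Ioc ?_)
      (setIntegral_le_integral hprod (ae_of_all _ fun y => by have := fk_nonneg (l * (y - (v + δ))); have := hB0 y; positivity))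
    intro y hy
    have hy1 : v ≤ y := by linarith [hy.1]
    have hy2 : y ≤ v + 2 * δ := by linarith [hy.2]
    refine mul_le_mul_of_nonneg_right ?_ (fk_nonneg _)
    refine mul_le_mul ?_ ?_ (Real.exp_pos _).le (hB0 y)
    · have := hmono v y hy1
      rw [Real.exp_neg, ← div_eq_mul_inv, div_le_iff₀ (Real.exp_pos _), mul_comm]
      refine this.trans (mul_le_mul_of_nonneg_right (Real.exp_le_exp.mpr ?_) (hB0 y))
      nlinarith
    · apply Real.exp_le_exp.mpr
      have := le_abs_self (v + 2 * δ)
      nlinarith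
  have h3 : B v * Real.exp (-(2 * σ₀ * δ)) * fkM (l * δ) * Real.exp (-ε * |v + 2 * δ|) =
    l * (B v * Real.exp (-(2 * σ₀ * δ)) * Real.exp (-ε * |v + 2 * δ|) * (fkM (l * δ) / l)) := by field_simp
  rw [h3, show c * fkI + l * (oscR Γ l ε (v + δ)).re = l * (c * (fkI / l) + (oscR Γ l ε (v + δ)).re) by field_simp]
  gcongr
  linarith

lemma wi_lower (B : ℝ → ℝ) (hBm : Measurable B) (hB0 : ∀ u, 0 ≤ B u) (hBneg : ∀ u, u < 0 → B u = 0)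
    (σ₀ : ℝ) (hσ : 0 ≤ σ₀) (hmono : ∀ u v, u ≤ v → B u ≤ Real.exp (σ₀ * (v - u)) * B v)
    (hInt : ∀ ε : ℝ, 0 < ε → Integrable (fun y => B y * Real.exp (-ε * y)))
    (c : ℝ) (hc : 0 ≤ c) (Γ : ℂ → ℂ) (hΓ : ContinuousOn Γ {s | 0 ≤ s.re})
    (hL : ∀ s : ℂ, 0 < s.re → (∫ y, (B y : ℂ) * cexp (-s * y)) - c / s = Γ s)
    {l δ M : ℝ} (hl : 0 < l) (hδ : 0 < δ) (hM : ∀ u, B u ≤ M) {u : ℝ} (hu : 0 < u) :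
    c * fkM (l * u) + l * (oscR Γ l 0 u).re ≤
      M * (fkI - fkM (l * δ)) + B (u + δ) * Real.exp (2 * σ₀ * δ) * fkM (l * δ) := by
  have hlim := (Complex.continuous_re.tendsto _).comp (oscR_tendsto_zero Γ hΓ l u)
  have hLft : Tendsto (fun ε => c * fkM (l * u) * Real.exp (-ε * (2 * u)) + l * (oscR Γ l ε u).re) (𝓝[>] 0)
    (𝓝 (c * fkM (l * u) + l * (oscR Γ l 0 u).re)) := by
    refine Tendsto.add ?_ (hlim.const_mul l)
    have : Continuous fun ε => c * fkM (l * u) * Real.exp (-ε * (2 * u)) := by fun_prop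
    have h := (this.tendsto 0).mono_left (nhdsWithin_le_nhds (s := Ioi 0))
    simpa using h
  refine le_of_tendsto hLft ?_
  filter_upwards [self_mem_nhdsWithin] with ε hε
  have hε : 0 < ε := hε
  have key := wi_key B hBm hB0 hInt c Γ hL hl u hε
  have hii := fk_scale_integrable hl u
  have hprod : Integrable fun y => B y * Real.exp (-ε * y) * fk (l * (y - u)) := by
    refine (hInt ε hε).mul_bdd (c := 5) hii.aestronglyMeasurable (ae_of_all _ fun y => ?_)
    rw [Real.norm_of_nonneg (fk_nonneg _)]; exact fk_le_five _
  have h1 : c * (Real.exp (-ε * (2 * u)) * (fkM (l * u) / l)) ≤ c * ∫ y in Ioi (0:ℝ), Real.exp (-ε * y) * fk (l * (y - u)) := by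
    have hint2 : IntegrableOn (fun y => Real.exp (-ε * y) * fk (l * (y - u))) (Ioi 0) := by
      refine Integrable.bdd_mul (c := 1) hii.integrableOn (Continuous.aestronglyMeasurable (by fun_prop)) ?_
      filter_upwards [ae_restrict_mem measurableSet_Ioi] with y hy
      rw [Real.norm_of_nonneg (Real.exp_pos _).le, Real.exp_le_one_iff]
      have : 0 < y := hy
      nlinarith
    gcongr
    rw [← fk_scaleM hl u u, intervalIntegral.integral_of_le (by linarith), ← integral_const_mul]
    have hsub : Ioc (u - u) (u + u) ⊆ Ioi 0 := fun y hy => by simpa using hy.1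
    refine le_trans (setIntegral_mono_on (hii.integrableOn.const_mul _) (hint2.mono_set hsub) measurableSet_Ioc ?_)
      (setIntegral_mono_set hint2 (ae_of_all _ fun y => by have := fk_nonneg (l * (y - u)); positivity) hsub.eventuallyLE)
    intro y hy
    refine mul_le_mul_of_nonneg_right (Real.exp_le_exp.mpr ?_) (fk_nonneg _)
    nlinarith [hy.2]
  have h2 : ∫ y, B y * Real.exp (-ε * y) * fk (l * (y - u)) ≤
      M * (fkI / l) + (B (u + δ) * Real.exp (2 * σ₀ * δ) - M) * (fkM (l * δ) / l) := by
    rw [← fk_scaleM hl u δ, ← fk_scale hl u, intervalIntegral.integral_of_le (by linarith),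
      ← integral_indicator measurableSet_Ioc, ← integral_const_mul, ← integral_const_mul, ← integral_add (hii.const_mul _)
      ((hii.indicator measurableSet_Ioc).const_mul _)]
    refine integral_mono hprod ((hii.const_mul _).add
      ((hii.indicator measurableSet_Ioc).const_mul _)) fun y => ?_
    have hfk := fk_nonneg (l * (y - u))
    have hBe : B y * Real.exp (-ε * y) ≤ B y := by
      rcases lt_or_ge y 0 with hy | hy
      · simp [hBneg y hy]
      · have : Real.exp (-ε * y) ≤ 1 := by rw [Real.exp_le_one_iff]; nlinarith
        nlinarith [hB0 y]
    by_cases hy : y ∈ Ioc (u - δ) (u + δ)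
    · simp only [indicator_of_mem hy]
      have h3 : B y ≤ B (u + δ) * Real.exp (2 * σ₀ * δ) := by
        refine (hmono y (u + δ) hy.2).trans ?_
        rw [mul_comm]
        refine mul_le_mul_of_nonneg_left (Real.exp_le_exp.mpr ?_) (hB0 _)
        nlinarith [hy.1]
      nlinarith
    · simp only [indicator_of_notMem hy]
      nlinarith [hM y]
  have e1 : c * fkM (l * u) * Real.exp (-ε * (2 * u)) + l * (oscR Γ l ε u).re =
    l * (c * (Real.exp (-ε * (2 * u)) * (fkM (l * u) / l)) + (oscR Γ l ε u).re) := by field_simp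
  have e2 : M * (fkI - fkM (l * δ)) + B (u + δ) * Real.exp (2 * σ₀ * δ) * fkM (l * δ) =
    l * (M * (fkI / l) + (B (u + δ) * Real.exp (2 * σ₀ * δ) - M) * (fkM (l * δ) / l)) := by field_simp; ring
  rw [e1, e2]
  refine mul_le_mul_of_nonneg_left ?_ hl.le
  linarith

theorem wi_core (B : ℝ → ℝ) (hBm : Measurable B) (hB0 : ∀ u, 0 ≤ B u) (hBneg : ∀ u, u < 0 → B u = 0)
    (σ₀ : ℝ) (hσ : 0 ≤ σ₀) (hmono : ∀ u v, u ≤ v → B u ≤ Real.exp (σ₀ * (v - u)) * B v)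
    (hInt : ∀ ε : ℝ, 0 < ε → Integrable (fun y => B y * Real.exp (-ε * y)))
    (c : ℝ) (hc : 0 ≤ c) (Γ : ℂ → ℂ) (hΓ : ContinuousOn Γ {s | 0 ≤ s.re})
    (hL : ∀ s : ℂ, 0 < s.re → (∫ y, (B y : ℂ) * cexp (-s * y)) - c / s = Γ s) : Tendsto B atTop (𝓝 c) := by
  have hI := fkI_pos
  have hosc : ∀ {l : ℝ}, 0 < l → Tendsto (fun u => l * (oscR Γ l 0 u).re) atTop (𝓝 0) := by
    intro l hl
    have := (Complex.continuous_re.tendsto _).comp (oscR_RL Γ hl)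
    simpa using this.const_mul l
  have hMt : Tendsto (fun δ : ℝ => fkM (δ⁻¹)) (𝓝[>] 0) (𝓝 fkI) := fkM_tendsto.comp tendsto_inv_nhdsGT_zero
  have hE : ∀ a : ℝ, Tendsto (fun δ : ℝ => Real.exp (a * δ)) (𝓝[>] 0) (𝓝 1) := by
    intro a
    have : Continuous fun δ : ℝ => Real.exp (a * δ) := by fun_prop
    have h := (this.tendsto 0).mono_left (nhdsWithin_le_nhds (s := Ioi 0))
    simpa using h
  have hid : Tendsto (fun δ : ℝ => δ) (𝓝[>] 0) (𝓝 0) := tendsto_id.mono_left nhdsWithin_le_nhds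
  have up : ∀ b > c, ∀ᶠ u in atTop, B u < b := by
    intro b hb
    have h1 : Tendsto (fun δ : ℝ => b * Real.exp (-(2 * σ₀) * δ) * fkM (δ⁻¹) - δ) (𝓝[>] 0) (𝓝 (b * 1 * fkI - 0)) :=
      (((hE _).const_mul b).mul hMt).sub hid
    have h2 := h1.eventually (lt_mem_nhds (show c * fkI < b * 1 * fkI - 0 by nlinarith))
    have h3 := hMt.eventually (lt_mem_nhds hI)
    obtain ⟨δ, ⟨h2, h3⟩, hδ⟩ := ((h2.and h3).and self_mem_nhdsWithin).exists
    have hδ : 0 < δ := hδ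
    have hl : 0 < (δ ^ 2)⁻¹ := by positivity
    have h4 := ((hosc hl).comp (tendsto_atTop_add_const_right atTop δ tendsto_id)).eventually (gt_mem_nhds hδ)
    filter_upwards [h4] with v hv
    have h5 := wi_upper B hBm hB0 σ₀ hσ hmono hInt c hc Γ hΓ hL hl hδ v
    rw [show (δ ^ 2)⁻¹ * δ = δ⁻¹ by field_simp] at h5
    simp only [Function.comp, id] at hv
    by_contra hcon
    push Not at hcon
    have h6 : b * (Real.exp (-(2 * σ₀) * δ) * fkM (δ⁻¹)) ≤ B v * (Real.exp (-(2 * σ₀) * δ) * fkM (δ⁻¹)) := by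
      gcongr
    rw [show -(2 * σ₀ * δ) = -(2 * σ₀) * δ by ring] at h5
    nlinarith
  obtain ⟨U, hU⟩ := eventually_atTop.mp (up (c + 1) (by linarith))
  obtain ⟨M, hM⟩ : ∃ M, ∀ u, B u ≤ M := by
    refine ⟨max (c + 1) (Real.exp (σ₀ * |U|) * B U), fun u => ?_⟩
    rcases le_or_gt U u with h | h
    · exact (hU u h).le.trans (le_max_left _ _)
    · refine le_trans ?_ (le_max_right _ _)
      rcases lt_or_ge u 0 with h0 | h0
      · rw [hBneg u h0]; exact mul_nonneg (Real.exp_pos _).le (hB0 _)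
      · refine (hmono u U h.le).trans (mul_le_mul_of_nonneg_right (Real.exp_le_exp.mpr ?_) (hB0 _))
        gcongr
        linarith [le_abs_self U]
  refine tendsto_order.mpr ⟨fun b hb => ?_, up⟩
  have h1 : Tendsto (fun δ : ℝ => M * (fkI - fkM (δ⁻¹)) + b * Real.exp (2 * σ₀ * δ) * fkM (δ⁻¹) + δ) (𝓝[>] 0)
      (𝓝 (M * (fkI - fkI) + b * 1 * fkI + 0)) :=
    (((hMt.const_sub _).const_mul M).add (((hE _).const_mul b).mul hMt)).add hid
  have h2 := h1.eventually (gt_mem_nhds (show M * (fkI - fkI) + b * 1 * fkI + 0 < c * fkI by nlinarith))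
  have h3 := hMt.eventually (lt_mem_nhds hI)
  obtain ⟨δ, ⟨h2, h3⟩, hδ⟩ := ((h2.and h3).and self_mem_nhdsWithin).exists
  have hδ : 0 < δ := hδ
  have hl : 0 < (δ ^ 2)⁻¹ := by positivity
  have h4 : Tendsto (fun u => c * fkM ((δ ^ 2)⁻¹ * u) + (δ ^ 2)⁻¹ * (oscR Γ (δ ^ 2)⁻¹ 0 u).re) atTop (𝓝 (c * fkI + 0)) :=
    ((fkM_tendsto.comp (tendsto_id.const_mul_atTop hl)).const_mul c).add (hosc hl)
  have h5 := h4.eventually (lt_mem_nhds (show c * fkI - δ < c * fkI + 0 by linarith))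
  have h6 : ∀ᶠ u in atTop, b < B (u + δ) := by
    filter_upwards [h5, eventually_gt_atTop 0] with u hu hu0
    have h7 := wi_lower B hBm hB0 hBneg σ₀ hσ hmono hInt c hc Γ hΓ hL hl hδ hM hu0
    rw [show (δ ^ 2)⁻¹ * δ = δ⁻¹ by field_simp] at h7
    by_contra hcon
    push Not at hcon
    have h6 : B (u + δ) * (Real.exp (2 * σ₀ * δ) * fkM (δ⁻¹)) ≤ b * (Real.exp (2 * σ₀ * δ) * fkM (δ⁻¹)) := by
      gcongr
    nlinarith
  have h8 := (tendsto_atTop_add_const_right atTop (-δ) tendsto_id).eventually h6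
  filter_upwards [h8] with u hu
  simpa using hu
end core
end

noncomputable section
open Filter Topology MeasureTheory Set Complex

theorem wiener_ikehara {ι : Type*} [Countable ι] (a x : ι → ℝ) (ha : ∀ i, 0 ≤ a i) (hx : ∀ i, 1 ≤ x i)
    (hs : ∀ σ : ℝ, 1 < σ → Summable fun i => a i * x i ^ (-σ)) (c : ℝ) (hc : 0 ≤ c)
    (h : ∀ s₀ : ℂ, 1 ≤ s₀.re → ∃ L, Tendsto (fun s : ℂ => (∑' i, (a i : ℂ) * (x i : ℂ) ^ (-s)) - c / (s - 1))
      (𝓝[{s : ℂ | 1 < s.re}] s₀) (𝓝 L)) (m : ℝ) (hm : 0 ≤ m) :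
    Tendsto (fun X : ℝ => X ^ (-(m + 1)) * ∑' i, if x i ≤ X then a i * x i ^ m else 0) atTop
      (𝓝 (c / (m + 1))) := by
  have hx0 : ∀ i, 0 < x i := fun i => lt_of_lt_of_le one_pos (hx i)
  set A : ℝ → ℝ := fun u => ∑' i, if x i ≤ Real.exp u then a i * x i ^ m else 0 with hA
  set B : ℝ → ℝ := fun u => Real.exp (-(m + 1) * u) * A u with hB
  have hterm0 : ∀ u i, 0 ≤ (if x i ≤ Real.exp u then a i * x i ^ m else 0) := by
    intro u i; split_ifs
    · exact mul_nonneg (ha i) (Real.rpow_nonneg (hx0 i).le _)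
    · rfl
  have hterm : ∀ σ : ℝ, 1 < σ → ∀ u i, (if x i ≤ Real.exp u then a i * x i ^ m else 0) ≤
      a i * x i ^ (-σ) * Real.exp ((m + σ) * u) := by
    intro σ hσ u i; split_ifs with hi
    · rw [mul_assoc]
      refine mul_le_mul_of_nonneg_left ?_ (ha i)
      rw [mul_comm (m + σ) u, Real.exp_mul]
      calc x i ^ m = x i ^ (-σ) * x i ^ (m + σ) := by rw [← Real.rpow_add (hx0 i)]; congr 1; ring
        _ ≤ _ := by
          refine mul_le_mul_of_nonneg_left ?_ (Real.rpow_nonneg (hx0 i).le _)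
          exact Real.rpow_le_rpow (hx0 i).le hi (by linarith)
    · exact mul_nonneg (mul_nonneg (ha i) (Real.rpow_nonneg (hx0 i).le _)) (Real.exp_pos _).le
  have hsumm : ∀ u, Summable fun i => (if x i ≤ Real.exp u then a i * x i ^ m else 0) := fun u =>
    Summable.of_nonneg_of_le (hterm0 u) (hterm 2 (by norm_num) u) ((hs 2 (by norm_num)).mul_right _)
  have hAmono : Monotone A := by
    intro u v huv
    refine Summable.tsum_le_tsum (fun i => ?_) (hsumm u) (hsumm v)
    by_cases h1 : x i ≤ Real.exp u
    · rw [if_pos h1, if_pos (h1.trans (Real.exp_le_exp.mpr huv))]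
    · rw [if_neg h1]; exact hterm0 v i
  have hA0 : ∀ u, 0 ≤ A u := fun u => tsum_nonneg (hterm0 u)
  have hB0 : ∀ u, 0 ≤ B u := fun u => mul_nonneg (Real.exp_pos _).le (hA0 u)
  have hBm : Measurable B := Measurable.mul (by fun_prop) hAmono.measurable
  have hBneg : ∀ u, u < 0 → B u = 0 := by
    intro u hu
    have : A u = 0 := by
      simp only [hA]
      convert tsum_zero with i
      rw [if_neg]
      push Not
      exact lt_of_lt_of_le (Real.exp_lt_one_iff.mpr hu) (hx i)
    simp [hB, this]
  have hmono : ∀ u v, u ≤ v → B u ≤ Real.exp ((m + 1) * (v - u)) * B v := by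
    intro u v huv
    simp only [hB]
    rw [← mul_assoc, ← Real.exp_add, show (m + 1) * (v - u) + -(m + 1) * v = -(m + 1) * u by ring]
    exact mul_le_mul_of_nonneg_left (hAmono huv) (Real.exp_pos _).le
  have hInt : ∀ ε : ℝ, 0 < ε → Integrable (fun y => B y * Real.exp (-ε * y)) := by
    intro ε hε
    have hi : Integrable ((Ici (0:ℝ)).indicator fun y : ℝ => (∑' i, a i * x i ^ (-(1 + ε / 2))) * Real.exp (-(ε / 2) * y)) := by
      rw [integrable_indicator_iff measurableSet_Ici, integrableOn_Ici_iff_integrableOn_Ioi]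
      exact (integrableOn_exp_mul_Ioi (by linarith) 0).const_mul _
    refine hi.mono' (hBm.mul (by fun_prop)).aestronglyMeasurable (ae_of_all _ fun y => ?_)
    rw [Real.norm_of_nonneg (mul_nonneg (hB0 y) (Real.exp_pos _).le)]
    rcases lt_or_ge y 0 with hy | hy
    · rw [hBneg y hy, zero_mul, indicator_of_notMem (by simpa using hy)]
    · rw [indicator_of_mem (by simpa using hy)]
      have hσ : 1 < 1 + ε / 2 := by linarith
      have h1 : A y ≤ (∑' i, a i * x i ^ (-(1 + ε / 2))) * Real.exp ((m + (1 + ε / 2)) * y) := by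
        rw [← tsum_mul_right]
        exact Summable.tsum_le_tsum (hterm _ hσ y) (hsumm y) ((hs _ hσ).mul_right _)
      simp only [hB]
      calc Real.exp (-(m + 1) * y) * A y * Real.exp (-ε * y) ≤
          Real.exp (-(m + 1) * y) * ((∑' i, a i * x i ^ (-(1 + ε / 2))) * Real.exp ((m + (1 + ε / 2)) * y)) * Real.exp (-ε * y) := by
            gcongr
        _ = (∑' i, a i * x i ^ (-(1 + ε / 2))) * (Real.exp (-(m + 1) * y) * Real.exp ((m + (1 + ε / 2)) * y) * Real.exp (-ε * y)) := by ring
        _ ≤ _ := by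
          rw [← Real.exp_add, ← Real.exp_add]
          apply le_of_eq; congr 2; ring
  set F : ℂ → ℂ := fun s => ∑' i, (a i : ℂ) * (x i : ℂ) ^ (-s) with hF
  have hLap : ∀ s : ℂ, 0 < s.re → ∫ y, (B y : ℂ) * cexp (-s * y) = F (1 + s) / (m + 1 + s) := by
    intro s hsre
    have hre : 0 < ((m:ℂ) + 1 + s).re := by simp; linarith
    have hne : (m:ℂ) + 1 + s ≠ 0 := fun h0 => by rw [h0] at hre; simp at hre
    set φ : ι → ℝ → ℂ := fun i => (Ici (Real.log (x i))).indicator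
      fun y : ℝ => ((a i * x i ^ m : ℝ) : ℂ) * cexp (-(m + 1 + s) * y) with hφ
    have hφint : ∀ i, Integrable (φ i) := by
      intro i
      rw [hφ, integrable_indicator_iff measurableSet_Ici, integrableOn_Ici_iff_integrableOn_Ioi]
      exact (integrableOn_exp_mul_complex_Ioi (by rw [neg_re]; linarith) _).const_mul _
    have hcpow : ∀ i, ((x i ^ m : ℝ) : ℂ) * cexp (-(m + 1 + s) * (Real.log (x i))) = (x i : ℂ) ^ (-(1 + s)) := by
      intro i
      have hxc : (x i : ℂ) ≠ 0 := by exact_mod_cast (hx0 i).ne'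
      rw [Complex.ofReal_cpow (hx0 i).le, Complex.ofReal_log (hx0 i).le, Complex.cpow_def_of_ne_zero hxc,
        Complex.cpow_def_of_ne_zero hxc, ← Complex.exp_add]
      congr 1; ring
    have hφval : ∀ i, ∫ y, φ i y = (a i : ℂ) * (x i : ℂ) ^ (-(1 + s)) / (m + 1 + s) := by
      intro i
      rw [hφ, integral_indicator measurableSet_Ici, integral_Ici_eq_integral_Ioi, integral_const_mul,
        integral_exp_mul_complex_Ioi (by rw [neg_re]; linarith), neg_div_neg_eq, ← hcpow]
      push_cast
      ring
    have hφnorm : ∀ i, ∫ y, ‖φ i y‖ = a i * x i ^ (-(1 + s.re)) / (m + 1 + s.re) := by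
      intro i
      have : ∀ y, ‖φ i y‖ = (Ici (Real.log (x i))).indicator
        (fun y : ℝ => (a i * x i ^ m) * Real.exp (-(m + 1 + s.re) * y)) y := by
        intro y
        simp only [hφ]
        rw [norm_indicator_eq_indicator_norm]
        congr 1; ext y
        rw [norm_mul, Complex.norm_real, Complex.norm_exp, Real.norm_of_nonneg (mul_nonneg (ha i) (Real.rpow_nonneg (hx0 i).le _))]
        simp
      simp_rw [this]
      rw [integral_indicator measurableSet_Ici, integral_Ici_eq_integral_Ioi, integral_const_mul,
        integral_exp_mul_Ioi (by linarith), neg_div_neg_eq]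
      rw [mul_comm (-(m + 1 + s.re)), Real.exp_mul, Real.exp_log (hx0 i), mul_assoc, mul_div_assoc', ← Real.rpow_add (hx0 i)]
      rw [show m + -(m + 1 + s.re) = -(1 + s.re) by ring]
      ring
    have hsumint : Summable fun i => ∫ y, ‖φ i y‖ := by
      simp_rw [hφnorm]
      exact (hs _ (by linarith)).div_const _
    have := hasSum_integral_of_summable_integral_norm hφint hsumint
    have e2 : ∀ y, ∑' i, φ i y = (B y : ℂ) * cexp (-s * y) := by
      intro y
      simp only [hB, hA]
      push_cast
      rw [mul_assoc, mul_comm, mul_assoc, ← tsum_mul_right]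
      congr 1; ext i
      simp only [hφ]
      by_cases hi : x i ≤ Real.exp y
      · have : y ∈ Ici (Real.log (x i)) := (Real.log_le_iff_le_exp (hx0 i)).mpr hi
        rw [if_pos hi, indicator_of_mem this, ← Complex.exp_add]
        push_cast
        congr 2; ring
      · have : y ∉ Ici (Real.log (x i)) := fun hh => hi ((Real.log_le_iff_le_exp (hx0 i)).mp hh)
        rw [if_neg hi, indicator_of_notMem this]; simp
    simp_rw [e2, hφval] at this
    rw [← this.tsum_eq, tsum_div_const]
  set G : ℂ → ℂ := fun s => F s - c / (s - 1) with hG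
  set S : Set ℂ := {s : ℂ | 1 < s.re} with hS
  have hSo : IsOpen S := isOpen_lt continuous_const Complex.continuous_re
  have hcl : {s : ℂ | 1 ≤ s.re} ⊆ closure S := by
    intro s hsr
    rw [hS, Complex.closure_setOfPred_lt_re]
    exact hsr
  have hext := continuousOn_extendFrom (f := G) hcl (fun s hs => h s hs)
  have hextv : ∀ s ∈ S, extendFrom S G s = G s := by
    intro s hsS
    apply extendFrom_eq (subset_closure hsS)
    obtain ⟨L, hL⟩ := h s (le_of_lt hsS)
    have hL' := hL
    rw [hSo.nhdsWithin_eq hsS] at hL'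
    have h1 := hL'.mono_left (pure_le_nhds s)
    have h2 := tendsto_pure_nhds G s
    rw [← tendsto_nhds_unique h1 h2]
    exact hL
  have hm1 : (0:ℝ) < m + 1 := by linarith
  have hfin : Tendsto B atTop (𝓝 (c / (m + 1))) := by
    refine wi_core B hBm hB0 hBneg (m + 1) hm1.le hmono hInt (c / (m + 1)) (by positivity)
      (fun s => extendFrom S G (1 + s) / (m + 1 + s) - c / ((m + 1) * (m + 1 + s))) ?_ ?_
    · have hne : ∀ s : ℂ, s ∈ {s : ℂ | 0 ≤ s.re} → (m:ℂ) + 1 + s ≠ 0 := by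
        intro s hs h0
        have : ((m:ℂ) + 1 + s).re = 0 := by rw [h0]; simp
        simp at this hs; linarith
      have hm1c : (m:ℂ) + 1 ≠ 0 := by exact_mod_cast hm1.ne'
      refine ContinuousOn.sub (ContinuousOn.div ?_ (by fun_prop) hne)
        (ContinuousOn.div (by fun_prop) (by fun_prop) fun s hs => mul_ne_zero hm1c (hne s hs))
      refine hext.comp (by fun_prop) ?_
      intro s hs
      simpa using hs
    · intro s hs
      have hmem : 1 + s ∈ S := by simp [hS, hs]
      rw [hLap s hs, hextv _ hmem]
      have hs0 : s ≠ 0 := fun h0 => by rw [h0] at hs; simp at hs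
      have hm1c : (m:ℂ) + 1 ≠ 0 := by exact_mod_cast hm1.ne'
      have hne : (m:ℂ) + 1 + s ≠ 0 := by
        intro h0
        have : ((m:ℂ) + 1 + s).re = 0 := by rw [h0]; simp
        simp at this; linarith
      simp only [hG]
      rw [add_sub_cancel_left]
      push_cast
      field_simp
      ring
  refine (hfin.comp Real.tendsto_log_atTop).congr' ?_
  filter_upwards [eventually_gt_atTop 0] with X hX
  simp only [Function.comp, hB, hA]
  rw [Real.exp_log hX, mul_comm (-(m + 1)), Real.exp_mul, Real.exp_log hX]
end

noncomputable section
open Filter Topology MeasureTheory Set Complex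

/-- norm as real number -/
def NN (z : GaussianInt) : ℝ := Complex.normSq (GaussianInt.toComplex z)

lemma NN_eq (z : GaussianInt) : NN z = (z.norm : ℝ) := (GaussianInt.intCast_real_norm z).symm
lemma NN_sq (z : GaussianInt) : NN z = ‖GaussianInt.toComplex z‖ ^ 2 := Complex.normSq_eq_norm_sq _
lemma NN_mul (z w : GaussianInt) : NN (z * w) = NN z * NN w := by simp [NN]
lemma NN_zero : NN 0 = 0 := by simp [NN]
lemma NN_one : NN 1 = 1 := by simp [NN]
lemma NN_pow (z : GaussianInt) (n : ℕ) : NN (z ^ n) = NN z ^ n := by simp [NN]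
lemma NN_nonneg (z : GaussianInt) : 0 ≤ NN z := Complex.normSq_nonneg _
lemma NN_ge_one {z : GaussianInt} (hz : z ≠ 0) : 1 ≤ NN z := by
  rw [NN_eq]; exact_mod_cast GaussianInt.norm_pos.mpr hz
lemma NN_pos {z : GaussianInt} (hz : z ≠ 0) : 0 < NN z := lt_of_lt_of_le one_pos (NN_ge_one hz)
lemma NN_eq_one {z : GaussianInt} : NN z = 1 ↔ IsUnit z := by
  rw [NN_eq, ← Zsqrtd.norm_eq_one_iff' (by norm_num)]
  exact_mod_cast Iff.rfl
lemma NN_ge_two {z : GaussianInt} (hz : z ≠ 0) (hu : ¬ IsUnit z) : 2 ≤ NN z := by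
  have h1 := NN_ge_one hz
  have h2 : NN z ≠ 1 := fun h => hu (NN_eq_one.mp h)
  rw [NN_eq] at *
  have h3 : z.norm ≠ 1 := by exact_mod_cast h2
  have h4 : 1 ≤ z.norm := by exact_mod_cast h1
  exact_mod_cast (by omega : 2 ≤ z.norm)

abbrev GP := {p : GaussianInt // Prime p}
lemma GP_two (p : GP) : 2 ≤ NN p.1 := NN_ge_two p.2.ne_zero p.2.not_isUnit

def pairEquiv : (Fin 2 → ℤ) ≃ GaussianInt where
  toFun v := ⟨v 0, v 1⟩
  invFun z := ![z.re, z.im]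
  left_inv v := by ext i; fin_cases i <;> simp
  right_inv z := by simp

instance : Countable GaussianInt := pairEquiv.symm.injective.countable

lemma summable_NN {σ : ℝ} (hσ : 1 < σ) : Summable fun z : GaussianInt => NN z ^ (-σ) := by
  have h := EisensteinSeries.summable_one_div_norm_rpow (k := 2 * σ) (by linarith)
  rw [← pairEquiv.summable_iff]
  refine Summable.of_nonneg_of_le (fun v => Real.rpow_nonneg (NN_nonneg _) _) (fun v => ?_) h
  by_cases hv : v = 0
  · subst hv
    have : pairEquiv 0 = 0 := rfl
    simp only [Function.comp, this, NN_zero, norm_zero]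
    rw [Real.zero_rpow (by linarith), Real.zero_rpow (by linarith)]
  · have hpos : 0 < ‖v‖ := norm_pos_iff.mpr hv
    have : ‖v‖ ^ (-(2 * σ)) = (‖v‖ ^ 2) ^ (-σ) := by
      rw [← Real.rpow_natCast, ← Real.rpow_mul hpos.le]; congr 1; push_cast; ring
    rw [this]
    apply Real.rpow_le_rpow_of_nonpos (by positivity) _ (by linarith)
    have h1 : ‖v‖ ≤ √(NN (pairEquiv v)) := by
      rw [pi_norm_le_iff_of_nonneg (Real.sqrt_nonneg _)]
      intro i
      apply Real.le_sqrt_of_sq_le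
      have : NN (pairEquiv v) = (v 0 : ℝ) ^ 2 + (v 1 : ℝ) ^ 2 := by
        simp [NN, pairEquiv, Complex.normSq_apply]; ring
      rw [this, Int.norm_eq_abs, sq_abs]
      fin_cases i <;> simp <;> positivity
    calc ‖v‖ ^ 2 ≤ √(NN (pairEquiv v)) ^ 2 := by gcongr
      _ = _ := Real.sq_sqrt (NN_nonneg _)

lemma log_le_rpow' {x : ℝ} (hx : 1 ≤ x) {ε : ℝ} (hε : 0 < ε) : Real.log x ≤ x ^ ε / ε :=
  Real.log_le_rpow_div (by linarith) hε

lemma summable_log_mul {ι : Type*} (a : ι → ℝ) (x : ι → ℝ) (ha : ∀ i, 0 ≤ a i)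
    (hx : ∀ i, a i = 0 ∨ 1 ≤ x i)
    (hs : ∀ σ : ℝ, 1 < σ → Summable fun i => a i * x i ^ (-σ)) (σ : ℝ) (hσ : 1 < σ) :
    Summable fun i => a i * Real.log (x i) * x i ^ (-σ) := by
  have h := (hs ((1 + σ) / 2) (by linarith)).mul_left (2 / (σ - 1))
  have hσ' : σ - 1 ≠ 0 := by linarith
  refine Summable.of_nonneg_of_le (fun i => ?_) (fun i => ?_) h
  · rcases hx i with h0 | h1
    · simp [h0]
    · have := Real.log_nonneg h1
      have := ha i
      have : 0 ≤ x i := by linarith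
      positivity
  · rcases hx i with h0 | h1
    · simp [h0]
    · have h2 := log_le_rpow' h1 (show 0 < (σ - 1) / 2 by linarith)
      have hx0 : 0 < x i := by linarith
      calc a i * Real.log (x i) * x i ^ (-σ) ≤ a i * (x i ^ ((σ - 1) / 2) / ((σ - 1) / 2)) * x i ^ (-σ) := by
            have := ha i
            gcongr
        _ = 2 / (σ - 1) * (a i * (x i ^ ((σ - 1) / 2) * x i ^ (-σ))) := by field_simp
        _ = _ := by
            rw [← Real.rpow_add hx0]; congr 3; ring

/-- generic Dirichlet series -/
def DS {ι : Type*} (a : ι → ℂ) (x : ι → ℝ) (s : ℂ) : ℂ := ∑' i, a i * (x i : ℂ) ^ (-s)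

lemma norm_DSterm {a : ℂ} {x : ℝ} (hx : 0 < x) (s : ℂ) :
    ‖a * (x : ℂ) ^ (-s)‖ = ‖a‖ * x ^ (-s.re) := by
  rw [norm_mul, Complex.norm_cpow_eq_rpow_re_of_pos hx]; simp

lemma DS_hasDerivAt {ι : Type*} (a : ι → ℂ) (x : ι → ℝ) (hx : ∀ i, a i = 0 ∨ 1 ≤ x i)
    (hs : ∀ σ : ℝ, 1 < σ → Summable fun i => ‖a i‖ * x i ^ (-σ)) (s : ℂ) (h1 : 1 < s.re) :
    HasDerivAt (DS a x) (-∑' i, a i * Real.log (x i) * (x i : ℂ) ^ (-s)) s := by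
  set σ : ℝ := (1 + s.re) / 2
  have hσ : 1 < σ := by simp only [σ]; linarith
  have hlog := summable_log_mul (fun i => ‖a i‖) x (fun i => norm_nonneg _)
    (fun i => by simpa using hx i) hs σ hσ
  have key := hasDerivAt_tsum_of_isPreconnected (𝕜 := ℂ) (u := fun i => ‖a i‖ * Real.log (x i) * x i ^ (-σ))
    (g := fun i s => a i * (x i : ℂ) ^ (-s)) (g' := fun i s => -(a i * Real.log (x i) * (x i : ℂ) ^ (-s)))
    (t := {s : ℂ | σ < s.re}) (y₀ := s) (y := s) hlog (isOpen_lt continuous_const continuous_re)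
    ((convex_halfSpace_re_gt σ).isPreconnected) ?_ ?_ ?_ ?_ ?_
  · rw [tsum_neg] at key; exact key
  · intro i y hy
    rcases hx i with h0 | h1
    · simp only [h0, zero_mul, neg_zero]; exact hasDerivAt_const _ _
    · have hx0 : (x i : ℂ) ≠ 0 := by exact_mod_cast (by linarith : x i ≠ 0)
      have := ((hasDerivAt_neg y).const_cpow (c := (x i : ℂ)) (Or.inl hx0)).const_mul (a i)
      refine this.congr_deriv ?_
      rw [Complex.ofReal_log (by linarith)]; ring
  · intro i y hy
    rcases hx i with h0 | h1
    · simp [h0]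
    · rw [norm_neg, norm_DSterm (by linarith), norm_mul, Complex.norm_real, Real.norm_eq_abs,
        abs_of_nonneg (Real.log_nonneg h1)]
      have := Real.log_nonneg h1
      have hy' : σ < y.re := hy
      exact mul_le_mul_of_nonneg_left (Real.rpow_le_rpow_of_exponent_le h1 (by linarith)) (by positivity)
  · show σ < s.re
    simp only [σ]; linarith
  · apply Summable.of_norm
    refine (hs s.re h1).congr fun i => ?_
    rcases hx i with h0 | h1
    · simp [h0]
    · rw [norm_DSterm (by linarith)]
  · show σ < s.re
    simp only [σ]; linarith

lemma DS_summable {ι : Type*} (a : ι → ℂ) (x : ι → ℝ) (hx : ∀ i, a i = 0 ∨ 1 ≤ x i)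
    (hs : ∀ σ : ℝ, 1 < σ → Summable fun i => ‖a i‖ * x i ^ (-σ)) (s : ℂ) (h1 : 1 < s.re) :
    Summable fun i => a i * (x i : ℂ) ^ (-s) := by
  apply Summable.of_norm
  refine (hs s.re h1).congr fun i => ?_
  rcases hx i with h0 | h1
  · simp [h0]
  · rw [norm_DSterm (by linarith)]
end

noncomputable section
open Filter Topology MeasureTheory Set Complex
open scoped Classical

def gI : GaussianInt := ⟨0, 1⟩
lemma gI_mul : gI * gI = -1 := by ext <;> simp [gI]
lemma NN_gI : NN gI = 1 := by rw [NN_eq]; simp [gI, Zsqrtd.norm_def]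
lemma gI_unit : IsUnit gI := NN_eq_one.mp NN_gI

lemma unit_cases {u : GaussianInt} (hu : IsUnit u) : ∃ j : Fin 4, u = gI ^ (j : ℕ) := by
  have h : u.norm = 1 := (Zsqrtd.norm_eq_one_iff' (by norm_num) u).mpr hu
  rw [Zsqrtd.norm_def] at h
  obtain ⟨a, b⟩ := u
  simp only at h
  replace h : a ^ 2 + b ^ 2 = 1 := by linarith
  have hg2 : gI ^ 2 = -1 := by rw [pow_two, gI_mul]
  have hg3 : gI ^ 3 = -gI := by rw [pow_succ, hg2]; ring
  have ha : -1 ≤ a ∧ a ≤ 1 := by constructor <;> nlinarith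
  have hb : -1 ≤ b ∧ b ≤ 1 := by constructor <;> nlinarith
  obtain ⟨ha1, ha2⟩ := ha
  obtain ⟨hb1, hb2⟩ := hb
  interval_cases a <;> interval_cases b <;> simp at h
  · exact ⟨2, by rw [show ((2 : Fin 4) : ℕ) = 2 from rfl, hg2]; ext <;> simp⟩
  · exact ⟨3, by rw [show ((3 : Fin 4) : ℕ) = 3 from rfl, hg3]; ext <;> simp [gI]⟩
  · exact ⟨1, by simp [gI]⟩
  · exact ⟨0, by ext <;> simp⟩

lemma gI_pow_inj : Function.Injective (fun j : Fin 4 => gI ^ (j : ℕ)) := by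
  have hg2 : gI ^ 2 = -1 := by rw [pow_two, gI_mul]
  have hg3 : gI ^ 3 = -gI := by rw [pow_succ, hg2]; ring
  intro a b h
  fin_cases a <;> fin_cases b <;> simp [hg2, hg3] at h ⊢ <;> simp [gI, Zsqrtd.ext_iff] at h

lemma assoc_NN {p q : GaussianInt} (h : Associated p q) : NN p = NN q := by
  obtain ⟨u, rfl⟩ := h
  rw [NN_mul, NN_eq_one.mpr u.isUnit, mul_one]

lemma hasSum_assoc (q : GaussianInt) (hq : Prime q) :
    HasSum (fun p : GP => (multiplicity p.1 q : ℝ) * Real.log (NN p.1)) (4 * Real.log (NN q)) := by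
  classical
  let E : Fin 4 → GP := fun j => ⟨gI ^ (j : ℕ) * q,
    (prime_isUnit_mul (gI_unit.pow _)).mpr hq⟩
  have hE : Function.Injective E := by
    intro a b h
    have : gI ^ (a : ℕ) * q = gI ^ (b : ℕ) * q := congrArg Subtype.val h
    exact gI_pow_inj (mul_right_cancel₀ hq.ne_zero this)
  have hval : ∀ j, (multiplicity (E j).1 q : ℝ) * Real.log (NN (E j).1) = Real.log (NN q) := by
    intro j
    have has : Associated (E j).1 q := by
      have := associated_unit_mul_left q _ (gI_unit.pow (j : ℕ))
      exact this
    have : multiplicity (E j).1 q = 1 := by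
      rw [multiplicity_eq_of_associated_left has.symm]
      exact multiplicity_self
    rw [this, assoc_NN has]; simp
  rw [← hE.hasSum_iff]
  · have := hasSum_fintype ((fun p : GP => (multiplicity p.1 q : ℝ) * Real.log (NN p.1)) ∘ E)
    convert this using 1
    simp only [Function.comp, hval]
    simp
  · intro p hp
    have : ¬ p.1 ∣ q := by
      intro hd
      have has := (p.2.associated_of_dvd hq hd).symm
      obtain ⟨u, hu⟩ := has
      obtain ⟨j, hj⟩ := unit_cases u.isUnit
      apply hp
      refine ⟨j, Subtype.ext ?_⟩
      show gI ^ (j : ℕ) * q = p.1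
      rw [← hj, ← hu]; ring
    rw [multiplicity_eq_zero.mpr this]; simp

lemma hasSum_mult (z : GaussianInt) (hz : z ≠ 0) :
    HasSum (fun p : GP => (multiplicity p.1 z : ℝ) * Real.log (NN p.1)) (4 * Real.log (NN z)) := by
  induction z using UniqueFactorizationMonoid.induction_on_prime with
  | h₁ => exact absurd rfl hz
  | h₂ x hx =>
    rw [NN_eq_one.mpr hx]
    simp only [Real.log_one, mul_zero]
    convert hasSum_zero with p
    have : ¬ p.1 ∣ x := fun h => p.2.not_isUnit (isUnit_of_dvd_unit h hx)
    rw [multiplicity_eq_zero.mpr this]; simp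
  | h₃ a q ha hq ih =>
    have h1 := (hasSum_assoc q hq).add (ih ha)
    rw [NN_mul, Real.log_mul (NN_pos hq.ne_zero).ne' (NN_pos ha).ne', mul_add]
    convert h1 using 2 with p
    rw [multiplicity_mul p.2 (FiniteMultiplicity.of_not_isUnit p.2.not_isUnit hz)]
    push_cast; ring

lemma hasSum_dvd (z : GaussianInt) (hz : z ≠ 0) (p : GP) :
    HasSum (fun m : ℕ => if p.1 ^ (m + 1) ∣ z then (1 : ℝ) else 0) (multiplicity p.1 z) := by
  have hf : FiniteMultiplicity p.1 z := FiniteMultiplicity.of_not_isUnit p.2.not_isUnit hz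
  have h := hasSum_sum_of_ne_finset_zero (L := SummationFilter.unconditional ℕ) (f := fun m : ℕ => if p.1 ^ (m + 1) ∣ z then (1 : ℝ) else 0)
    (s := Finset.range (multiplicity p.1 z)) (fun m hm => by
      rw [if_neg]
      rw [hf.pow_dvd_iff_le_multiplicity]
      simpa using hm)
  convert h using 1
  rw [Finset.sum_congr rfl (g := fun _ => (1 : ℝ))]
  · simp
  · intro m hm
    rw [if_pos]
    rw [hf.pow_dvd_iff_le_multiplicity]
    simpa using hm

lemma hasSum_GPN (z : GaussianInt) (hz : z ≠ 0) :
    HasSum (fun q : GP × ℕ => if q.1.1 ^ (q.2 + 1) ∣ z then Real.log (NN q.1.1) else 0)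
      (4 * Real.log (NN z)) := by
  have hnn : ∀ q : GP × ℕ, 0 ≤ (if q.1.1 ^ (q.2 + 1) ∣ z then Real.log (NN q.1.1) else 0) := by
    intro q
    have := Real.log_nonneg (by linarith [GP_two q.1] : 1 ≤ NN q.1.1)
    split_ifs <;> simp [this]
  have h1 : ∀ p : GP, HasSum (fun m : ℕ => if p.1 ^ (m + 1) ∣ z then Real.log (NN p.1) else 0)
      ((multiplicity p.1 z : ℝ) * Real.log (NN p.1)) := by
    intro p
    refine ((hasSum_dvd z hz p).mul_right (Real.log (NN p.1))).congr_fun fun m => ?_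
    split_ifs <;> simp
  have hs : Summable (fun q : GP × ℕ => if q.1.1 ^ (q.2 + 1) ∣ z then Real.log (NN q.1.1) else 0) := by
    rw [summable_prod_of_nonneg hnn]
    refine ⟨fun p => (h1 p).summable, ?_⟩
    refine (hasSum_mult z hz).summable.congr fun p => ((h1 p).tsum_eq).symm
  have h2 := hs.hasSum
  have h3 := h2.prod_fiberwise h1
  rw [← (hasSum_mult z hz).unique h3] at h2
  exact h2
end

noncomputable section
open Filter Topology MeasureTheory Set Complex
open scoped Classical

def LL (f : GaussianInt →*₀ ℂ) (s : ℂ) : ℂ := DS f NN s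
def TT (f : GaussianInt →*₀ ℂ) (s : ℂ) : ℂ :=
  ∑' q : GP × ℕ, (Real.log (NN q.1.1) : ℂ) * (f q.1.1 * (NN q.1.1 : ℂ) ^ (-s)) ^ (q.2 + 1)

lemma LL_hx (f : GaussianInt →*₀ ℂ) (z : GaussianInt) : f z = 0 ∨ 1 ≤ NN z := by
  by_cases hz : z = 0
  · left; simp [hz]
  · right; exact NN_ge_one hz

lemma LL_hs (f : GaussianInt →*₀ ℂ) (hf : ∀ z, ‖f z‖ ≤ 1) (σ : ℝ) (hσ : 1 < σ) :
    Summable fun z => ‖f z‖ * NN z ^ (-σ) := by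
  refine Summable.of_nonneg_of_le (fun z => ?_) (fun z => ?_) (summable_NN hσ)
  · have := Real.rpow_nonneg (NN_nonneg z) (-σ); positivity
  · exact mul_le_of_le_one_left (Real.rpow_nonneg (NN_nonneg z) (-σ)) (hf z)

lemma LL_log_summable (f : GaussianInt →*₀ ℂ) (hf : ∀ z, ‖f z‖ ≤ 1) (s : ℂ) (hs : 1 < s.re) :
    Summable fun z => ‖f z * Real.log (NN z) * (NN z : ℂ) ^ (-s)‖ := by
  refine (summable_log_mul (fun z => ‖f z‖) NN (fun z => norm_nonneg _)
    (fun z => by simpa using LL_hx f z) (LL_hs f hf) s.re hs).congr fun z => ?_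
  rcases LL_hx f z with h | h
  · simp [h]
  · rw [norm_DSterm (by linarith), norm_mul, Complex.norm_real, Real.norm_eq_abs,
      abs_of_nonneg (Real.log_nonneg h)]

lemma LL_hasDerivAt (f : GaussianInt →*₀ ℂ) (hf : ∀ z, ‖f z‖ ≤ 1) (s : ℂ) (hs : 1 < s.re) :
    HasDerivAt (LL f) (-∑' z, f z * Real.log (NN z) * (NN z : ℂ) ^ (-s)) s :=
  DS_hasDerivAt f NN (LL_hx f) (LL_hs f hf) s hs

lemma cpow_NN_mul (z w : GaussianInt) (s : ℂ) :
    (NN (z * w) : ℂ) ^ (-s) = (NN z : ℂ) ^ (-s) * (NN w : ℂ) ^ (-s) := by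
  rw [NN_mul, Complex.ofReal_mul, Complex.mul_cpow_ofReal_nonneg (NN_nonneg _) (NN_nonneg _)]

lemma cpow_NN_pow (z : GaussianInt) (s : ℂ) (n : ℕ) :
    (NN (z ^ n) : ℂ) ^ (-s) = ((NN z : ℂ) ^ (-s)) ^ n := by
  induction n with
  | zero => simp [NN_one]
  | succ n ih => rw [pow_succ, cpow_NN_mul, ih, pow_succ]

lemma logderiv_identity (f : GaussianInt →*₀ ℂ) (hf : ∀ z, ‖f z‖ ≤ 1) (s : ℂ) (hs : 1 < s.re) :
    4 * ∑' z, f z * Real.log (NN z) * (NN z : ℂ) ^ (-s) = LL f s * TT f s := by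
  set g : GaussianInt → ℂ := fun z => f z * (NN z : ℂ) ^ (-s) with hg
  have hgmul : ∀ z w, g (z * w) = g z * g w := by
    intro z w; simp only [hg, map_mul, cpow_NN_mul]; ring
  have hgpow : ∀ z n, g (z ^ n) = g z ^ n := by
    intro z n; simp only [hg, map_pow, cpow_NN_pow]; ring
  have hg0 : g 0 = 0 := by simp [hg]
  set F : GaussianInt → GP × ℕ → ℂ := fun z q =>
    ((if q.1.1 ^ (q.2 + 1) ∣ z then Real.log (NN q.1.1) else 0 : ℝ) : ℂ) * g z with hF
  have hFz : ∀ z, HasSum (F z) (4 * (f z * Real.log (NN z) * (NN z : ℂ) ^ (-s))) := by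
    intro z
    by_cases hz : z = 0
    · subst hz
      simp only [hF, hg0, mul_zero, map_zero, zero_mul]
      exact hasSum_zero
    · have := (Complex.hasSum_ofReal.mpr (hasSum_GPN z hz)).mul_right (g z)
      have h2 : 4 * (f z * Real.log (NN z) * (NN z : ℂ) ^ (-s)) = ((4 * Real.log (NN z) : ℝ) : ℂ) * g z := by
        simp only [hg]; push_cast; ring
      rw [h2]
      exact this
  have hFn : ∀ z, HasSum (fun q => ‖F z q‖) (4 * ‖f z * Real.log (NN z) * (NN z : ℂ) ^ (-s)‖) := by
    intro z
    by_cases hz : z = 0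
    · subst hz
      simp only [hF, hg0, mul_zero, map_zero, zero_mul, norm_zero]
      exact hasSum_zero
    · have := (hasSum_GPN z hz).mul_right ‖g z‖
      have h2 : 4 * ‖f z * Real.log (NN z) * (NN z : ℂ) ^ (-s)‖ = 4 * Real.log (NN z) * ‖g z‖ := by
        simp only [hg, norm_mul, Complex.norm_real, Real.norm_eq_abs,
          abs_of_nonneg (Real.log_nonneg (NN_ge_one hz))]; ring
      rw [h2]
      refine this.congr_fun fun q => ?_
      have := Real.log_nonneg (by linarith [GP_two q.1] : 1 ≤ NN q.1.1)
      simp only [hF, norm_mul, Complex.norm_real, Real.norm_eq_abs]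
      congr 1
      rw [abs_of_nonneg]
      split_ifs <;> simp [this]
  have hsum : Summable (Function.uncurry F) := by
    apply Summable.of_norm
    rw [summable_prod_of_nonneg (fun _ => norm_nonneg _)]
    refine ⟨fun z => (hFn z).summable, ?_⟩
    refine ((LL_log_summable f hf s hs).mul_left 4).congr fun z => ?_
    exact (hFn z).tsum_eq.symm
  have h1 : ∑' z, ∑' q, F z q = 4 * ∑' z, f z * Real.log (NN z) * (NN z : ℂ) ^ (-s) := by
    rw [← tsum_mul_left]
    exact tsum_congr fun z => (hFz z).tsum_eq
  have h2 : ∀ q, ∑' z, F z q = LL f s * ((Real.log (NN q.1.1) : ℂ) * (f q.1.1 * (NN q.1.1 : ℂ) ^ (-s)) ^ (q.2 + 1)) := by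
    intro q
    have hne : q.1.1 ^ (q.2 + 1) ≠ 0 := pow_ne_zero _ q.1.2.ne_zero
    have hinj : Function.Injective (fun w => q.1.1 ^ (q.2 + 1) * w) := mul_right_injective₀ hne
    rw [← hinj.tsum_eq]
    · have : ∀ w, F (q.1.1 ^ (q.2 + 1) * w) q = ((Real.log (NN q.1.1) : ℂ) * (g q.1.1) ^ (q.2 + 1)) * g w := by
        intro w
        simp only [hF, dvd_mul_right, if_true, hgmul, hgpow]; ring
      simp only [this]
      rw [tsum_mul_left, mul_comm]
      rfl
    · intro z hz
      by_contra hcon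
      apply hz
      simp only [hF]
      rw [if_neg]
      · simp
      · rintro ⟨w, hw⟩; exact hcon ⟨w, hw.symm⟩
  rw [← h1, ← hsum.tsum_comm]
  simp only [h2]
  rw [tsum_mul_left]
  rfl

lemma LL_deriv_TT (f : GaussianInt →*₀ ℂ) (hf : ∀ z, ‖f z‖ ≤ 1) (s : ℂ) (hs : 1 < s.re) :
    4 * deriv (LL f) s = - (LL f s * TT f s) := by
  rw [(LL_hasDerivAt f hf s hs).deriv, ← logderiv_identity f hf s hs]; ring
end

noncomputable section
open Filter Topology MeasureTheory Set Complex
open scoped Classical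

def uu (z : GaussianInt) : ℂ := GaussianInt.toComplex z / ‖GaussianInt.toComplex z‖
lemma uu_mul (z w : GaussianInt) : uu (z * w) = uu z * uu w := by
  simp only [uu, map_mul, norm_mul, Complex.ofReal_mul]; rw [mul_div_mul_comm]
lemma uu_norm {z : GaussianInt} (hz : z ≠ 0) : ‖uu z‖ = 1 := by
  have : ‖GaussianInt.toComplex z‖ ≠ 0 := by simpa using hz
  simp [uu, this]
lemma uu_ne {z : GaussianInt} (hz : z ≠ 0) : uu z ≠ 0 := by
  intro h; have := uu_norm hz; simp [h] at this

lemma pow_sub_pow_le {a b : ℂ} (ha : ‖a‖ = 1) (hb : ‖b‖ = 1) (n : ℕ) :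
    ‖a ^ n - b ^ n‖ ≤ n * ‖a - b‖ := by
  induction n with
  | zero => simp
  | succ n ih =>
    have : a ^ (n + 1) - b ^ (n + 1) = a ^ n * (a - b) + (a ^ n - b ^ n) * b := by ring
    rw [this]
    refine (norm_add_le _ _).trans ?_
    rw [norm_mul, norm_mul, norm_pow, ha, hb]
    rw [one_pow]; push_cast; linarith

lemma zpow_sub_zpow_le {a b : ℂ} (ha : ‖a‖ = 1) (hb : ‖b‖ = 1) (k : ℤ) :
    ‖a ^ k - b ^ k‖ ≤ |(k : ℝ)| * ‖a - b‖ := by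
  obtain ⟨n, rfl | rfl⟩ := k.eq_nat_or_neg
  · simpa using pow_sub_pow_le ha hb n
  · have ha0 : a ≠ 0 := by intro h; simp [h] at ha
    have hb0 : b ≠ 0 := by intro h; simp [h] at hb
    have h := pow_sub_pow_le (a := a⁻¹) (b := b⁻¹) (by simp [ha]) (by simp [hb]) n
    have h2 : ‖a⁻¹ - b⁻¹‖ = ‖a - b‖ := by
      rw [inv_sub_inv ha0 hb0, norm_div, norm_mul, ha, hb, norm_sub_rev]; simp
    rw [h2] at h
    simpa using h

lemma cpow_sub_le {a b m : ℝ} (hm : 0 < m) (ha : m ≤ a) (hb : m ≤ b) (s : ℂ) (hs : 0 ≤ s.re) :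
    ‖(a : ℂ) ^ (-s) - (b : ℂ) ^ (-s)‖ ≤ ‖s‖ * m ^ (-s.re - 1) * |a - b| := by
  by_cases hs0 : s = 0
  · subst hs0; simp
  have := Convex.norm_image_sub_le_of_norm_hasDerivWithin_le (𝕜 := ℝ) (s := Set.Ici m)
    (f := fun x : ℝ => (x : ℂ) ^ (-s)) (f' := fun x : ℝ => -s * (x : ℂ) ^ (-s - 1))
    (C := ‖s‖ * m ^ (-s.re - 1)) (x := b) (y := a) ?_ ?_ (convex_Ici m) hb ha
  · simpa using this
  · intro x hx
    have hx0 : 0 < x := lt_of_lt_of_le hm hx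
    have h1 := (hasDerivAt_id (x : ℂ)).cpow_const (c := -s) (Or.inl (by simpa using hx0))
    simpa using h1.comp_ofReal.hasDerivWithinAt
  · intro x hx
    have hx0 : 0 < x := lt_of_lt_of_le hm hx
    rw [norm_mul, norm_neg, Complex.norm_cpow_eq_rpow_re_of_pos hx0]
    simp only [sub_re, neg_re, one_re]
    exact mul_le_mul_of_nonneg_left
      (Real.rpow_le_rpow_of_nonpos hm hx (by linarith)) (norm_nonneg _)

lemma unit_sub_le (z r : ℂ) (hz : z ≠ 0) (hzr : z + r ≠ 0) :
    ‖(z + r) / ‖z + r‖ - z / ‖z‖‖ ≤ 2 * ‖r‖ / ‖z‖ := by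
  have h1 : (‖z‖ : ℂ) ≠ 0 := by simpa using hz
  have h2 : (‖z + r‖ : ℂ) ≠ 0 := by simpa using hzr
  have h3 : 0 < ‖z‖ := norm_pos_iff.mpr hz
  have h4 : 0 < ‖z + r‖ := norm_pos_iff.mpr hzr
  have : (z + r) / ‖z + r‖ - z / ‖z‖ = ((z + r) / ‖z + r‖ * ((‖z‖ : ℂ) - ‖z + r‖) + r) / ‖z‖ := by
    field_simp; ring
  rw [this, norm_div, Complex.norm_real, norm_norm]
  apply div_le_div_of_nonneg_right _ h3.le
  refine (norm_add_le _ _).trans ?_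
  rw [norm_mul, norm_div, Complex.norm_real, norm_norm, div_self h4.ne', one_mul, ← Complex.ofReal_sub,
    Complex.norm_real, Real.norm_eq_abs]
  have := abs_norm_sub_norm_le z (z + r)
  simp at this
  linarith

def gg (k : ℤ) (s : ℂ) (z : GaussianInt) : ℂ := if z = 0 then 0 else uu z ^ k * (NN z : ℂ) ^ (-s)

lemma gg_norm_le (k : ℤ) (s : ℂ) (hs : 0 ≤ s.re) (z : GaussianInt) : ‖gg k s z‖ ≤ 1 := by
  unfold gg
  split_ifs with h
  · simp
  · rw [norm_DSterm (NN_pos h), norm_zpow, uu_norm h, one_zpow, one_mul]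
    exact Real.rpow_le_one_of_one_le_of_nonpos (NN_ge_one h) (by simpa using hs)

lemma gg_bound (k : ℤ) (M : ℝ) (r : GaussianInt) : ∃ C : ℝ, 0 ≤ C ∧ ∀ s : ℂ, 3 / 4 ≤ s.re → ‖s‖ ≤ M →
    ∀ z : GaussianInt, z ≠ 0 → ‖gg k s (z + r) - gg k s z‖ ≤ C * NN z ^ (-(5 / 4) : ℝ) := by
  set R : ℝ := ‖GaussianInt.toComplex r‖ with hR
  have hR0 : 0 ≤ R := norm_nonneg _
  set C1 : ℝ := |(k : ℝ)| * (2 * R) * 4 ^ M with hC1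
  set C2 : ℝ := |M| * 4 ^ (M + 1) * (3 * R) with hC2
  set C3 : ℝ := 2 * (4 * R ^ 2) ^ (5 / 4 : ℝ) with hC3
  have hC1' : 0 ≤ C1 := by positivity
  have hC2' : 0 ≤ C2 := by positivity
  have hC3' : 0 ≤ C3 := by positivity
  refine ⟨C1 + C2 + C3, by positivity, ?_⟩
  intro s hs1 hs2 z hz
  set w : ℂ := GaussianInt.toComplex z with hw
  set n : ℝ := NN z with hn
  have hnpos : 0 < n := NN_pos hz
  have hn1 : 1 ≤ n := NN_ge_one hz
  have hnw : n = ‖w‖ ^ 2 := NN_sq z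
  have hσM : s.re ≤ M := (Complex.re_le_norm s).trans hs2
  have hp : 0 < n ^ (-(5 / 4) : ℝ) := Real.rpow_pos_of_pos hnpos _
  by_cases hcase : ‖w‖ < 2 * R
  · have h1 : ‖gg k s (z + r) - gg k s z‖ ≤ 2 := by
      refine (norm_sub_le _ _).trans ?_
      linarith [gg_norm_le k s (by linarith) (z + r), gg_norm_le k s (by linarith) z]
    have h2 : 2 ≤ C3 * n ^ (-(5 / 4) : ℝ) := by
      have h3 : n ≤ 4 * R ^ 2 := by rw [hnw]; nlinarith [norm_nonneg w]
      rw [hC3, Real.rpow_neg hnpos.le, mul_assoc, ← div_eq_mul_inv, ← Real.div_rpow (by positivity) hnpos.le]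
      have : 1 ≤ (4 * R ^ 2 / n) ^ (5 / 4 : ℝ) := Real.one_le_rpow ((one_le_div hnpos).mpr h3) (by norm_num)
      linarith
    nlinarith
  · push Not at hcase
    have hw0 : w ≠ 0 := by simpa [hw] using hz
    have hwpos : 0 < ‖w‖ := norm_pos_iff.mpr hw0
    set w' : ℂ := GaussianInt.toComplex (z + r) with hw'
    have hww : w' = w + GaussianInt.toComplex r := by simp [hw', hw]
    have hlow : ‖w‖ / 2 ≤ ‖w'‖ := by
      have := norm_sub_norm_le w (-GaussianInt.toComplex r)
      rw [norm_neg, sub_neg_eq_add, ← hww] at this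
      linarith
    have hw'0 : w' ≠ 0 := norm_pos_iff.mp (by linarith)
    have hzr : z + r ≠ 0 := by
      intro h; apply hw'0; rw [hw', h]; simp
    have hup : ‖w'‖ ≤ ‖w‖ + R := by rw [hww]; exact norm_add_le _ _
    have hup2 : ‖w‖ ≤ ‖w'‖ + R := by
      have : w = w' - GaussianInt.toComplex r := by rw [hww]; ring
      calc ‖w‖ = ‖w' - GaussianInt.toComplex r‖ := by rw [← this]
        _ ≤ _ := norm_sub_le _ _
    have hN' : NN (z + r) = ‖w'‖ ^ 2 := NN_sq _
    have hm : n / 4 ≤ NN (z + r) := by rw [hN', hnw]; nlinarith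
    have hdiff : |NN (z + r) - n| ≤ 3 * R * ‖w‖ := by
      rw [hN', hnw, abs_le]
      constructor <;> nlinarith
    have heq : gg k s (z + r) - gg k s z = (uu (z + r) ^ k - uu z ^ k) * (NN (z + r) : ℂ) ^ (-s)
        + uu z ^ k * ((NN (z + r) : ℂ) ^ (-s) - (n : ℂ) ^ (-s)) := by
      simp only [gg, hz, hzr, if_false]; ring
    have hq4 : (n / 4) ^ (-s.re) ≤ n ^ (-s.re) * 4 ^ M := by
      rw [Real.div_rpow hnpos.le (by norm_num), Real.rpow_neg (by norm_num : (0 : ℝ) ≤ 4), div_inv_eq_mul]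
      apply mul_le_mul_of_nonneg_left _ (Real.rpow_nonneg hnpos.le _)
      exact Real.rpow_le_rpow_of_exponent_le (by norm_num) hσM
    have hq5 : (n / 4) ^ (-s.re - 1) ≤ n ^ (-s.re - 1) * 4 ^ (M + 1) := by
      rw [show -s.re - 1 = -(s.re + 1) by ring, Real.div_rpow hnpos.le (by norm_num), Real.rpow_neg (by norm_num : (0 : ℝ) ≤ 4), div_inv_eq_mul]
      apply mul_le_mul_of_nonneg_left _ (Real.rpow_nonneg hnpos.le _)
      exact Real.rpow_le_rpow_of_exponent_le (by norm_num) (by linarith)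
    have hsq : ‖w‖ = n ^ (1 / 2 : ℝ) := by
      rw [hnw, ← Real.sqrt_eq_rpow, Real.sqrt_sq hwpos.le]
    have hfin1 : n ^ (-s.re) / ‖w‖ ≤ n ^ (-(5 / 4) : ℝ) := by
      rw [hsq, ← Real.rpow_sub hnpos]
      exact Real.rpow_le_rpow_of_exponent_le hn1 (by linarith)
    have hfin2 : n ^ (-s.re - 1) * ‖w‖ ≤ n ^ (-(5 / 4) : ℝ) := by
      rw [hsq, ← Real.rpow_add hnpos]
      exact Real.rpow_le_rpow_of_exponent_le hn1 (by linarith)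
    have hA : ‖(uu (z + r) ^ k - uu z ^ k) * (NN (z + r) : ℂ) ^ (-s)‖ ≤ C1 * n ^ (-(5 / 4) : ℝ) := by
      rw [norm_DSterm (NN_pos hzr)]
      have h1 := zpow_sub_zpow_le (uu_norm hzr) (uu_norm hz) k
      have h2 : ‖uu (z + r) - uu z‖ ≤ 2 * R / ‖w‖ := by
        have := unit_sub_le w (GaussianInt.toComplex r) hw0 (by rw [← hww]; exact hw'0)
        rw [← hww] at this
        exact this
      have h3 : NN (z + r) ^ (-s.re) ≤ n ^ (-s.re) * 4 ^ M :=
        (Real.rpow_le_rpow_of_nonpos (by positivity) hm (by linarith)).trans hq4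
      calc _ ≤ |(k : ℝ)| * (2 * R / ‖w‖) * (n ^ (-s.re) * 4 ^ M) := by
            apply mul_le_mul _ h3 (Real.rpow_nonneg (NN_nonneg _) _) (by positivity)
            exact h1.trans (mul_le_mul_of_nonneg_left h2 (abs_nonneg _))
        _ = C1 * (n ^ (-s.re) / ‖w‖) := by rw [hC1]; ring
        _ ≤ _ := mul_le_mul_of_nonneg_left hfin1 hC1'
    have hB : ‖uu z ^ k * ((NN (z + r) : ℂ) ^ (-s) - (n : ℂ) ^ (-s))‖ ≤ C2 * n ^ (-(5 / 4) : ℝ) := by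
      rw [norm_mul, norm_zpow, uu_norm hz, one_zpow, one_mul]
      have h1 := cpow_sub_le (m := n / 4) (by positivity) hm (by linarith : n / 4 ≤ n) s (by linarith)
      calc _ ≤ _ := h1
        _ ≤ |M| * (n ^ (-s.re - 1) * 4 ^ (M + 1)) * (3 * R * ‖w‖) := by
            apply mul_le_mul _ hdiff (abs_nonneg _) (by positivity)
            apply mul_le_mul (hs2.trans (le_abs_self _)) hq5 (Real.rpow_nonneg (by positivity) _) (abs_nonneg _)
        _ = C2 * (n ^ (-s.re - 1) * ‖w‖) := by rw [hC2]; ring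
        _ ≤ _ := mul_le_mul_of_nonneg_left hfin2 hC2'
    rw [heq]
    refine (norm_add_le _ _).trans ?_
    have : 0 ≤ C3 * n ^ (-(5 / 4) : ℝ) := by positivity
    linarith
end

noncomputable section
open Filter Topology MeasureTheory Set Complex
open scoped Classical

abbrev R16 := GaussianInt ⧸ Ideal.span ({16} : Set GaussianInt)
abbrev mk16 : GaussianInt →+* R16 := Ideal.Quotient.mk _

def gBasis : Module.Basis (Fin 2) ℤ GaussianInt := Module.Basis.ofEquivFun
  { toFun := fun z => ![z.re, z.im]
    invFun := fun v => ⟨v 0, v 1⟩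
    map_add' := by intro x y; ext i; fin_cases i <;> simp
    map_smul' := by intro c x; ext i; fin_cases i <;> simp
    left_inv := fun z => by simp
    right_inv := fun v => by ext i; fin_cases i <;> simp }

instance : Module.Free ℤ GaussianInt := .of_basis gBasis
instance : Module.Finite ℤ GaussianInt := .of_basis gBasis

lemma gBasis_zero : gBasis 0 = 1 := by
  ext <;> simp [gBasis]
lemma gBasis_one : gBasis 1 = gI := by
  ext <;> simp [gBasis, gI]

lemma alg_norm (z : GaussianInt) : Algebra.norm ℤ z = z.norm := by
  rw [Algebra.norm_eq_matrix_det gBasis, Matrix.det_fin_two]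
  simp only [Algebra.leftMulMatrix_apply, LinearMap.toMatrix_apply, gBasis_zero, gBasis_one]
  simp [gBasis, gI, Zsqrtd.norm_def]

lemma card_quot (α : GaussianInt) : (Nat.card (GaussianInt ⧸ Ideal.span ({α} : Set GaussianInt)) : ℝ) = NN α := by
  have h := Ideal.absNorm_span_singleton (S := GaussianInt) α
  rw [alg_norm, Ideal.absNorm_apply] at h
  have h2 : Nat.card (GaussianInt ⧸ Ideal.span ({α} : Set GaussianInt)) = α.norm.natAbs := h
  rw [h2, NN_eq, GaussianInt.natCast_natAbs_norm]

lemma finite_quot {α : GaussianInt} (h : α ≠ 0) : Finite (GaussianInt ⧸ Ideal.span ({α} : Set GaussianInt)) := by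
  apply Nat.finite_of_card_ne_zero
  have := card_quot α
  have h2 := NN_pos h
  intro h3; rw [h3] at this; simp at this; linarith

instance : Finite R16 := finite_quot (by norm_num)
instance : Nontrivial R16 := Ideal.Quotient.nontrivial_iff.mpr (by
  rw [Ne, Ideal.span_singleton_eq_top, ← NN_eq_one]
  rw [NN_eq, Zsqrtd.norm_def]; norm_num)

lemma chi_zero (χ : MulChar R16 ℂ) : χ 0 = 0 := χ.map_nonunit not_isUnit_zero

lemma chi_norm_le (χ : MulChar R16 ℂ) (a : R16) : ‖χ a‖ ≤ 1 := by
  by_cases ha : IsUnit a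
  · obtain ⟨u, rfl⟩ := ha
    have : (χ u) ^ (Nat.card R16ˣ) = 1 := by
      rw [← map_pow, ← Units.val_pow_eq_pow_val, pow_card_eq_one']; simp
    exact (Complex.norm_eq_one_of_pow_eq_one this Nat.card_pos.ne').le
  · rw [χ.map_nonunit ha]; simp

lemma chi_norm_unit (χ : MulChar R16 ℂ) {a : R16} (ha : IsUnit a) : ‖χ a‖ = 1 := by
  obtain ⟨u, rfl⟩ := ha
  have : (χ u) ^ (Nat.card R16ˣ) = 1 := by
    rw [← map_pow, ← Units.val_pow_eq_pow_val, pow_card_eq_one']; simp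
  exact (Complex.norm_eq_one_of_pow_eq_one this Nat.card_pos.ne')

/-- Hecke character -/
def hk (χ : MulChar R16 ℂ) (k : ℤ) : GaussianInt →*₀ ℂ where
  toFun z := χ (mk16 z) * uu z ^ k
  map_zero' := by rw [map_zero, chi_zero, zero_mul]
  map_one' := by simp [uu]
  map_mul' := by
    intro x y
    rw [map_mul, map_mul, uu_mul, mul_zpow]; ring

lemma hk_apply (χ : MulChar R16 ℂ) (k : ℤ) (z : GaussianInt) : hk χ k z = χ (mk16 z) * uu z ^ k := rfl

lemma hk_norm_le (χ : MulChar R16 ℂ) (k : ℤ) (z : GaussianInt) : ‖hk χ k z‖ ≤ 1 := by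
  by_cases hz : z = 0
  · simp [hz]
  · rw [hk_apply, norm_mul, norm_zpow, uu_norm hz, one_zpow, mul_one]; exact chi_norm_le _ _

lemma hk_gg (χ : MulChar R16 ℂ) (k : ℤ) (s : ℂ) (z : GaussianInt) :
    hk χ k z * (NN z : ℂ) ^ (-s) = χ (mk16 z) * gg k s z := by
  by_cases hz : z = 0
  · subst hz; simp [gg]
  · simp only [hk_apply, gg, hz, if_false]; ring

abbrev Qt (α : GaussianInt) := GaussianInt ⧸ Ideal.span ({α} : Set GaussianInt)

def DDt (χ : MulChar R16 ℂ) (k : ℤ) (α : GaussianInt) (s : ℂ) (q : Qt α × GaussianInt) : ℂ :=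
  χ (mk16 (α * q.2)) * (gg k s (α * q.2 + 16 * Quotient.out q.1) - gg k s (α * q.2))

def DD (χ : MulChar R16 ℂ) (k : ℤ) (α : GaussianInt) (s : ℂ) : ℂ := ∑' q, DDt χ k α s q

lemma coprime_of_chi {χ : MulChar R16 ℂ} {α : GaussianInt} (h : χ (mk16 α) ≠ 0) : IsCoprime α 16 := by
  have hu : IsUnit (mk16 α) := by
    by_contra hc; exact h (χ.map_nonunit hc)
  obtain ⟨b, hb⟩ := hu.exists_right_inv
  obtain ⟨β, rfl⟩ := Ideal.Quotient.mk_surjective b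
  rw [← map_mul, ← map_one mk16, Ideal.Quotient.eq, Ideal.mem_span_singleton] at hb
  obtain ⟨c, hc⟩ := hb
  exact ⟨β, -c, by linear_combination hc⟩

lemma bij_map {α : GaussianInt} (h0 : α ≠ 0) (h : IsCoprime α 16) :
    Function.Bijective (fun q : Qt α × GaussianInt => α * q.2 + 16 * Quotient.out q.1) := by
  have hout : ∀ ρ : Qt α, Ideal.Quotient.mk (Ideal.span ({α} : Set GaussianInt)) (Quotient.out ρ) = ρ :=
    fun ρ => Quotient.out_eq ρ
  constructor
  · rintro ⟨ρ, w⟩ ⟨ρ', w'⟩ heq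
    simp only at heq
    have h1 : α ∣ 16 * (Quotient.out ρ - Quotient.out ρ') := ⟨w' - w, by linear_combination heq⟩
    have h2 := h.dvd_of_dvd_mul_left h1
    have h3 : ρ = ρ' := by
      rw [← hout ρ, ← hout ρ', Ideal.Quotient.eq, Ideal.mem_span_singleton]; exact h2
    subst h3
    have : α * w = α * w' := by linear_combination heq
    rw [mul_left_cancel₀ h0 this]
  · intro z
    obtain ⟨a, b, hab⟩ := h
    set ρ : Qt α := Ideal.Quotient.mk _ (b * z)
    have h1 := hout ρ
    rw [Ideal.Quotient.eq, Ideal.mem_span_singleton] at h1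
    obtain ⟨c, hc⟩ := h1
    refine ⟨(ρ, a * z - 16 * c), ?_⟩
    simp only
    linear_combination 16 * hc + z * hab

lemma mk16_add (z r : GaussianInt) : mk16 (z + 16 * r) = mk16 z := by
  rw [Ideal.Quotient.eq, Ideal.mem_span_singleton]; exact ⟨r, by ring⟩

set_option maxHeartbeats 1000000 in
lemma LL_continuation (χ : MulChar R16 ℂ) (k : ℤ) (α : GaussianInt) (h0 : α ≠ 0) (hα : χ (mk16 α) ≠ 0)
    (s : ℂ) (hs : 1 < s.re) :
    LL (hk χ k) s * (1 - hk χ k α * (NN α : ℂ) ^ (1 - s)) = DD χ k α s := by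
  have : Finite (Qt α) := finite_quot h0
  have : Fintype (Qt α) := Fintype.ofFinite _
  have hbij := bij_map h0 (coprime_of_chi hα)
  have hsum := DS_summable (hk χ k) NN (LL_hx _) (LL_hs _ (hk_norm_le χ k)) s hs
  set G : GaussianInt → ℂ := fun z => hk χ k z * (NN z : ℂ) ^ (-s) with hG
  have hsum1 : Summable fun q : Qt α × GaussianInt => G (α * q.2 + 16 * Quotient.out q.1) :=
    ((Equiv.ofBijective _ hbij).summable_iff).mpr hsum
  have hLL1 : LL (hk χ k) s = ∑' q : Qt α × GaussianInt, G (α * q.2 + 16 * Quotient.out q.1) :=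
    ((Equiv.ofBijective _ hbij).tsum_eq G).symm
  have hGmul : ∀ w, G (α * w) = (hk χ k α * (NN α : ℂ) ^ (-s)) * G w := by
    intro w; simp only [hG, map_mul, cpow_NN_mul]; ring
  have hsumw : Summable fun w => G (α * w) := by
    simp only [hGmul]; exact hsum.mul_left _
  have hsum2 : Summable fun q : Qt α × GaussianInt => G (α * q.2) := by
    have hn : Summable fun q : Qt α × GaussianInt => (1 : ℝ) * ‖G (α * q.2)‖ :=
      Summable.mul_of_nonneg (Summable.of_finite (f := fun _ : Qt α => (1 : ℝ))) hsumw.norm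
        (fun _ => zero_le_one) (fun _ => norm_nonneg _)
    exact Summable.of_norm (by simpa using hn)
  have hsecond : ∑' q : Qt α × GaussianInt, G (α * q.2) = LL (hk χ k) s * (hk χ k α * (NN α : ℂ) ^ (1 - s)) := by
    rw [hsum2.tsum_prod, tsum_fintype]
    simp only [hGmul, tsum_mul_left]
    rw [Finset.sum_const, Finset.card_univ, nsmul_eq_mul, ← Nat.card_eq_fintype_card]
    have hc : ((Nat.card (Qt α) : ℕ) : ℂ) = (NN α : ℂ) := by
      rw [← card_quot α]; simp
    have hn : (NN α : ℂ) ≠ 0 := by exact_mod_cast (NN_pos h0).ne'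
    rw [hc, sub_eq_add_neg, Complex.cpow_add _ _ hn, Complex.cpow_one]
    show _ * (_ * LL (hk χ k) s) = _
    ring
  rw [mul_sub, mul_one, ← hsecond, hLL1, ← hsum1.tsum_sub hsum2]
  refine tsum_congr fun q => ?_
  simp only [DDt, hG, hk_gg, mk16_add]
  ring

lemma gg_diff (k : ℤ) (z : GaussianInt) (s : ℂ) : DifferentiableAt ℂ (fun s => gg k s z) s := by
  by_cases hz : z = 0
  · simp [gg, hz]
  · simp only [gg, hz, if_false]
    have hn : (NN z : ℂ) ≠ 0 := by exact_mod_cast (NN_pos hz).ne'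
    exact (DifferentiableAt.const_cpow (by fun_prop) (Or.inl hn)).const_mul _

lemma DD_diff (χ : MulChar R16 ℂ) (k : ℤ) (α : GaussianInt) (h0 : α ≠ 0) (s : ℂ) (hs : 3 / 4 < s.re) :
    AnalyticAt ℂ (DD χ k α) s := by
  have : Finite (Qt α) := finite_quot h0
  set M := ‖s‖ + 1
  choose C hC0 hC using fun ρ : Qt α => gg_bound k M (16 * Quotient.out ρ)
  set U : Set ℂ := {s | 3 / 4 < s.re} ∩ Metric.ball 0 M with hU
  have hUo : IsOpen U := (isOpen_lt continuous_const continuous_re).inter Metric.isOpen_ball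
  have hu : Summable fun q : Qt α × GaussianInt => C q.1 * NN q.2 ^ (-(5 / 4) : ℝ) :=
    Summable.mul_of_nonneg (Summable.of_finite (f := C)) (summable_NN (by norm_num)) hC0
      (fun z => Real.rpow_nonneg (NN_nonneg z) _)
  have hd : DifferentiableOn ℂ (DD χ k α) U := by
    apply differentiableOn_tsum_of_summable_norm (F := fun q s => DDt χ k α s q) hu _ hUo
    · rintro q y ⟨hy1, hy2⟩
      simp only [DDt]
      by_cases hz : α * q.2 = 0
      · rw [hz, map_zero, chi_zero]; simp only [zero_mul, norm_zero]
        exact mul_nonneg (hC0 _) (Real.rpow_nonneg (NN_nonneg _) _)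
      · have h1 := hC q.1 y (le_of_lt hy1) (by simpa using (mem_ball_zero_iff.mp hy2).le) (α * q.2) hz
        have hq : q.2 ≠ 0 := by rintro h; simp [h] at hz
        rw [norm_mul]
        calc _ ≤ 1 * (C q.1 * NN (α * q.2) ^ (-(5 / 4) : ℝ)) :=
              mul_le_mul (chi_norm_le _ _) h1 (norm_nonneg _) zero_le_one
          _ ≤ _ := by
            rw [one_mul]
            apply mul_le_mul_of_nonneg_left _ (hC0 _)
            apply Real.rpow_le_rpow_of_nonpos (NN_pos hq) _ (by norm_num)
            rw [NN_mul]
            nlinarith [NN_ge_one h0, NN_nonneg q.2]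
    · intro q y hy
      apply DifferentiableAt.differentiableWithinAt
      exact ((gg_diff _ _ _).sub (gg_diff _ _ _)).const_mul _
  exact hd.analyticAt (hUo.mem_nhds ⟨hs, by simp [M]⟩)
end

noncomputable section
open Filter Topology MeasureTheory Set Complex
open scoped Classical

lemma logDeriv_order {F : ℂ → ℂ} {s₀ : ℂ} (hF : AnalyticAt ℂ F s₀) (hnz : ¬ ∀ᶠ s in 𝓝 s₀, F s = 0) :
    ∃ d : ℕ, (F s₀ ≠ 0 → d = 0) ∧ (deriv F s₀ ≠ 0 → d ≤ 1) ∧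
      (∃ L, Tendsto (fun s => logDeriv F s - d / (s - s₀)) (𝓝[≠] s₀) (𝓝 L)) ∧
      (∀ᶠ s in 𝓝[≠] s₀, F s ≠ 0) := by
  obtain ⟨d, G, hG, hG0, hFG⟩ := (hF.exists_eventuallyEq_pow_smul_nonzero_iff).mpr hnz
  have hGne : ∀ᶠ s in 𝓝 s₀, G s ≠ 0 := hG.continuousAt.eventually_ne hG0
  refine ⟨d, ?_, ?_, ⟨logDeriv G s₀, ?_⟩, ?_⟩
  · intro h
    by_contra hd
    apply h
    rw [hFG.self_of_nhds, sub_self, zero_pow hd, zero_smul]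
  · intro h
    by_contra hd
    push Not at hd
    apply h
    have hFG' : F =ᶠ[𝓝 s₀] fun z => (z - s₀) ^ d • G z := hFG
    rw [hFG'.deriv_eq]
    have h1 : HasDerivAt (fun z => (z - s₀) ^ d • G z) _ s₀ :=
      (((hasDerivAt_id s₀).sub_const s₀).pow d).smul hG.differentiableAt.hasDerivAt
    rw [h1.deriv]
    simp [zero_pow (by omega : d ≠ 0), zero_pow (by omega : d - 1 ≠ 0)]
  · have hcont : ContinuousAt (logDeriv G) s₀ := by
      have : AnalyticAt ℂ (logDeriv G) s₀ := hG.deriv.div hG hG0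
      exact this.continuousAt
    refine (hcont.tendsto.mono_left nhdsWithin_le_nhds).congr' ?_
    have h1 := hFG.eventually_nhds.filter_mono (nhdsWithin_le_nhds (s := {s₀}ᶜ))
    have h2 := hGne.filter_mono (nhdsWithin_le_nhds (s := {s₀}ᶜ))
    have h3 := hG.eventually_analyticAt.filter_mono (nhdsWithin_le_nhds (s := {s₀}ᶜ))
    filter_upwards [h1, h2, h3, self_mem_nhdsWithin] with s h1 h2 h3 h4
    have h4' : s - s₀ ≠ 0 := sub_ne_zero.mpr h4
    have h5 : logDeriv F s = logDeriv (fun z => (z - s₀) ^ d * G z) s := by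
      have : F =ᶠ[𝓝 s] fun z => (z - s₀) ^ d * G z := h1
      rw [logDeriv_apply, logDeriv_apply, this.deriv_eq, this.self_of_nhds]
    rw [h5, logDeriv_mul (f := fun z => (z - s₀) ^ d) s (pow_ne_zero _ h4') h2 (by fun_prop) h3.differentiableAt,
      logDeriv_fun_pow (f := fun z => z - s₀) (by fun_prop)]
    have : logDeriv (fun z => z - s₀) s = 1 / (s - s₀) := by
      rw [logDeriv_apply]; simp
    rw [this]; ring
  · have h1 := hFG.filter_mono (nhdsWithin_le_nhds (s := {s₀}ᶜ))
    have h2 := hGne.filter_mono (nhdsWithin_le_nhds (s := {s₀}ᶜ))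
    filter_upwards [h1, h2, self_mem_nhdsWithin] with s h1 h2 h4
    rw [h1]
    exact smul_ne_zero (pow_ne_zero _ (sub_ne_zero.mpr h4)) h2

lemma hk_unit {f : GaussianInt →*₀ ℂ} (hi : f gI = 1) {u : GaussianInt} (hu : IsUnit u) : f u = 1 := by
  obtain ⟨j, rfl⟩ := unit_cases hu
  rw [map_pow, hi, one_pow]

lemma LL_tendsto (f : GaussianInt →*₀ ℂ) (hf : ∀ z, ‖f z‖ ≤ 1) (hi : f gI = 1) :
    Tendsto (fun σ : ℝ => LL f σ) atTop (𝓝 4) := by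
  have hsum : ∑' z : GaussianInt, (if NN z = 1 then f z else 0) = 4 := by
    have hE := gI_pow_inj
    rw [← hE.tsum_eq]
    · rw [tsum_fintype]
      have : ∀ j : Fin 4, (if NN (gI ^ (j : ℕ)) = 1 then f (gI ^ (j : ℕ)) else 0) = 1 := by
        intro j; simp [NN_pow, NN_gI, hi]
      rw [Finset.sum_congr rfl (fun j _ => this j)]; simp
    · intro z hz
      have : NN z = 1 := by
        by_contra h; simp [h] at hz
      obtain ⟨j, hj⟩ := unit_cases (NN_eq_one.mp this)
      exact ⟨j, hj.symm⟩
  rw [← hsum]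
  refine tendsto_tsum_of_dominated_convergence (summable_NN (by norm_num : (1 : ℝ) < 2)) ?_ ?_
  · intro z
    rcases LL_hx f z with h | h
    · simp [h]
    · split_ifs with h1
      · simp [h1]
      · have h2 : 1 < NN z := lt_of_le_of_ne h (Ne.symm h1)
        have h3 : Tendsto (fun σ : ℝ => (((NN z) ^ (-σ) : ℝ) : ℂ)) atTop (𝓝 ((0 : ℝ) : ℂ)) := by
          refine (Complex.continuous_ofReal.tendsto _).comp ?_
          have := tendsto_rpow_atBot_of_base_gt_one (NN z) h2
          exact this.comp tendsto_neg_atTop_atBot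
        have h4 := h3.const_mul (f z)
        simp only [Complex.ofReal_zero, mul_zero] at h4
        refine h4.congr fun σ => ?_
        rw [Complex.ofReal_cpow (by linarith)]; simp
  · filter_upwards [eventually_ge_atTop 2] with σ hσ z
    rcases LL_hx f z with h | h
    · rw [h, zero_mul, norm_zero]; exact Real.rpow_nonneg (NN_nonneg z) _
    · rw [norm_DSterm (by linarith)]
      calc _ ≤ 1 * NN z ^ (-(2 : ℝ)) := by
            apply mul_le_mul (hf z) _ (Real.rpow_nonneg (NN_nonneg z) _) zero_le_one
            exact Real.rpow_le_rpow_of_exponent_le h (by simpa using hσ)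
        _ = _ := one_mul _

def EE (f : GaussianInt →*₀ ℂ) (α : GaussianInt) (s : ℂ) : ℂ := 1 - f α * (NN α : ℂ) ^ (1 - s)

lemma EE_hasDeriv (f : GaussianInt →*₀ ℂ) (α : GaussianInt) (h0 : α ≠ 0) (s : ℂ) :
    HasDerivAt (EE f α) (f α * ((NN α : ℂ) ^ (1 - s) * Real.log (NN α))) s := by
  have hn : (NN α : ℂ) ≠ 0 := by exact_mod_cast (NN_pos h0).ne'
  have h1 := (((hasDerivAt_id s).const_sub 1).const_cpow (c := (NN α : ℂ)) (Or.inl hn)).const_mul (f α)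
  have := h1.const_sub 1
  refine this.congr_deriv ?_
  rw [Complex.ofReal_log (NN_nonneg _)]; simp

lemma EE_analytic (f : GaussianInt →*₀ ℂ) (α : GaussianInt) (h0 : α ≠ 0) (s : ℂ) :
    AnalyticAt ℂ (EE f α) s := by
  have : Differentiable ℂ (EE f α) := fun s => (EE_hasDeriv f α h0 s).differentiableAt
  exact this.analyticAt s

lemma EE_tendsto (f : GaussianInt →*₀ ℂ) (α : GaussianInt) (h1 : 1 < NN α) :
    Tendsto (fun σ : ℝ => EE f α σ) atTop (𝓝 1) := by
  have h3 : Tendsto (fun σ : ℝ => (((NN α) ^ (1 - σ) : ℝ) : ℂ)) atTop (𝓝 ((0 : ℝ) : ℂ)) := by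
    refine (Complex.continuous_ofReal.tendsto _).comp ?_
    have := tendsto_rpow_atBot_of_base_gt_one (NN α) h1
    exact this.comp (tendsto_const_nhds.add_atBot tendsto_neg_atTop_atBot)
  have h4 := (h3.const_mul (f α)).const_sub 1
  simp only [Complex.ofReal_zero, mul_zero, sub_zero] at h4
  refine h4.congr fun σ => ?_
  rw [EE, Complex.ofReal_cpow (by linarith)]; simp

lemma DD_not_zero (χ : MulChar R16 ℂ) (k : ℤ) (hi : hk χ k gI = 1) (α : GaussianInt) (h1 : 1 < NN α)
    (hα : χ (mk16 α) ≠ 0) (s₀ : ℂ) (hs₀ : 3 / 4 < s₀.re) : ¬ ∀ᶠ s in 𝓝 s₀, DD χ k α s = 0 := by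
  intro hcon
  have h0 : α ≠ 0 := by rintro rfl; simp [NN_zero] at h1; linarith
  have hU : IsPreconnected {s : ℂ | 3 / 4 < s.re} := (convex_halfSpace_re_gt _).isPreconnected
  have han : AnalyticOnNhd ℂ (DD χ k α) {s : ℂ | 3 / 4 < s.re} := fun s hs => DD_diff χ k α h0 s hs
  have hz := han.eqOn_zero_of_preconnected_of_eventuallyEq_zero hU hs₀ hcon
  have hlim := (LL_tendsto (hk χ k) (hk_norm_le χ k) hi).mul (EE_tendsto (hk χ k) α h1)
  have hlim0 : Tendsto (fun σ : ℝ => LL (hk χ k) σ * EE (hk χ k) α σ) atTop (𝓝 0) := by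
    refine tendsto_const_nhds.congr' ?_
    filter_upwards [eventually_gt_atTop 1] with σ hσ
    have h2 := LL_continuation χ k α h0 hα σ (by simpa using hσ)
    have h3 : DD χ k α σ = 0 := hz (show (3 / 4 : ℝ) < ((σ : ℂ)).re by simp; linarith)
    rw [EE, h2, h3]
  have := tendsto_nhds_unique hlim hlim0
  norm_num at this

lemma nhds_right_le (s₀ : ℂ) (h : s₀.re = 1) : 𝓝[{s : ℂ | 1 < s.re}] s₀ ≤ 𝓝[≠] s₀ := by
  apply nhdsWithin_mono
  intro s hs h2
  rw [mem_singleton_iff] at h2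
  subst h2
  have : 1 < s.re := hs
  linarith

lemma order_main (χ : MulChar R16 ℂ) (k : ℤ) (hi : hk χ k gI = 1) (α : GaussianInt) (h1 : 1 < NN α)
    (hα : χ (mk16 α) ≠ 0) (s₀ : ℂ) (hs₀ : s₀.re = 1) :
    ∃ n : ℤ, -1 ≤ n ∧ (EE (hk χ k) α s₀ ≠ 0 → 0 ≤ n) ∧
      ∃ L, Tendsto (fun s => TT (hk χ k) s + 4 * n / (s - s₀)) (𝓝[{s : ℂ | 1 < s.re}] s₀) (𝓝 L) := by
  have h0 : α ≠ 0 := by rintro rfl; simp [NN_zero] at h1; linarith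
  obtain ⟨d, -, -, ⟨L1, hL1⟩, hD⟩ := logDeriv_order (DD_diff χ k α h0 s₀ (by linarith))
    (DD_not_zero χ k hi α h1 hα s₀ (by linarith))
  have hfα : hk χ k α ≠ 0 := by
    rw [hk_apply]; exact mul_ne_zero hα (zpow_ne_zero _ (uu_ne h0))
  have hderiv : deriv (EE (hk χ k) α) s₀ ≠ 0 := by
    rw [(EE_hasDeriv _ α h0 s₀).deriv]
    have hn : (NN α : ℂ) ≠ 0 := by exact_mod_cast (NN_pos h0).ne'
    refine mul_ne_zero hfα (mul_ne_zero ?_ ?_)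
    · rw [Ne, Complex.cpow_eq_zero_iff]; tauto
    · exact_mod_cast (Real.log_pos h1).ne'
  obtain ⟨e, he0, he1, ⟨L2, hL2⟩, hE⟩ := logDeriv_order (EE_analytic (hk χ k) α h0 s₀) (by
    intro h
    apply hderiv
    have : EE (hk χ k) α =ᶠ[𝓝 s₀] fun _ => 0 := h
    rw [this.deriv_eq]; simp)
  refine ⟨d - e, by have := he1 hderiv; omega, fun h => by have := he0 h; omega, -4 * (L1 - L2), ?_⟩
  have hle := nhds_right_le s₀ hs₀
  refine (((hL1.sub hL2).const_mul (-4)).mono_left hle).congr' ?_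
  filter_upwards [hle hD, hle hE, self_mem_nhdsWithin] with s hDs hEs hs
  have hs' : 1 < s.re := hs
  have hne : s - s₀ ≠ 0 := by
    intro h; have := congrArg Complex.re h; simp at this; linarith
  have hmul : (fun z => LL (hk χ k) z * EE (hk χ k) α z) =ᶠ[𝓝 s] DD χ k α := by
    have hopen : IsOpen {s : ℂ | 1 < s.re} := isOpen_lt continuous_const continuous_re
    filter_upwards [hopen.mem_nhds hs] with z hz
    exact LL_continuation χ k α h0 hα z hz
  have hms : LL (hk χ k) s * EE (hk χ k) α s = DD χ k α s := hmul.self_of_nhds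
  have hLLne : LL (hk χ k) s ≠ 0 := by
    intro h
    apply hDs
    rw [← hms, h, zero_mul]
  have hld : logDeriv (DD χ k α) s = logDeriv (LL (hk χ k)) s + logDeriv (EE (hk χ k) α) s := by
    rw [← logDeriv_mul s hLLne hEs (LL_hasDerivAt _ (hk_norm_le χ k) s hs').differentiableAt
      (EE_hasDeriv _ α h0 s).differentiableAt, logDeriv_apply, logDeriv_apply, hmul.deriv_eq, hms]
  have hT : TT (hk χ k) s = -4 * logDeriv (LL (hk χ k)) s := by
    have := LL_deriv_TT (hk χ k) (hk_norm_le χ k) s hs'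
    rw [logDeriv_apply]
    field_simp
    linear_combination this
  rw [hT, hld]
  push_cast
  ring
end

noncomputable section
open Filter Topology MeasureTheory Set Complex
open scoped Classical

lemma GP_log_nonneg (p : GP) : 0 ≤ Real.log (NN p.1) := Real.log_nonneg (by linarith [GP_two p])

lemma GP_summable (σ : ℝ) (hσ : 1 < σ) : Summable fun p : GP => Real.log (NN p.1) * NN p.1 ^ (-σ) := by
  have := summable_log_mul (fun _ : GP => (1 : ℝ)) (fun p : GP => NN p.1) (fun _ => zero_le_one)
    (fun p => Or.inr (by linarith [GP_two p])) (fun σ hσ => by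
      simp only [one_mul]; exact (summable_NN hσ).comp_injective Subtype.val_injective) σ hσ
  simpa using this

def PP (f : GaussianInt → ℂ) (s : ℂ) : ℂ := DS (fun p : GP => f p.1 * Real.log (NN p.1)) (fun p : GP => NN p.1) s

lemma PP_hs (f : GaussianInt → ℂ) (hf : ∀ z, ‖f z‖ ≤ 1) (σ : ℝ) (hσ : 1 < σ) :
    Summable fun p : GP => ‖f p.1 * Real.log (NN p.1)‖ * NN p.1 ^ (-σ) := by
  refine Summable.of_nonneg_of_le (fun p => ?_) (fun p => ?_) (GP_summable σ hσ)
  · exact mul_nonneg (norm_nonneg _) (Real.rpow_nonneg (NN_nonneg _) _)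
  · apply mul_le_mul_of_nonneg_right _ (Real.rpow_nonneg (NN_nonneg _) _)
    rw [norm_mul, Complex.norm_real, Real.norm_eq_abs, abs_of_nonneg (GP_log_nonneg p)]
    exact mul_le_of_le_one_left (GP_log_nonneg p) (hf _)

lemma PP_hx (f : GaussianInt → ℂ) (p : GP) : f p.1 * Real.log (NN p.1) = 0 ∨ 1 ≤ NN p.1 :=
  Or.inr (by linarith [GP_two p])

lemma PP_summable (f : GaussianInt → ℂ) (hf : ∀ z, ‖f z‖ ≤ 1) (s : ℂ) (hs : 1 < s.re) :
    Summable fun p : GP => f p.1 * Real.log (NN p.1) * (NN p.1 : ℂ) ^ (-s) :=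
  DS_summable (fun p : GP => f p.1 * Real.log (NN p.1)) _ (PP_hx f) (PP_hs f hf) s hs

lemma PP_cont (f : GaussianInt → ℂ) (hf : ∀ z, ‖f z‖ ≤ 1) (s : ℂ) (hs : 1 < s.re) : ContinuousAt (PP f) s :=
  (DS_hasDerivAt (fun p : GP => f p.1 * Real.log (NN p.1)) _ (PP_hx f) (PP_hs f hf) s hs).continuousAt

def QQ (f : GaussianInt →*₀ ℂ) (s : ℂ) : ℂ :=
  ∑' q : GP × ℕ, (Real.log (NN q.1.1) : ℂ) * (f q.1.1 * (NN q.1.1 : ℂ) ^ (-s)) ^ (q.2 + 2)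

lemma term_norm (f : GaussianInt →*₀ ℂ) (hf : ∀ z, ‖f z‖ ≤ 1) (p : GP) (s : ℂ) (σ : ℝ) (h : σ ≤ s.re) :
    ‖f p.1 * (NN p.1 : ℂ) ^ (-s)‖ ≤ NN p.1 ^ (-σ) := by
  have h2 := GP_two p
  rw [norm_DSterm (by linarith)]
  calc _ ≤ 1 * NN p.1 ^ (-s.re) := mul_le_mul_of_nonneg_right (hf _) (Real.rpow_nonneg (NN_nonneg _) _)
    _ ≤ _ := by rw [one_mul]; exact Real.rpow_le_rpow_of_exponent_le (by linarith) (by linarith)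

lemma half_bound (p : GP) (σ : ℝ) (h : 1 ≤ σ) : NN p.1 ^ (-σ) ≤ 1 / 2 := by
  have h2 := GP_two p
  calc NN p.1 ^ (-σ) ≤ NN p.1 ^ (-1 : ℝ) := Real.rpow_le_rpow_of_exponent_le (by linarith) (by linarith)
    _ = (NN p.1)⁻¹ := Real.rpow_neg_one _
    _ ≤ 1 / 2 := by rw [one_div]; exact inv_anti₀ (by norm_num) h2

lemma QQ_bound_summable : Summable fun q : GP × ℕ => (Real.log (NN q.1.1) * NN q.1.1 ^ (-2 : ℝ)) * (1 / 2 : ℝ) ^ q.2 :=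
  (GP_summable 2 (by norm_num)).mul_of_nonneg (summable_geometric_of_lt_one (by norm_num) (by norm_num))
    (fun p => mul_nonneg (GP_log_nonneg p) (Real.rpow_nonneg (NN_nonneg _) _)) (fun n => by positivity)

lemma QQ_term_bound (f : GaussianInt →*₀ ℂ) (hf : ∀ z, ‖f z‖ ≤ 1) (s : ℂ) (hs : 1 ≤ s.re) (q : GP × ℕ) :
    ‖(Real.log (NN q.1.1) : ℂ) * (f q.1.1 * (NN q.1.1 : ℂ) ^ (-s)) ^ (q.2 + 2)‖ ≤
      (Real.log (NN q.1.1) * NN q.1.1 ^ (-2 : ℝ)) * (1 / 2 : ℝ) ^ q.2 := by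
  have h1 := term_norm f hf q.1 s 1 hs
  have h2 := half_bound q.1 1 le_rfl
  rw [norm_mul, norm_pow, Complex.norm_real, Real.norm_eq_abs, abs_of_nonneg (GP_log_nonneg q.1), mul_assoc]
  apply mul_le_mul_of_nonneg_left _ (GP_log_nonneg _)
  rw [pow_add, mul_comm]
  apply mul_le_mul _ _ (by positivity) (Real.rpow_nonneg (NN_nonneg _) _)
  · calc _ ≤ (NN q.1.1 ^ (-1 : ℝ)) ^ 2 := pow_le_pow_left₀ (norm_nonneg _) h1 2
      _ = _ := by rw [← Real.rpow_natCast, ← Real.rpow_mul (NN_nonneg _)]; norm_num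
  · exact pow_le_pow_left₀ (norm_nonneg _) (h1.trans h2) _

lemma QQ_tendsto (f : GaussianInt →*₀ ℂ) (hf : ∀ z, ‖f z‖ ≤ 1) (s₀ : ℂ) :
    Tendsto (QQ f) (𝓝[{s : ℂ | 1 < s.re}] s₀) (𝓝 (QQ f s₀)) := by
  refine tendsto_tsum_of_dominated_convergence QQ_bound_summable ?_ ?_
  · intro q
    have hn : (NN q.1.1 : ℂ) ≠ 0 := by exact_mod_cast (NN_pos q.1.2.ne_zero).ne'
    have : Continuous fun s : ℂ => (Real.log (NN q.1.1) : ℂ) * (f q.1.1 * (NN q.1.1 : ℂ) ^ (-s)) ^ (q.2 + 2) := by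
      have : Continuous fun s : ℂ => (NN q.1.1 : ℂ) ^ (-s) := continuous_neg.const_cpow (Or.inl hn)
      fun_prop
    exact (this.tendsto s₀).mono_left nhdsWithin_le_nhds
  · filter_upwards [self_mem_nhdsWithin] with s hs q
    exact QQ_term_bound f hf s (le_of_lt hs) q

lemma TT_eq (f : GaussianInt →*₀ ℂ) (hf : ∀ z, ‖f z‖ ≤ 1) (s : ℂ) (hs : 1 < s.re) :
    TT f s = PP f s + QQ f s := by
  have hQ : Summable fun q : GP × ℕ => (Real.log (NN q.1.1) : ℂ) * (f q.1.1 * (NN q.1.1 : ℂ) ^ (-s)) ^ (q.2 + 2) :=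
    Summable.of_norm_bounded QQ_bound_summable (QQ_term_bound f hf s hs.le)
  have hT : Summable fun q : GP × ℕ => (Real.log (NN q.1.1) : ℂ) * (f q.1.1 * (NN q.1.1 : ℂ) ^ (-s)) ^ (q.2 + 1) := by
    refine Summable.of_norm_bounded ((GP_summable s.re hs).mul_of_nonneg
      (summable_geometric_of_lt_one (by norm_num : (0 : ℝ) ≤ 1 / 2) (by norm_num))
      (fun p => mul_nonneg (GP_log_nonneg p) (Real.rpow_nonneg (NN_nonneg _) _)) (fun n => by positivity)) fun q => ?_
    have h1 := term_norm f hf q.1 s s.re le_rfl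
    have h2 := half_bound q.1 s.re hs.le
    rw [norm_mul, norm_pow, Complex.norm_real, Real.norm_eq_abs, abs_of_nonneg (GP_log_nonneg q.1), mul_assoc]
    apply mul_le_mul_of_nonneg_left _ (GP_log_nonneg _)
    rw [pow_succ, mul_comm]
    exact mul_le_mul h1 (pow_le_pow_left₀ (norm_nonneg _) (h1.trans h2) _) (by positivity) (Real.rpow_nonneg (NN_nonneg _) _)
  rw [TT, QQ, PP, DS, hT.tsum_prod, hQ.tsum_prod, ← (PP_summable f hf s hs).tsum_add hQ.prod]
  refine tsum_congr fun p => ?_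
  rw [(hT.prod_factor p).tsum_eq_zero_add]
  simp only [zero_add, pow_one]
  congr 1
  ring

lemma PP_order (χ : MulChar R16 ℂ) (k : ℤ) (hi : hk χ k gI = 1) (α : GaussianInt) (h1 : 1 < NN α)
    (hα : χ (mk16 α) ≠ 0) (s₀ : ℂ) (hs₀ : s₀.re = 1) :
    ∃ n : ℤ, -1 ≤ n ∧ (EE (hk χ k) α s₀ ≠ 0 → 0 ≤ n) ∧
      ∃ L, Tendsto (fun s => PP (hk χ k) s + 4 * n / (s - s₀)) (𝓝[{s : ℂ | 1 < s.re}] s₀) (𝓝 L) := by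
  obtain ⟨n, h1, h2, L, hL⟩ := order_main χ k hi α h1 hα s₀ hs₀
  refine ⟨n, h1, h2, _, (hL.sub (QQ_tendsto (hk χ k) (hk_norm_le χ k) s₀)).congr' ?_⟩
  filter_upwards [self_mem_nhdsWithin] with s hs
  rw [TT_eq _ (hk_norm_le χ k) s hs]; ring
end

noncomputable section
open Filter Topology MeasureTheory Set Complex
open scoped Classical

lemma mk16_eq_one (r : GaussianInt) : mk16 (1 + 16 * r) = 1 := by rw [mk16_add, map_one]

lemma uu_nat (n : ℕ) (hn : n ≠ 0) : uu (n : GaussianInt) = 1 := by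
  have : (n : ℂ) ≠ 0 := by exact_mod_cast hn
  simp [uu, this]

lemma NN_nat (n : ℕ) : NN (n : GaussianInt) = (n : ℝ) ^ 2 := by
  rw [NN_sq]; simp

lemma NN_mk (a b : ℤ) : NN ⟨a, b⟩ = (a : ℝ) ^ 2 + (b : ℝ) ^ 2 := by
  rw [NN_eq, Zsqrtd.norm_def]; push_cast; ring

lemma cpow_one_log {x t : ℝ} (hx : 0 < x) (h : (x : ℂ) ^ (-(t * I)) = 1) :
    ∃ n : ℤ, t * Real.log x = n * (2 * Real.pi) := by
  rw [Complex.cpow_def_of_ne_zero (by exact_mod_cast hx.ne'), Complex.exp_eq_one_iff] at h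
  obtain ⟨n, hn⟩ := h
  refine ⟨-n, ?_⟩
  rw [← Complex.ofReal_log hx.le] at hn
  have := congrArg Complex.im hn
  simp at this
  push_cast
  linarith

lemma t_zero {t : ℝ} (h1 : ((289 : ℝ) : ℂ) ^ (-(t * I)) = 1) (h2 : ((1089 : ℝ) : ℂ) ^ (-(t * I)) = 1) : t = 0 := by
  by_contra ht
  obtain ⟨n, hn⟩ := cpow_one_log (by norm_num) h1
  obtain ⟨m, hm⟩ := cpow_one_log (by norm_num) h2
  have l1 : 0 < Real.log 289 := Real.log_pos (by norm_num)
  have l2 : 0 < Real.log 1089 := Real.log_pos (by norm_num)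
  have hpi := Real.pi_pos
  have hn0 : n ≠ 0 := by
    rintro rfl
    rw [Int.cast_zero, zero_mul] at hn
    exact mul_ne_zero ht l1.ne' hn
  have key : (n : ℝ) * Real.log 1089 = m * Real.log 289 := by
    have : t * (2 * Real.pi) * (n * Real.log 1089) = t * (2 * Real.pi) * (m * Real.log 289) := by
      calc _ = (t * Real.log 1089) * (n * (2 * Real.pi)) := by ring
        _ = (t * Real.log 289) * (m * (2 * Real.pi)) := by rw [hm, hn]; ring
        _ = _ := by ring
    exact mul_left_cancel₀ (by positivity) this
  have key2 : (n.natAbs : ℝ) * Real.log 1089 = m.natAbs * Real.log 289 := by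
    have := congrArg abs key
    rw [abs_mul, abs_mul, abs_of_pos l1, abs_of_pos l2] at this
    rw [Nat.cast_natAbs, Nat.cast_natAbs]; exact_mod_cast this
  rw [← Real.log_pow, ← Real.log_pow] at key2
  have key3 : (1089 : ℝ) ^ n.natAbs = 289 ^ m.natAbs := Real.log_injOn_pos (by simp) (by simp) key2
  have key4 : 1089 ^ n.natAbs = 289 ^ m.natAbs := by exact_mod_cast key3
  have h3 : 3 ∣ 289 ^ m.natAbs := by
    rw [← key4]; exact (by norm_num : 3 ∣ 1089).trans (dvd_pow_self _ (by omega))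
  have := Nat.prime_three.dvd_of_dvd_pow h3
  norm_num at this

lemma toComplex_star (z : GaussianInt) : GaussianInt.toComplex (star z) = (starRingEnd ℂ) (GaussianInt.toComplex z) := by
  rw [GaussianInt.toComplex_star]

lemma k_zero {k : ℤ} (h : uu ⟨1, 16⟩ ^ k = 1) : k = 0 := by
  by_contra hk0
  set α : GaussianInt := ⟨1, 16⟩ with hα
  have h1 : uu α ^ k.natAbs = 1 := by
    rcases Int.natAbs_eq k with hh | hh
    · rw [hh] at h; exact_mod_cast h
    · rw [hh, zpow_neg, inv_eq_one] at h; exact_mod_cast h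
  set w := GaussianInt.toComplex α with hw
  have hα0 : α ≠ 0 := by intro h; have := congrArg Zsqrtd.re h; simp [hα] at this
  have hn : (‖w‖ : ℂ) ≠ 0 := by
    have : w ≠ 0 := by rw [hw, Ne, GaussianInt.toComplex_eq_zero]; exact hα0
    simpa using this
  have h2 : w ^ k.natAbs = (‖w‖ : ℂ) ^ k.natAbs := by
    have : (w / ‖w‖) ^ k.natAbs = 1 := h1
    rw [div_pow, div_eq_one_iff_eq (pow_ne_zero _ hn)] at this
    exact this
  have h3 : ((starRingEnd ℂ) w) ^ k.natAbs = w ^ k.natAbs := by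
    rw [← map_pow, h2, map_pow, Complex.conj_ofReal]
  have h4 : (star α) ^ k.natAbs = α ^ k.natAbs := by
    apply GaussianInt.toComplex_injective
    rw [map_pow, map_pow, toComplex_star, h3]
  have hc : IsCoprime α (star α) := by
    refine ⟨star α - 128, -128, ?_⟩
    ext <;> simp [hα]
  have hd : α ∣ (star α) ^ k.natAbs := by rw [h4]; exact dvd_pow_self _ (by omega)
  have hu := (hc.pow_right (n := k.natAbs)).isUnit_of_dvd' dvd_rfl hd
  rw [← NN_eq_one, NN_mk] at hu
  norm_num at hu

lemma nontriv_exists (χ : MulChar R16 ℂ) (k : ℤ) (t : ℝ) (hi : hk χ k gI = 1) (h : ¬ (χ = 1 ∧ k = 0 ∧ t = 0)) :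
    ∃ α, 1 < NN α ∧ χ (mk16 α) ≠ 0 ∧ EE (hk χ k) α (1 + t * I) ≠ 0 := by
  by_contra hcon
  push Not at hcon
  have H : ∀ α, 1 < NN α → χ (mk16 α) ≠ 0 → hk χ k α * (NN α : ℂ) ^ (-(t * I)) = 1 := by
    intro α h1 h2
    have := hcon α h1 h2
    rw [EE, sub_eq_zero] at this
    rw [this]; congr 2; ring
  apply h
  have e17 : mk16 ((17 : ℕ) : GaussianInt) = 1 := by
    rw [← mk16_eq_one 1]; congr 1
  have e33 : mk16 ((33 : ℕ) : GaussianInt) = 1 := by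
    rw [← mk16_eq_one 2]; congr 1
  have eα : mk16 ⟨1, 16⟩ = 1 := by
    rw [← mk16_eq_one gI]; congr 1
  have h17 := H ((17 : ℕ) : GaussianInt) (by rw [NN_nat]; norm_num) (by rw [e17]; simp)
  have h33 := H ((33 : ℕ) : GaussianInt) (by rw [NN_nat]; norm_num) (by rw [e33]; simp)
  rw [hk_apply, e17, uu_nat _ (by norm_num), NN_nat, map_one, one_zpow, one_mul, one_mul] at h17
  rw [hk_apply, e33, uu_nat _ (by norm_num), NN_nat, map_one, one_zpow, one_mul, one_mul] at h33
  have ht : t = 0 := by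
    apply t_zero
    · rw [← h17]; norm_num
    · rw [← h33]; norm_num
  subst ht
  have H' : ∀ α, 1 < NN α → χ (mk16 α) ≠ 0 → hk χ k α = 1 := by
    intro α h1 h2; simpa using H α h1 h2
  have hk0 : k = 0 := by
    have := H' ⟨1, 16⟩ (by rw [NN_mk]; norm_num) (by rw [eα]; simp)
    rw [hk_apply, eα, map_one, one_mul] at this
    exact k_zero this
  refine ⟨?_, hk0, rfl⟩
  ext u
  obtain ⟨α, hα⟩ := Ideal.Quotient.mk_surjective (u : R16)
  have hne : χ (mk16 α) ≠ 0 := by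
    rw [show mk16 α = (u : R16) from hα]
    intro h; have := chi_norm_unit χ u.isUnit; rw [h] at this; simp at this
  have h0 : α ≠ 0 := by rintro rfl; rw [map_zero, chi_zero] at hne; exact hne rfl
  have : hk χ k α = 1 := by
    rcases (NN_ge_one h0).lt_or_eq with h1 | h1
    · exact H' α h1 hne
    · exact hk_unit hi (NN_eq_one.mp h1.symm)
  rw [hk_apply, hk0, zpow_zero, mul_one, show mk16 α = (u : R16) from hα] at this
  rw [this]; simp

/-- order package -/
lemma PP_ord (χ : MulChar R16 ℂ) (k : ℤ) (hi : hk χ k gI = 1) (t : ℝ) :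
    ∃ n : ℤ, -1 ≤ n ∧ (¬ (χ = 1 ∧ k = 0 ∧ t = 0) → 0 ≤ n) ∧
      ∃ L, Tendsto (fun s => PP (hk χ k) s + 4 * n / (s - (1 + t * I))) (𝓝[{s : ℂ | 1 < s.re}] (1 + t * I)) (𝓝 L) := by
  by_cases h : χ = 1 ∧ k = 0 ∧ t = 0
  · obtain ⟨n, h1, h2, h3⟩ := PP_order χ k hi ((17 : ℕ) : GaussianInt) (by rw [NN_nat]; norm_num)
      (by rw [show mk16 ((17 : ℕ) : GaussianInt) = 1 by rw [← mk16_eq_one 1]; congr 1]; simp) (1 + t * I) (by simp)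
    exact ⟨n, h1, fun h' => absurd h h', h3⟩
  · obtain ⟨α, a1, a2, a3⟩ := nontriv_exists χ k t hi h
    obtain ⟨n, h1, h2, h3⟩ := PP_order χ k hi α a1 a2 (1 + t * I) (by simp)
    exact ⟨n, h1, fun _ => h2 a3, h3⟩
end

noncomputable section
open Filter Topology MeasureTheory Set Complex
open scoped Classical

lemma mk16_eq {z w : GaussianInt} (h1 : ((z.re : ℤ) : ZMod 16) = (w.re : ℤ)) (h2 : ((z.im : ℤ) : ZMod 16) = (w.im : ℤ)) :
    mk16 z = mk16 w := by
  rw [ZMod.intCast_eq_intCast_iff_dvd_sub] at h1 h2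
  obtain ⟨r, hr⟩ := h1
  obtain ⟨s, hs⟩ := h2
  have : w = z + 16 * (⟨r, s⟩ : GaussianInt) := by
    ext
    · simp; push_cast at hr; linarith
    · simp; push_cast at hs; linarith
  rw [this, mk16_add]

lemma finite_check : ∀ a b : ZMod 16, a ^ 2 + b ^ 2 = 1 → ∃ (e : Fin 2) (j : Fin 4) (y : Fin 4),
    (a = (-1) ^ (e : ℕ) * 5 ^ (j : ℕ) * (1 - 4 * (y : ℕ) ^ 2) ∧ b = (-1) ^ (e : ℕ) * 5 ^ (j : ℕ) * (4 * (y : ℕ))) ∨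
    (b = (-1) ^ (e : ℕ) * 5 ^ (j : ℕ) * (1 - 4 * (y : ℕ) ^ 2) ∧ -a = (-1) ^ (e : ℕ) * 5 ^ (j : ℕ) * (4 * (y : ℕ))) := by
  decide

lemma prime_of_norm {z : GaussianInt} {p : ℕ} (hp : p.Prime) (h : z.norm = p) : Prime z := by
  rw [← irreducible_iff_prime]
  have hz : ¬ IsUnit z := by
    intro hu
    have := (Zsqrtd.norm_eq_one_iff' (by norm_num) z).mpr hu
    rw [h] at this
    exact hp.one_lt.ne' (by exact_mod_cast this)
  refine ⟨hz, fun x y hxy => ?_⟩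
  have h2 : x.norm.natAbs * y.norm.natAbs = p := by
    rw [← Int.natAbs_mul, ← Zsqrtd.norm_mul, ← hxy, h]; simp
  rcases (Nat.prime_mul_iff.mp (h2 ▸ hp)) with ⟨_, h3⟩ | ⟨_, h3⟩
  · right; exact Zsqrtd.norm_eq_one_iff.mp h3
  · left; exact Zsqrtd.norm_eq_one_iff.mp h3

lemma chi_sq {χ : MulChar R16 ℂ} (h : χ ^ 2 = 1) (a : R16) : χ a ^ 2 = 0 ∨ χ a ^ 2 = 1 := by
  by_cases ha : IsUnit a
  · right
    have h1 : (χ ^ 2) a = 1 := by rw [h, MulChar.one_apply ha]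
    rwa [MulChar.pow_apply' _ two_ne_zero] at h1
  · left; rw [χ.map_nonunit ha]; simp

lemma chi_pm {χ : MulChar R16 ℂ} (h : χ ^ 2 = 1) (a : R16) : χ a = 0 ∨ χ a = 1 ∨ χ a = -1 := by
  rcases chi_sq h a with h | h
  · left; exact pow_eq_zero_iff two_ne_zero |>.mp h
  · right; exact mul_self_eq_one_iff.mp (by rw [← pow_two]; exact h)

lemma exists_class {χ : MulChar R16 ℂ} (h : χ ^ 2 = 1) (hi : χ (mk16 gI) = 1) :
    ∃ c : ZMod 16, IsUnit c ∧ ∀ p : ℕ, p.Prime → (p : ZMod 16) = c → ∃ z : GP, NN z.1 = p ∧ χ (mk16 z.1) = 1 := by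
  have hm1 : χ (mk16 (-1)) = 1 := by rw [← gI_mul, map_mul, map_mul, hi, one_mul]
  have rep : ∀ p : ℕ, p.Prime → p % 4 ≠ 3 → ∃ a b : ℕ, a ^ 2 + b ^ 2 = p ∧ (⟨a, b⟩ : GaussianInt).norm = p ∧
      χ (mk16 ⟨a, b⟩) * χ (mk16 ⟨a, -b⟩) = χ (mk16 (p : GaussianInt)) ∧ (⟨a, -b⟩ : GaussianInt).norm = p := by
    intro p hp h4
    have := Fact.mk hp
    obtain ⟨a, b, hab⟩ := Nat.Prime.sq_add_sq h4
    refine ⟨a, b, hab, ?_, ?_, ?_⟩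
    · rw [Zsqrtd.norm_def, ← hab]; push_cast; ring
    · rw [← map_mul, ← map_mul, ← hab]
      congr 2
      push_cast
      ext <;> simp [pow_two] <;> ring
    · rw [Zsqrtd.norm_def, ← hab]; push_cast; ring
  have hpcast : ∀ p n : ℕ, (p : ZMod 16) = n → mk16 (p : GaussianInt) = mk16 (n : GaussianInt) := by
    intro p n hpn; apply mk16_eq <;> simp [hpn]
  by_cases h5 : χ (mk16 5) = 1
  · refine ⟨1, isUnit_one, fun p hp hpc => ?_⟩
    have hmod : p % 16 = 1 := by
      have := (ZMod.natCast_eq_natCast_iff p 1 16).mp (by simpa using hpc)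
      exact this
    obtain ⟨a, b, hab, hn, hmul, -⟩ := rep p hp (by omega)
    refine ⟨⟨⟨a, b⟩, prime_of_norm hp hn⟩, by rw [NN_eq, hn]; simp, ?_⟩
    have hne : χ (mk16 ⟨a, b⟩) ≠ 0 := by
      intro h0
      rw [h0, zero_mul, hpcast p 1 (by simpa using hpc)] at hmul
      simp at hmul
    obtain ⟨e, j, y, hh⟩ := finite_check (a : ZMod 16) (b : ZMod 16) (by rw [← hpc, ← hab]; push_cast; ring)
    have key : ∀ z : GaussianInt, ((z.re : ℤ) : ZMod 16) = (-1) ^ (e : ℕ) * 5 ^ (j : ℕ) * (1 - 4 * (y : ℕ) ^ 2) →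
        ((z.im : ℤ) : ZMod 16) = (-1) ^ (e : ℕ) * 5 ^ (j : ℕ) * (4 * (y : ℕ)) → χ (mk16 z) ≠ 0 → χ (mk16 z) = 1 := by
      intro z h1 h2 h3
      have e1 : mk16 z = mk16 ((-1) ^ (e : ℕ) * 5 ^ (j : ℕ) * (⟨1, 2 * (y : ℕ)⟩ : GaussianInt) ^ 2) := by
        have e2 : ((-1) ^ (e : ℕ) * 5 ^ (j : ℕ) * (⟨1, 2 * (y : ℕ)⟩ : GaussianInt) ^ 2) =
            ⟨((-1) ^ (e : ℕ) * 5 ^ (j : ℕ)) * (1 - 4 * (y : ℕ) ^ 2), ((-1) ^ (e : ℕ) * 5 ^ (j : ℕ)) * (4 * (y : ℕ))⟩ := by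
          have hc : (-1 : GaussianInt) ^ (e : ℕ) * 5 ^ (j : ℕ) = (((-1) ^ (e : ℕ) * 5 ^ (j : ℕ) : ℤ) : GaussianInt) := by
            push_cast; rfl
          rw [hc]
          generalize ((-1) ^ (e : ℕ) * 5 ^ (j : ℕ) : ℤ) = c
          ext <;> simp [pow_two, -mul_eq_mul_left_iff] <;> ring
        rw [e2]
        apply mk16_eq
        · rw [h1]; simp
        · rw [h2]; simp
      rw [e1, map_mul, map_mul, map_mul, map_mul, map_pow, map_pow, map_pow, map_pow, hm1, h5, one_pow, one_pow, one_mul, one_mul,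
        map_pow, map_pow] at h3 ⊢
      exact (chi_sq h _).resolve_left h3
    rcases hh with ⟨h1, h2⟩ | ⟨h1, h2⟩
    · exact key _ (by simpa using h1) (by simpa using h2) hne
    · have h3 : χ (mk16 ⟨b, -a⟩) = χ (mk16 ⟨a, b⟩) := by
        rw [← one_mul (χ (mk16 ⟨b, -a⟩)), ← hi, ← map_mul, ← map_mul]
        congr 2
        ext <;> simp [gI]
      rw [← h3] at hne ⊢
      exact key _ (by simpa using h1) (by simpa using h2) hne
  · have h5' : χ (mk16 5) = -1 := by
      rcases chi_pm h (mk16 5) with h0 | h0 | h0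
      · exfalso
        have : χ (mk16 5) * χ (mk16 13) = 1 := by
          rw [← map_mul, ← map_mul, ← map_one χ]; congr 1
          rw [← mk16_eq_one 4]; congr 1
        rw [h0, zero_mul] at this
        exact zero_ne_one this
      · exact absurd h0 h5
      · exact h0
    refine ⟨5, by decide, fun p hp hpc => ?_⟩
    have hmod : p % 16 = 5 := by
      have := (ZMod.natCast_eq_natCast_iff p 5 16).mp (by simpa using hpc)
      exact this
    obtain ⟨a, b, hab, hn, hmul, hn'⟩ := rep p hp (by omega)
    rw [hpcast p 5 (by simpa using hpc)] at hmul
    have hmul' : χ (mk16 ⟨a, b⟩) * χ (mk16 ⟨a, -b⟩) = -1 := by rw [hmul, ← h5']; rfl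
    rcases chi_pm h (mk16 ⟨a, b⟩) with h0 | h0 | h0
    · rw [h0] at hmul'; norm_num at hmul'
    · exact ⟨⟨⟨a, b⟩, prime_of_norm hp hn⟩, by rw [NN_eq, hn]; simp, h0⟩
    · refine ⟨⟨⟨a, -b⟩, prime_of_norm hp hn'⟩, by rw [NN_eq, hn']; simp, ?_⟩
      rw [h0] at hmul'
      linear_combination -hmul'
end

noncomputable section
open Filter Topology MeasureTheory Set Complex
open scoped Classical

lemma approach {F : ℂ → ℂ} {n : ℤ} {t : ℝ} {L : ℂ}
    (h : Tendsto (fun s => F s + 4 * n / (s - (1 + t * I))) (𝓝[{s : ℂ | 1 < s.re}] (1 + t * I)) (𝓝 L)) :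
    Tendsto (fun σ : ℝ => F (σ + t * I) + 4 * n / ((σ : ℂ) - 1)) (𝓝[>] 1) (𝓝 L) := by
  have hmap : Tendsto (fun σ : ℝ => (σ : ℂ) + t * I) (𝓝[>] 1) (𝓝[{s : ℂ | 1 < s.re}] (1 + t * I)) := by
    apply tendsto_nhdsWithin_iff.mpr
    constructor
    · have : Continuous (fun σ : ℝ => (σ : ℂ) + t * I) := by fun_prop
      have h2 := this.tendsto 1
      simp only [Complex.ofReal_one] at h2
      exact h2.mono_left nhdsWithin_le_nhds
    · filter_upwards [self_mem_nhdsWithin] with σ hσ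
      simpa using hσ
  refine (h.comp hmap).congr fun σ => ?_
  simp only [Function.comp]
  congr 2; ring

lemma approach_mul {F : ℂ → ℂ} {n : ℤ} {t : ℝ} {L : ℂ}
    (h : Tendsto (fun s => F s + 4 * n / (s - (1 + t * I))) (𝓝[{s : ℂ | 1 < s.re}] (1 + t * I)) (𝓝 L)) :
    Tendsto (fun σ : ℝ => (σ - 1) * (F (σ + t * I)).re) (𝓝[>] 1) (𝓝 (-4 * n)) := by
  have h1 := approach h
  have h2 : Tendsto (fun σ : ℝ => (σ - 1 : ℝ)) (𝓝[>] 1) (𝓝 0) := by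
    have : Continuous fun σ : ℝ => σ - 1 := by fun_prop
    have := this.tendsto 1
    rw [sub_self] at this
    exact this.mono_left nhdsWithin_le_nhds
  have h3 := (h2.mul ((Complex.continuous_re.tendsto _).comp h1)).sub_const (4 * n : ℝ)
  rw [zero_mul, zero_sub] at h3
  rw [neg_mul]
  refine h3.congr' ?_
  filter_upwards [self_mem_nhdsWithin] with σ hσ
  have hσ' : σ - 1 ≠ 0 := sub_ne_zero.mpr (ne_of_gt hσ)
  have : (4 * n / ((σ : ℂ) - 1)) = ((4 * n / (σ - 1) : ℝ) : ℂ) := by push_cast; rfl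
  simp only [Function.comp, this, Complex.add_re, Complex.ofReal_re]
  field_simp
  ring

lemma PP_hasSum_re (f : GaussianInt → ℂ) (hf : ∀ z, ‖f z‖ ≤ 1) (σ t : ℝ) (hs : 1 < σ) :
    HasSum (fun p : GP => Real.log (NN p.1) * NN p.1 ^ (-σ) * (f p.1 * (NN p.1 : ℂ) ^ (-(t * I))).re)
      (PP f (σ + t * I)).re := by
  have h := (PP_summable f hf (σ + t * I) (by simpa using hs)).hasSum
  have h2 := Complex.hasSum_re h
  refine h2.congr_fun fun p => ?_
  have hn : (NN p.1 : ℂ) ≠ 0 := by exact_mod_cast (NN_pos p.2.ne_zero).ne'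
  rw [neg_add, Complex.cpow_add _ _ hn, ← Complex.ofReal_neg, ← Complex.ofReal_cpow (NN_nonneg _)]
  rw [show f p.1 * (Real.log (NN p.1) : ℂ) * (((NN p.1 ^ (-σ) : ℝ) : ℂ) * (NN p.1 : ℂ) ^ (-(t * I))) =
    ((Real.log (NN p.1) * NN p.1 ^ (-σ) : ℝ) : ℂ) * (f p.1 * (NN p.1 : ℂ) ^ (-(t * I))) by push_cast; ring]
  rw [Complex.re_ofReal_mul]

lemma three_four_one (χ : MulChar R16 ℂ) (k : ℤ) (t σ : ℝ) (hσ : 1 < σ) :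
    0 ≤ 3 * (PP (hk 1 0) (σ + (0 : ℝ) * I)).re + 4 * (PP (hk χ k) (σ + t * I)).re
      + (PP (hk (χ ^ 2) (2 * k)) (σ + (2 * t : ℝ) * I)).re := by
  have h0 := PP_hasSum_re _ (hk_norm_le 1 0) σ 0 hσ
  have h1 := PP_hasSum_re _ (hk_norm_le χ k) σ t hσ
  have h2 := PP_hasSum_re _ (hk_norm_le (χ ^ 2) (2 * k)) σ (2 * t) hσ
  have h := ((h0.mul_left 3).add (h1.mul_left 4)).add h2
  refine h.nonneg fun p => ?_
  set w := hk χ k p.1 * (NN p.1 : ℂ) ^ (-(t * I)) with hw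
  have hc : 0 ≤ Real.log (NN p.1) * NN p.1 ^ (-σ) := mul_nonneg (GP_log_nonneg p) (Real.rpow_nonneg (NN_nonneg _) _)
  have hn : (NN p.1 : ℂ) ≠ 0 := by exact_mod_cast (NN_pos p.2.ne_zero).ne'
  have hw2 : hk (χ ^ 2) (2 * k) p.1 * (NN p.1 : ℂ) ^ (-(((2 * t : ℝ) : ℂ) * I)) = w ^ 2 := by
    rw [hw, mul_pow, hk_apply, hk_apply, MulChar.pow_apply' _ two_ne_zero, mul_pow, ← zpow_natCast (uu p.1 ^ k), ← zpow_mul,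
      ← Complex.cpow_nat_mul]
    congr 2
    · rw [mul_comm k]; rfl
    · push_cast; ring
  have hw0 : hk 1 0 p.1 * (NN p.1 : ℂ) ^ (-(((0 : ℝ) : ℂ) * I)) = (1 : MulChar R16 ℂ) (mk16 p.1) := by
    simp [hk_apply]
  rw [hw2, hw0]
  by_cases hu : IsUnit (mk16 p.1)
  · have hnw : ‖w‖ = 1 := by
      rw [hw, norm_mul, hk_apply, norm_mul, norm_zpow, uu_norm p.2.ne_zero, chi_norm_unit χ hu,
        Complex.norm_cpow_eq_rpow_re_of_pos (NN_pos p.2.ne_zero)]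
      simp
    have hre : w.re * w.re + w.im * w.im = 1 := by
      rw [← Complex.normSq_apply, Complex.normSq_eq_norm_sq, hnw, one_pow]
    have hw3 : (w ^ 2).re = w.re * w.re - w.im * w.im := by rw [pow_two, Complex.mul_re]
    rw [MulChar.one_apply hu, hw3, Complex.one_re]
    have : 3 * (Real.log (NN p.1) * NN p.1 ^ (-σ) * 1) + 4 * (Real.log (NN p.1) * NN p.1 ^ (-σ) * w.re) +
      Real.log (NN p.1) * NN p.1 ^ (-σ) * (w.re * w.re - w.im * w.im) =
      Real.log (NN p.1) * NN p.1 ^ (-σ) * (2 * (1 + w.re) ^ 2) := by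
        linear_combination (-(Real.log (NN p.1) * NN p.1 ^ (-σ))) * hre
    rw [this]; positivity
  · have : w = 0 := by rw [hw, hk_apply, χ.map_nonunit hu]; simp
    rw [this, MulChar.map_nonunit _ hu]; simp

lemma quad (χ : MulChar R16 ℂ) (h : χ ^ 2 = 1) (hi : χ (mk16 gI) = 1) {n0 n1 : ℤ} {L0 L1 : ℂ}
    (h0 : Tendsto (fun s => PP (hk 1 0) s + 4 * n0 / (s - (1 + (0 : ℝ) * I))) (𝓝[{s : ℂ | 1 < s.re}] (1 + (0 : ℝ) * I)) (𝓝 L0))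
    (h1 : Tendsto (fun s => PP (hk χ 0) s + 4 * n1 / (s - (1 + (0 : ℝ) * I))) (𝓝[{s : ℂ | 1 < s.re}] (1 + (0 : ℝ) * I)) (𝓝 L1)) :
    n0 + n1 < 0 := by
  by_contra hcon
  push Not at hcon
  have ht := (Complex.continuous_re.tendsto _).comp ((approach h0).add (approach h1))
  set c := (L0 + L1).re
  have hb := ht.eventually (Iio_mem_nhds (show c < c + 1 by linarith))
  set A : GP → ℝ := fun p => ((1 : MulChar R16 ℂ) (mk16 p.1)).re + (χ (mk16 p.1)).re with hA
  have hA0 : ∀ p, 0 ≤ A p := by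
    intro p
    by_cases hu : IsUnit (mk16 p.1)
    · rw [hA]; simp only [MulChar.one_apply hu, Complex.one_re]
      rcases chi_pm h (mk16 p.1) with e | e | e <;> rw [e] <;> norm_num
    · rw [hA]; simp only [MulChar.map_nonunit _ hu]; norm_num
  have hb2 : ∀ᶠ σ : ℝ in 𝓝[>] 1, HasSum (fun p : GP => A p * Real.log (NN p.1) * NN p.1 ^ (-σ))
      ((PP (hk 1 0) (σ + (0 : ℝ) * I)).re + (PP (hk χ 0) (σ + (0 : ℝ) * I)).re) := by
    filter_upwards [self_mem_nhdsWithin] with σ hσ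
    have := (PP_hasSum_re _ (hk_norm_le 1 0) σ 0 hσ).add (PP_hasSum_re _ (hk_norm_le χ 0) σ 0 hσ)
    refine this.congr_fun fun p => ?_
    simp [hk_apply, hA]; ring
  have hS : Summable fun p : GP => A p * Real.log (NN p.1) * NN p.1 ^ (-1 : ℝ) := by
    apply summable_of_sum_le (c := c + 1)
    · intro p
      exact mul_nonneg (mul_nonneg (hA0 p) (GP_log_nonneg p)) (Real.rpow_nonneg (NN_nonneg _) _)
    · intro F
      have hlim : Tendsto (fun σ : ℝ => ∑ p ∈ F, A p * Real.log (NN p.1) * NN p.1 ^ (-σ)) (𝓝[>] 1)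
          (𝓝 (∑ p ∈ F, A p * Real.log (NN p.1) * NN p.1 ^ (-1 : ℝ))) := by
        apply tendsto_finsetSum
        intro p _
        have : Continuous fun σ : ℝ => A p * Real.log (NN p.1) * NN p.1 ^ (-σ) := by
          have : Continuous fun σ : ℝ => NN p.1 ^ (-σ) :=
            continuous_const.rpow continuous_neg (fun σ => Or.inl (NN_pos p.2.ne_zero).ne')
          fun_prop
        exact (this.tendsto 1).mono_left nhdsWithin_le_nhds
      refine le_of_tendsto hlim ?_
      filter_upwards [hb, hb2, self_mem_nhdsWithin] with σ hb hb2 hσ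
      have hσ1 : (1 : ℝ) < σ := hσ
      refine (sum_le_hasSum F (fun p _ => ?_) hb2).trans ?_
      · exact mul_nonneg (mul_nonneg (hA0 p) (GP_log_nonneg p)) (Real.rpow_nonneg (NN_nonneg _) _)
      · have hb' : (PP (hk 1 0) (σ + (0 : ℝ) * I) + 4 * n0 / ((σ : ℂ) - 1) +
          (PP (hk χ 0) (σ + (0 : ℝ) * I) + 4 * n1 / ((σ : ℂ) - 1))).re < c + 1 := hb
        have e0 : (4 * n0 / ((σ : ℂ) - 1)) = ((4 * n0 / (σ - 1) : ℝ) : ℂ) := by push_cast; rfl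
        have e1 : (4 * n1 / ((σ : ℂ) - 1)) = ((4 * n1 / (σ - 1) : ℝ) : ℂ) := by push_cast; rfl
        rw [e0, e1] at hb'
        simp only [Complex.add_re, Complex.ofReal_re] at hb' ⊢
        have : 0 ≤ 4 * (n0 : ℝ) / (σ - 1) + 4 * n1 / (σ - 1) := by
          rw [← add_div, ← mul_add]
          have : (0 : ℝ) ≤ (n0 : ℝ) + n1 := by exact_mod_cast hcon
          exact div_nonneg (by linarith) (by linarith)
        linarith
  obtain ⟨c0, hc0, hcl⟩ := exists_class h hi
  apply ArithmeticFunction.vonMangoldt.not_summable_residueClass_prime_div hc0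
  set S : Set ℕ := {p : ℕ | p.Prime ∧ (p : ZMod 16) = c0} with hSdef
  choose z hz1 hz2 using fun p : S => hcl p.1 p.2.1 p.2.2
  have hinj : Function.Injective z := by
    intro p q hpq
    have := hz1 p
    rw [hpq, hz1 q] at this
    exact Subtype.ext (by exact_mod_cast this.symm)
  have hS2 := hS.comp_injective hinj
  have hS3 : Summable fun p : S => (fun n : ℕ => (if n.Prime then ArithmeticFunction.vonMangoldt.residueClass c0 n else 0) / n) p.1 := by
    refine (hS2.div_const 2).congr fun p => ?_
    have hu : IsUnit (mk16 (z p).1) := by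
      by_contra hu
      have := hz2 p
      rw [χ.map_nonunit hu] at this
      exact zero_ne_one this
    simp only [Function.comp, hA, MulChar.one_apply hu, hz2, hz1, Real.rpow_neg_one]
    rw [if_pos p.2.1]
    have : ArithmeticFunction.vonMangoldt.residueClass c0 p.1 = Real.log p.1 := by
      rw [ArithmeticFunction.vonMangoldt.residueClass, Set.indicator_of_mem (show p.1 ∈ {n : ℕ | (n : ZMod 16) = c0} from p.2.2),
        ArithmeticFunction.vonMangoldt_apply_prime p.2.1]
    rw [this, Complex.one_re]; ring
  have h4 := (summable_subtype_iff_indicator (s := S) (f := fun n : ℕ => (if n.Prime then ArithmeticFunction.vonMangoldt.residueClass c0 n else 0) / n)).mp hS3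
  refine h4.congr fun n => ?_
  by_cases hn : n ∈ S
  · rw [Set.indicator_of_mem hn]
  · rw [Set.indicator_of_notMem hn]
    by_cases hp : n.Prime
    · rw [if_pos hp, ArithmeticFunction.vonMangoldt.residueClass, Set.indicator_of_notMem, zero_div]
      intro h5; exact hn ⟨hp, h5⟩
    · rw [if_neg hp, zero_div]
end

noncomputable section
open Filter Topology MeasureTheory Set Complex
open scoped Classical

lemma hk_sq_gI {χ : MulChar R16 ℂ} {k : ℤ} (hi : hk χ k gI = 1) : hk (χ ^ 2) (2 * k) gI = 1 := by
  have : hk (χ ^ 2) (2 * k) gI = (hk χ k gI) ^ 2 := by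
    rw [hk_apply, hk_apply, MulChar.pow_apply' _ two_ne_zero, mul_pow, ← zpow_natCast (uu gI ^ k), ← zpow_mul, mul_comm k]
    rfl
  rw [this, hi, one_pow]

lemma hk_one_gI : hk 1 0 gI = 1 := by
  rw [hk_apply, MulChar.one_apply (gI_unit.map mk16)]; simp

lemma PP_ord_eq (χ : MulChar R16 ℂ) (k : ℤ) (hi : hk χ k gI = 1) (t : ℝ) :
    ∃ L, Tendsto (fun s => PP (hk χ k) s + 4 * ((if χ = 1 ∧ k = 0 ∧ t = 0 then -1 else 0 : ℤ) : ℂ) / (s - (1 + t * I)))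
      (𝓝[{s : ℂ | 1 < s.re}] (1 + t * I)) (𝓝 L) := by
  obtain ⟨n, hn1, hn2, L, hL⟩ := PP_ord χ k hi t
  obtain ⟨n0, hn01, -, L0, hL0⟩ := PP_ord 1 0 hk_one_gI 0
  suffices hn : n = if χ = 1 ∧ k = 0 ∧ t = 0 then -1 else 0 by
    rw [← hn]; exact ⟨L, hL⟩
  by_cases hq : χ ^ 2 = 1 ∧ k = 0 ∧ t = 0
  · obtain ⟨hq, rfl, rfl⟩ := hq
    have hlt := quad χ hq (by simpa [hk_apply] using hi) hL0 hL
    by_cases h1 : χ = 1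
    · subst h1
      have := quad 1 hq (by simpa [hk_apply] using hi) hL hL
      simp; omega
    · have := hn2 (by tauto)
      simp [h1]; omega
  · have hne : ¬ (χ = 1 ∧ k = 0 ∧ t = 0) := by
      rintro ⟨rfl, hk0, ht0⟩; exact hq ⟨one_pow 2, hk0, ht0⟩
    rw [if_neg hne]
    have hn0 := hn2 hne
    obtain ⟨n2, -, hn2', L2, hL2⟩ := PP_ord (χ ^ 2) (2 * k) (hk_sq_gI hi) (2 * t)
    have hn2'' := hn2' (by
      rintro ⟨a, b, c⟩; exact hq ⟨a, by omega, by linarith⟩)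
    have ht := (((approach_mul hL0).const_mul 3).add ((approach_mul hL).const_mul 4)).add (approach_mul hL2)
    have : (0 : ℝ) ≤ 3 * (-4 * n0) + 4 * (-4 * n) + -4 * n2 := by
      refine ge_of_tendsto ht ?_
      filter_upwards [self_mem_nhdsWithin] with σ hσ
      have hσ1 : (1 : ℝ) < σ := hσ
      have := mul_nonneg (sub_pos.mpr hσ1).le (three_four_one χ k t σ hσ1)
      linarith
    have : (0 : ℤ) ≤ 3 * (-4 * n0) + 4 * (-4 * n) + -4 * n2 := by exact_mod_cast this
    omega

lemma PP_rot (χ : MulChar R16 ℂ) (k : ℤ) (hi : hk χ k gI ≠ 1) (s : ℂ) : PP (hk χ k) s = 0 := by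
  let e : GP ≃ GP :=
    { toFun := fun p => ⟨gI * p.1, (Associated.prime_iff ((associated_isUnit_mul_left_iff gI_unit).mpr (Associated.refl _))).mpr p.2⟩
      invFun := fun p => ⟨-gI * p.1, (Associated.prime_iff ((associated_isUnit_mul_left_iff gI_unit.neg).mpr (Associated.refl _))).mpr p.2⟩
      left_inv := by
        intro p; apply Subtype.ext; show -gI * (gI * p.1) = p.1
        rw [← mul_assoc, neg_mul, gI_mul]; ring
      right_inv := by
        intro p; apply Subtype.ext; show gI * (-gI * p.1) = p.1
        rw [← mul_assoc, mul_neg, gI_mul]; ring }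
  have h1 : PP (hk χ k) s = hk χ k gI * PP (hk χ k) s := by
    conv_lhs => rw [PP, DS, ← e.tsum_eq]
    rw [PP, DS, ← tsum_mul_left]
    refine tsum_congr fun p => ?_
    show hk χ k (gI * p.1) * (Real.log (NN (gI * p.1)) : ℂ) * (NN (gI * p.1) : ℂ) ^ (-s) = _
    rw [map_mul, NN_mul, NN_gI, one_mul]; ring
  have h2 : (1 - hk χ k gI) * PP (hk χ k) s = 0 := by linear_combination h1
  rcases mul_eq_zero.mp h2 with h | h
  · exact absurd (sub_eq_zero.mp h).symm hi
  · exact h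

lemma PP_lim (χ : MulChar R16 ℂ) (k : ℤ) (s₀ : ℂ) (hs₀ : 1 ≤ s₀.re) :
    ∃ L, Tendsto (fun s => PP (hk χ k) s - (if χ = 1 ∧ k = 0 then 4 else 0) / (s - 1))
      (𝓝[{s : ℂ | 1 < s.re}] s₀) (𝓝 L) := by
  have hc : ∀ c : ℂ, s₀ ≠ 1 → Tendsto (fun s : ℂ => c / (s - 1)) (𝓝[{s : ℂ | 1 < s.re}] s₀) (𝓝 (c / (s₀ - 1))) := by
    intro c h
    have : ContinuousAt (fun s : ℂ => c / (s - 1)) s₀ :=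
      continuousAt_const.div (by fun_prop) (sub_ne_zero.mpr h)
    exact this.tendsto.mono_left nhdsWithin_le_nhds
  rcases hs₀.lt_or_eq with h | h
  · have h1 : s₀ ≠ 1 := by rintro rfl; simp at h
    exact ⟨_, ((PP_cont _ (hk_norm_le χ k) s₀ h).tendsto.mono_left nhdsWithin_le_nhds).sub (hc _ h1)⟩
  · by_cases hi : hk χ k gI = 1
    · have hs : s₀ = 1 + (s₀.im : ℂ) * I := by apply Complex.ext <;> simp [← h]
      obtain ⟨L, hL⟩ := PP_ord_eq χ k hi s₀.im
      rw [← hs] at hL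
      by_cases ht : s₀.im = 0
      · have h1 : s₀ = 1 := by rw [hs, ht]; simp
        refine ⟨L, hL.congr fun s => ?_⟩
        simp only [h1, Complex.one_im, and_true]
        split_ifs <;> push_cast <;> ring
      · have h1 : s₀ ≠ 1 := by rintro rfl; simp at ht
        refine ⟨_, (hL.sub (hc (if χ = 1 ∧ k = 0 then 4 else 0) h1)).congr fun s => ?_⟩
        simp [ht]
    · have h0 : ¬ (χ = 1 ∧ k = 0) := by
        rintro ⟨rfl, rfl⟩; exact hi hk_one_gI
      refine ⟨0, tendsto_const_nhds.congr fun s => ?_⟩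
      rw [PP_rot χ k hi, if_neg h0]; simp
end

noncomputable section
open Filter Topology MeasureTheory Set Complex
open scoped Classical

instance fintypeChar : Fintype (MulChar R16 ℂ) := Fintype.ofFinite _

def MM : ℝ := (Fintype.card (MulChar R16 ℂ) : ℝ)

lemma MM_pos : 0 < MM := by
  unfold MM
  exact_mod_cast Fintype.card_pos

lemma sum_chi {b : R16} (hb : b ≠ 1) : ∑ χ : MulChar R16 ℂ, χ b = 0 := by
  obtain ⟨χ, hχ⟩ := MulChar.exists_apply_ne_one_of_hasEnoughRootsOfUnity R16 ℂ hb
  refine eq_zero_of_mul_eq_self_left hχ ?_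
  simp only [Finset.mul_sum, ← MulChar.mul_apply]
  exact Fintype.sum_bijective _ (Group.mulLeft_bijective χ) _ _ fun χ' => rfl

lemma sum_chi_unit (a : R16ˣ) (b : R16) :
    ∑ χ : MulChar R16 ℂ, χ (a⁻¹ : R16ˣ) * χ b = if b = a then (MM : ℂ) else 0 := by
  split_ifs with h
  · subst h
    simp only [← map_mul, Units.inv_mul, map_one]
    simp [MM]
  · simp only [← map_mul]
    apply sum_chi
    intro h2
    apply h
    rw [← mul_one (a : R16), ← h2, Units.mul_inv_cancel_left]

/-- class-restricted angular weight -/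
def cls (a : R16ˣ) (k : ℤ) (z : GaussianInt) : ℂ := (if mk16 z = a then 1 else 0) * uu z ^ k

lemma cls_eq (a : R16ˣ) (k : ℤ) (z : GaussianInt) :
    cls a k z = (1 / (MM : ℂ)) * ∑ χ : MulChar R16 ℂ, χ (a⁻¹ : R16ˣ) * hk χ k z := by
  have hM : (MM : ℂ) ≠ 0 := by exact_mod_cast MM_pos.ne'
  simp only [hk_apply, ← mul_assoc]
  rw [← Finset.sum_mul, sum_chi_unit, cls, ← mul_assoc]
  congr 1
  split_ifs <;> field_simp <;> simp

lemma uu_norm_le (z : GaussianInt) (k : ℤ) : z ≠ 0 → ‖uu z ^ k‖ = 1 := by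
  intro hz; rw [norm_zpow, uu_norm hz, one_zpow]

lemma PP_cls (a : R16ˣ) (k : ℤ) (s : ℂ) (hs : 1 < s.re) :
    PP (cls a k) s = (1 / (MM : ℂ)) * ∑ χ : MulChar R16 ℂ, χ (a⁻¹ : R16ˣ) * PP (hk χ k) s := by
  have h : ∀ χ ∈ (Finset.univ : Finset (MulChar R16 ℂ)), Summable fun p : GP =>
      χ (a⁻¹ : R16ˣ) * (hk χ k p.1 * Real.log (NN p.1) * (NN p.1 : ℂ) ^ (-s)) := fun χ _ =>
    (PP_summable (hk χ k) (hk_norm_le χ k) s hs).mul_left _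
  simp only [PP, DS, ← tsum_mul_left]
  rw [← Summable.tsum_finsetSum h, ← tsum_mul_left]
  refine tsum_congr fun p => ?_
  rw [cls_eq, mul_assoc, mul_assoc, Finset.sum_mul]
  congr 1
  refine Finset.sum_congr rfl fun χ _ => ?_
  ring

def cc (k : ℤ) : ℝ := if k = 0 then 4 / MM else 0

lemma PP_cls_lim (a : R16ˣ) (k : ℤ) (s₀ : ℂ) (hs₀ : 1 ≤ s₀.re) :
    ∃ L, Tendsto (fun s => PP (cls a k) s - (cc k : ℂ) / (s - 1))
      (𝓝[{s : ℂ | 1 < s.re}] s₀) (𝓝 L) := by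
  choose L hL using fun χ : MulChar R16 ℂ => PP_lim χ k s₀ hs₀
  refine ⟨(1 / (MM : ℂ)) * ∑ χ : MulChar R16 ℂ, χ (a⁻¹ : R16ˣ) * L χ, ?_⟩
  have h := (tendsto_finsetSum (Finset.univ : Finset (MulChar R16 ℂ))
    (fun χ _ => (hL χ).const_mul (χ (a⁻¹ : R16ˣ)))).const_mul (1 / (MM : ℂ))
  refine h.congr' ?_
  filter_upwards [self_mem_nhdsWithin] with s hs
  rw [PP_cls a k s hs]
  simp only [mul_sub, Finset.sum_sub_distrib]
  congr 1
  rw [Finset.sum_eq_single (1 : MulChar R16 ℂ)]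
  · rw [MulChar.one_apply_coe, cc]
    split_ifs with h1 h2 h2 <;> simp_all
    ring
  · intro χ _ hχ; simp [hχ]
  · simp

lemma cls_norm (a : R16ˣ) (k : ℤ) (p : GP) : ‖cls a k p.1‖ ≤ 1 := by
  rw [cls, norm_mul, uu_norm_le _ _ p.2.ne_zero, mul_one]; split_ifs <;> simp

end

noncomputable section
open Filter Topology MeasureTheory Set Complex
open scoped Classical

lemma cls_norm' (a : R16ˣ) (k : ℤ) (z : GaussianInt) : ‖cls a k z‖ ≤ 1 := by
  by_cases hz : z = 0
  · rw [cls, hz, norm_mul]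
    have : ‖uu 0 ^ k‖ ≤ 1 := by
      by_cases hk : k = 0
      · simp [hk]
      · simp [uu, zero_zpow _ hk]
    have h2 : ‖(if mk16 0 = a then (1 : ℂ) else 0)‖ ≤ 1 := by split_ifs <;> simp
    exact mul_le_one₀ h2 (norm_nonneg _) this
  · exact (by rw [cls, norm_mul, uu_norm_le _ _ hz, mul_one]; split_ifs <;> simp)

lemma ball_finite (X : ℝ) : {z : GaussianInt | NN z ≤ X}.Finite := by
  obtain ⟨n, hn⟩ := exists_nat_ge X
  have : {z : GaussianInt | NN z ≤ X} ⊆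
      (fun q : ℤ × ℤ => (⟨q.1, q.2⟩ : GaussianInt)) '' (Set.Icc (-(n:ℤ)) n ×ˢ Set.Icc (-(n:ℤ)) n) := by
    rintro ⟨x, y⟩ h
    simp only [mem_setOf_eq, NN_mk] at h
    have h2 : x ^ 2 + y ^ 2 ≤ (n : ℤ) := by exact_mod_cast h.trans hn
    refine ⟨(x, y), ⟨⟨?_, ?_⟩, ⟨?_, ?_⟩⟩, rfl⟩ <;> nlinarith [sq_nonneg x, sq_nonneg y]
  exact (((Set.finite_Icc _ _).prod (Set.finite_Icc _ _)).image _).subset this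

lemma BX_finite (X : ℝ) : {p : GP | NN p.1 ≤ X}.Finite :=
  Set.Finite.preimage Subtype.val_injective.injOn (ball_finite X)

def BX (X : ℝ) : Finset GP := (BX_finite X).toFinset

lemma mem_BX {X : ℝ} {p : GP} : p ∈ BX X ↔ NN p.1 ≤ X := by simp [BX]

def TT' (f : GaussianInt → ℂ) (m X : ℝ) : ℂ :=
  ((X ^ (-(m + 1)) : ℝ) : ℂ) * ∑ p ∈ BX X, f p.1 * ((Real.log (NN p.1) * NN p.1 ^ m : ℝ) : ℂ)

lemma wiener_pos (f : GaussianInt → ℝ) (hf : ∀ z, 0 ≤ f z) (hf1 : ∀ z, f z ≤ 1) (c : ℝ) (hc : 0 ≤ c)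
    (h : ∀ s₀ : ℂ, 1 ≤ s₀.re → ∃ L, Tendsto (fun s : ℂ => PP (fun z => (f z : ℂ)) s - c / (s - 1))
      (𝓝[{s : ℂ | 1 < s.re}] s₀) (𝓝 L)) (m : ℝ) (hm : 0 ≤ m) :
    Tendsto (fun X => TT' (fun z => (f z : ℂ)) m X) atTop (𝓝 ((c / (m + 1) : ℝ) : ℂ)) := by
  have h1 := wiener_ikehara (fun p : GP => f p.1 * Real.log (NN p.1)) (fun p : GP => NN p.1)
    (fun p => mul_nonneg (hf _) (GP_log_nonneg p)) (fun p => by linarith [GP_two p])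
    (fun σ hσ => by
      refine Summable.of_nonneg_of_le (fun p => ?_) (fun p => ?_) (GP_summable σ hσ)
      · exact mul_nonneg (mul_nonneg (hf _) (GP_log_nonneg p)) (Real.rpow_nonneg (NN_nonneg _) _)
      · exact mul_le_mul_of_nonneg_right (by nlinarith [hf1 p.1, GP_log_nonneg p]) (Real.rpow_nonneg (NN_nonneg _) _))
    c hc (by
      intro s₀ hs₀
      obtain ⟨L, hL⟩ := h s₀ hs₀
      refine ⟨L, hL.congr fun s => ?_⟩
      simp only [PP, DS]; push_cast; rfl) m hm
  refine ((Complex.continuous_ofReal.tendsto _).comp h1).congr fun X => ?_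
  simp only [Function.comp, TT']
  rw [tsum_eq_sum (s := BX X) (fun p hp => by rw [mem_BX] at hp; simp [hp])]
  push_cast
  congr 1
  refine Finset.sum_congr rfl fun p hp => ?_
  rw [if_pos (mem_BX.mp hp)]; push_cast; ring

lemma TT'_add (f g : GaussianInt → ℂ) (α β : ℂ) (m X : ℝ) :
    TT' (fun z => α * f z + β * g z) m X = α * TT' f m X + β * TT' g m X := by
  simp only [TT', Finset.mul_sum, ← Finset.sum_add_distrib]
  refine Finset.sum_congr rfl fun p _ => by ring

lemma PP_add (f g : GaussianInt → ℂ) (hf : ∀ z, ‖f z‖ ≤ 1) (hg : ∀ z, ‖g z‖ ≤ 1) (α β : ℂ) (s : ℂ) (hs : 1 < s.re) :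
    PP (fun z => α * f z + β * g z) s = α * PP f s + β * PP g s := by
  simp only [PP, DS, ← tsum_mul_left]
  rw [← Summable.tsum_add ((PP_summable f hf s hs).mul_left _) ((PP_summable g hg s hs).mul_left _)]
  refine tsum_congr fun p => by ring

/-- real weights -/
lemma cls_real (a : R16ˣ) (k : ℤ) (g : GaussianInt → ℝ) (hg : ∀ z, |g z| ≤ 1) (α β : ℂ)
    (h : ∀ z, (if mk16 z = a then (1:ℂ) else 0) * g z = α * cls a k z + β * cls a (-k) z)
    (c : ℝ) (hc : (c : ℂ) = α * cc k + β * cc (-k)) (m : ℝ) (hm : 0 ≤ m)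
    (hcp : 0 ≤ cc 0 + c) :
    Tendsto (fun X => α * TT' (cls a k) m X + β * TT' (cls a (-k)) m X) atTop (𝓝 ((c / (m + 1) : ℝ) : ℂ)) := by
  have e0 : ∀ z, ((if mk16 z = a then (1:ℝ) else 0 : ℝ) : ℂ) = cls a 0 z := by
    intro z; simp only [cls, zpow_zero, mul_one]; split_ifs <;> simp
  have h0 := wiener_pos (fun z => if mk16 z = a then (1:ℝ) else 0) (fun z => by positivity)
    (fun z => by split_ifs <;> norm_num) (cc 0) (by simp [cc]; have := MM_pos; positivity)
    (by simp only [e0]; exact PP_cls_lim a 0) m hm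
  have e1 : ∀ z, (((if mk16 z = a then (1:ℝ) else 0) * ((1 + g z) / 2) : ℝ) : ℂ) =
      (1/2) * cls a 0 z + 1 * ((α / 2) * cls a k z + (β / 2) * cls a (-k) z) := by
    intro z
    rw [← e0]
    have := h z
    have e : ((if mk16 z = a then (1:ℝ) else 0 : ℝ) : ℂ) = (if mk16 z = a then (1:ℂ) else 0) := by
      split_ifs <;> simp
    push_cast
    rw [e]
    linear_combination (1/2) * this
  have h1 := wiener_pos (fun z => (if mk16 z = a then (1:ℝ) else 0) * ((1 + g z) / 2))
    (fun z => mul_nonneg (by positivity) (by linarith [(abs_le.mp (hg z)).1]))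
    (fun z => mul_le_one₀ (by split_ifs <;> norm_num) (by linarith [(abs_le.mp (hg z)).1]) (by linarith [(abs_le.mp (hg z)).2]))
    ((cc 0 + c) / 2) (by linarith)
    (by
      intro s₀ hs₀
      obtain ⟨L0, hL0⟩ := PP_cls_lim a 0 s₀ hs₀
      obtain ⟨L1, hL1⟩ := PP_cls_lim a k s₀ hs₀
      obtain ⟨L2, hL2⟩ := PP_cls_lim a (-k) s₀ hs₀
      refine ⟨_, ((hL0.const_mul (1/2)).add ((hL1.const_mul (α/2)).add (hL2.const_mul (β/2)))).congr' ?_⟩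
      filter_upwards [self_mem_nhdsWithin] with s hs
      have e2 : PP (fun z => (((if mk16 z = a then (1:ℝ) else 0) * ((1 + g z) / 2) : ℝ) : ℂ)) s =
          (1/2) * PP (cls a 0) s + ((α / 2) * PP (cls a k) s + (β / 2) * PP (cls a (-k)) s) := by
        simp only [e1, PP, DS, ← tsum_mul_left]
        have s0 := PP_summable _ (cls_norm' a 0) s hs
        have s1 := PP_summable _ (cls_norm' a k) s hs
        have s2 := PP_summable _ (cls_norm' a (-k)) s hs
        rw [← Summable.tsum_add (s1.mul_left _) (s2.mul_left _), ← Summable.tsum_add (s0.mul_left _) ((s1.mul_left _).add (s2.mul_left _))]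
        refine tsum_congr fun p => by ring
      rw [e2]
      push_cast
      rw [hc]; ring) m hm
  simp only [e0] at h0
  simp only [e1] at h1
  have := (h1.const_mul 2).sub h0
  have e3 : (2 * (((cc 0 + c) / 2 / (m + 1) : ℝ) : ℂ) - ((cc 0 / (m + 1) : ℝ) : ℂ)) = ((c / (m + 1) : ℝ) : ℂ) := by
    push_cast; ring
  rw [e3] at this
  refine this.congr fun X => ?_
  rw [TT'_add, TT'_add]
  ring

lemma cc_neg (k : ℤ) : cc (-k) = cc k := by simp [cc]
lemma cc_nonneg (k : ℤ) : 0 ≤ cc k := by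
  have := MM_pos
  unfold cc; split_ifs <;> positivity

lemma uu_conj (z : GaussianInt) (k : ℤ) : uu z ^ (-k) = (starRingEnd ℂ) (uu z ^ k) := by
  by_cases hz : z = 0
  · by_cases hk : k = 0
    · simp [hk]
    · simp [hz, uu, zero_zpow _ hk, hk]
  · rw [zpow_neg, Complex.inv_def, Complex.normSq_eq_norm_sq, uu_norm_le _ _ hz]; simp

lemma cls_lim (a : R16ˣ) (k : ℤ) (m : ℝ) (hm : 0 ≤ m) :
    Tendsto (fun X => TT' (cls a k) m X) atTop (𝓝 ((cc k / (m + 1) : ℝ) : ℂ)) := by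
  have hu : ∀ z, ‖uu z ^ k‖ ≤ 1 := by
    intro z
    by_cases hz : z = 0
    · by_cases hk : k = 0
      · simp [hk]
      · simp [hz, uu, zero_zpow _ hk]
    · exact (uu_norm_le _ _ hz).le
  have h1 := cls_real a k (fun z => (uu z ^ k).re) (fun z => (Complex.abs_re_le_norm _).trans (hu z)) (1/2) (1/2)
    (by intro z; rw [Complex.re_eq_add_conj, cls, cls, uu_conj]; ring) (cc k) (by rw [cc_neg]; ring) m hm
    (add_nonneg (cc_nonneg _) (cc_nonneg _))
  have h2 := cls_real a k (fun z => (uu z ^ k).im) (fun z => (Complex.abs_im_le_norm _).trans (hu z)) (1/(2*I)) (-1/(2*I))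
    (by intro z; rw [Complex.im_eq_sub_conj, cls, cls, uu_conj]; ring) 0 (by rw [cc_neg]; push_cast; ring) m hm
    (by rw [add_zero]; exact cc_nonneg _)
  have := h1.add (h2.const_mul I)
  simp only [zero_div, Complex.ofReal_zero, mul_zero, add_zero] at this
  refine this.congr fun X => ?_
  have : I ≠ 0 := I_ne_zero
  field_simp
  ring
end

noncomputable section
open Filter Topology MeasureTheory Set Complex
open scoped Classical

def SS (a : R16ˣ) (N : ℝ) (Φ : ℂ → ℂ) : ℂ :=
  ((N ^ 2)⁻¹ : ℝ) * ∑ p ∈ BX (4 * N ^ 2), (if mk16 p.1 = a then 1 else 0) * (Real.log (NN p.1) : ℂ) *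
    Φ (GaussianInt.toComplex p.1 / N)

lemma toComplex_uu (z : GaussianInt) : GaussianInt.toComplex z = uu z * (‖GaussianInt.toComplex z‖ : ℂ) := by
  by_cases h : ‖GaussianInt.toComplex z‖ = 0
  · rw [h]; simpa using h
  · rw [uu, div_mul_cancel₀]; exact_mod_cast h

lemma NN_sqrt (z : GaussianInt) (n : ℕ) : NN z ^ ((n : ℝ) / 2) = ‖GaussianInt.toComplex z‖ ^ n := by
  rw [NN_sq, ← Real.rpow_natCast, ← Real.rpow_mul (norm_nonneg _), ← Real.rpow_natCast]
  congr 1; push_cast; ring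

lemma SS_mono (a : R16ˣ) (j l : ℕ) (N : ℝ) (hN : 0 < N) :
    SS a N (fun w => w ^ j * (starRingEnd ℂ) w ^ l) =
      ((4 ^ (((j + l : ℕ) : ℝ) / 2 + 1) : ℝ) : ℂ) * TT' (cls a ((j : ℤ) - l)) (((j + l : ℕ) : ℝ) / 2) (4 * N ^ 2) := by
  have hN' : (N : ℂ) ≠ 0 := by exact_mod_cast hN.ne'
  have e : (4 * N ^ 2 : ℝ) ^ (-(((j + l : ℕ) : ℝ) / 2 + 1)) = (4 ^ (((j + l : ℕ) : ℝ) / 2 + 1))⁻¹ * ((N ^ 2)⁻¹ * (N ^ (j + l))⁻¹) := by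
    rw [Real.rpow_neg (by positivity), Real.mul_rpow (by norm_num) (by positivity), mul_inv]
    congr 1
    rw [← mul_inv, ← Real.rpow_natCast N 2, ← Real.rpow_mul hN.le, ← Real.rpow_natCast N (j+l), ← Real.rpow_add hN]
    congr 2; push_cast; ring
  rw [SS, TT', e]
  have h4 : (4 ^ (((j + l : ℕ) : ℝ) / 2 + 1) : ℝ) ≠ 0 := by positivity
  have h4' : (((4 ^ (((j + l : ℕ) : ℝ) / 2 + 1) : ℝ)) : ℂ) ≠ 0 := by exact_mod_cast h4
  generalize (4 ^ (((j + l : ℕ) : ℝ) / 2 + 1) : ℝ) = A at h4' ⊢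
  rw [← mul_assoc, Complex.ofReal_mul, ← mul_assoc, Complex.ofReal_inv A, mul_inv_cancel₀ h4', one_mul,
    Complex.ofReal_mul, mul_assoc, Finset.mul_sum _ _ (((N ^ (j + l))⁻¹ : ℝ) : ℂ)]
  congr 1
  refine Finset.sum_congr rfl fun p _ => ?_
  have hu : uu p.1 ≠ 0 := uu_ne p.2.ne_zero
  have hc : (starRingEnd ℂ) (uu p.1) = (uu p.1)⁻¹ := by
    have := uu_conj p.1 1
    simpa using this.symm
  rw [cls, NN_sqrt]
  have ht := toComplex_uu p.1
  generalize ‖GaussianInt.toComplex p.1‖ = r at ht ⊢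
  rw [ht]
  simp only [map_div₀, map_mul, Complex.conj_ofReal, hc]
  rw [zpow_sub₀ hu]
  push_cast
  rw [div_pow, div_pow, mul_pow, mul_pow, zpow_natCast, zpow_natCast, inv_pow]
  field_simp
  ring
lemma SS_add (a : R16ˣ) (N : ℝ) (f g : ℂ → ℂ) : SS a N (fun w => f w + g w) = SS a N f + SS a N g := by
  simp only [SS, ← mul_add, ← Finset.sum_add_distrib]

lemma SS_smul (a : R16ˣ) (N : ℝ) (c : ℂ) (f : ℂ → ℂ) : SS a N (fun w => c * f w) = c * SS a N f := by
  simp only [SS, Finset.mul_sum]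
  refine Finset.sum_congr rfl fun p _ => by ring

def ev (q : MvPolynomial (Fin 2) ℂ) (w : ℂ) : ℂ := MvPolynomial.eval ![w, (starRingEnd ℂ) w] q

lemma SS_poly (q : MvPolynomial (Fin 2) ℂ) : ∃ L : ℂ, ∀ a, Tendsto (fun N => SS a N (ev q)) atTop (𝓝 L) := by
  induction q using MvPolynomial.induction_on' with
  | monomial u c =>
    have e : ∀ N, ∀ a, SS a N (ev (MvPolynomial.monomial u c)) = c * SS a N (fun w => w ^ (u 0) * (starRingEnd ℂ) w ^ (u 1)) := by
      intro N a
      rw [← SS_smul]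
      congr 1
      ext w
      simp [ev, MvPolynomial.eval_monomial, Finsupp.prod_fintype]
    refine ⟨c * ((4 ^ (((u 0 + u 1 : ℕ) : ℝ) / 2 + 1) : ℝ) : ℂ) *
      ((cc ((u 0 : ℤ) - u 1) / (((u 0 + u 1 : ℕ) : ℝ) / 2 + 1) : ℝ) : ℂ), fun a => ?_⟩
    have hX : Tendsto (fun N : ℝ => 4 * N ^ 2) atTop atTop :=
      (tendsto_pow_atTop two_ne_zero).const_mul_atTop (by norm_num)
    have h := ((cls_lim a ((u 0 : ℤ) - u 1) (((u 0 + u 1 : ℕ) : ℝ) / 2) (by positivity)).comp hX).const_mul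
      (c * ((4 ^ (((u 0 + u 1 : ℕ) : ℝ) / 2 + 1) : ℝ) : ℂ))
    refine h.congr' ?_
    filter_upwards [eventually_gt_atTop 0] with N hN
    rw [e, SS_mono a _ _ N hN, mul_assoc]; rfl
  | add p q hp hq =>
    obtain ⟨L1, h1⟩ := hp
    obtain ⟨L2, h2⟩ := hq
    refine ⟨L1 + L2, fun a => ((h1 a).add (h2 a)).congr fun N => ?_⟩
    rw [← SS_add]; congr 1; ext w; simp [ev]

lemma poly_approx (Φ : ℂ → ℂ) (hΦ : Continuous Φ) (ε : ℝ) (hε : 0 < ε) :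
    ∃ q, ∀ w : ℂ, ‖w‖ ≤ 2 → ‖Φ w - ev q w‖ ≤ ε := by
  let s : Set ℂ := Metric.closedBall 0 2
  have : CompactSpace s := isCompact_iff_compactSpace.mp (isCompact_closedBall 0 2)
  let F : C(s, ℂ) := ⟨fun w => Φ w, by fun_prop⟩
  have h := polynomialFunctions.starClosure_topologicalClosure s ▸ StarSubalgebra.mem_top (R := ℂ) (x := F)
  rw [← SetLike.mem_coe, StarSubalgebra.topologicalClosure_coe] at h
  obtain ⟨G, hG, hd⟩ := Metric.mem_closure_iff.mp h ε hε
  rw [SetLike.mem_coe, polynomialFunctions.starClosure_eq_adjoin_X] at hG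
  have key : ∃ q, ∀ w : s, G w = ev q w := by
    clear hd
    induction hG using StarAlgebra.adjoin_induction with
    | mem x hx =>
      refine ⟨MvPolynomial.X 0, fun w => ?_⟩
      rw [Set.mem_singleton_iff] at hx
      subst hx
      simp [ev]
    | algebraMap r => exact ⟨MvPolynomial.C r, fun w => by simp [ev]⟩
    | add x y _ _ hx hy =>
      obtain ⟨p, hp⟩ := hx
      obtain ⟨q, hq⟩ := hy
      exact ⟨p + q, fun w => by simp [ev, hp w, hq w]⟩
    | mul x y _ _ hx hy =>
      obtain ⟨p, hp⟩ := hx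
      obtain ⟨q, hq⟩ := hy
      exact ⟨p * q, fun w => by simp [ev, hp w, hq w]⟩
    | star x _ hx =>
      obtain ⟨p, hp⟩ := hx
      refine ⟨MvPolynomial.rename (Equiv.swap 0 1) (MvPolynomial.map (starRingEnd ℂ) p), fun w => ?_⟩
      simp only [ContinuousMap.star_apply, hp w, ev, MvPolynomial.eval_rename, MvPolynomial.eval_map]
      rw [MvPolynomial.eval, ← Complex.star_def, MvPolynomial.coe_eval₂Hom]
      show (starRingEnd ℂ) _ = _
      rw [MvPolynomial.hom_eval₂]
      congr 1
      ext i; fin_cases i <;> simp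
  obtain ⟨q, hq⟩ := key
  refine ⟨q, fun w hw => ?_⟩
  have h1 := (ContinuousMap.dist_apply_le_dist (f := F) (g := G) (⟨w, by simpa [s] using hw⟩ : s)).trans hd.le
  rw [hq, dist_eq_norm] at h1
  exact h1

lemma SS_bound (a : R16ˣ) (N : ℝ) (hN : 0 < N) (f : ℂ → ℂ) (ε : ℝ) (hf : ∀ w : ℂ, ‖w‖ ≤ 2 → ‖f w‖ ≤ ε) :
    ‖SS a N f‖ ≤ ε * ‖SS a N (fun _ => 1)‖ := by
  have e : SS a N (fun _ => 1) = (((N ^ 2)⁻¹ * ∑ p ∈ BX (4 * N ^ 2), (if mk16 p.1 = a then 1 else 0) * Real.log (NN p.1) : ℝ) : ℂ) := by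
    simp only [SS, mul_one]; push_cast
    congr 1
    refine Finset.sum_congr rfl fun p _ => ?_
    split_ifs <;> simp
  rw [e, Complex.norm_real, Real.norm_eq_abs, abs_of_nonneg (mul_nonneg (by positivity) (Finset.sum_nonneg fun p _ => mul_nonneg (by positivity) (GP_log_nonneg p))), SS, norm_mul,
    Complex.norm_real, Real.norm_eq_abs, abs_of_nonneg (by positivity), mul_left_comm]
  refine mul_le_mul_of_nonneg_left ?_ (by positivity)
  rw [Finset.mul_sum]
  refine norm_sum_le_of_le _ fun p hp => ?_
  rw [norm_mul, norm_mul, Complex.norm_real, Real.norm_eq_abs, abs_of_nonneg (GP_log_nonneg p), mul_comm]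
  have h1 : ‖f (GaussianInt.toComplex p.1 / N)‖ ≤ ε := by
    apply hf
    rw [norm_div, Complex.norm_real, Real.norm_eq_abs, abs_of_pos hN, div_le_iff₀ hN]
    have := mem_BX.mp hp
    rw [NN_sq] at this
    exact abs_le_of_sq_le_sq' (by nlinarith) (by positivity) |>.2
  have h2 : ‖(if mk16 p.1 = a then (1:ℂ) else 0)‖ = (if mk16 p.1 = a then (1:ℝ) else 0) := by split_ifs <;> simp
  rw [h2]
  exact mul_le_mul_of_nonneg_right h1 (mul_nonneg (by positivity) (GP_log_nonneg p))

lemma SS_approx (Φ : ℂ → ℂ) (hΦ : Continuous Φ) (ε : ℝ) (hε : 0 < ε) :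
    ∃ L : ℂ, ∀ a, ∀ᶠ N : ℝ in atTop, ‖SS a N Φ - L‖ ≤ ε := by
  obtain ⟨L0, hL0⟩ := SS_poly 1
  have hK : 0 < ‖L0‖ + 1 := by positivity
  obtain ⟨q, hq⟩ := poly_approx Φ hΦ (ε / 2 / (‖L0‖ + 1)) (by positivity)
  obtain ⟨L, hL⟩ := SS_poly q
  refine ⟨L, fun a => ?_⟩
  have h1 : ∀ᶠ N : ℝ in atTop, ‖SS a N (ev 1)‖ < ‖L0‖ + 1 :=
    (hL0 a).norm.eventually (gt_mem_nhds (by linarith))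
  have h2 : ∀ᶠ N : ℝ in atTop, ‖SS a N (ev q) - L‖ < ε / 2 := by
    have := (tendsto_iff_norm_sub_tendsto_zero.mp (hL a))
    exact this.eventually (gt_mem_nhds (by positivity))
  filter_upwards [h1, h2, eventually_gt_atTop 0] with N h1 h2 hN
  have e1 : ev 1 = fun _ => 1 := by ext w; simp [ev]
  have e : SS a N Φ = SS a N (fun w => Φ w - ev q w) + SS a N (ev q) := by
    rw [← SS_add]; congr 1; ext w; ring
  have h3 := SS_bound a N hN _ _ hq
  rw [← e1] at h3
  have h4 : ε / 2 / (‖L0‖ + 1) * ‖SS a N (ev 1)‖ ≤ ε / 2 := by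
    rw [div_mul_eq_mul_div, div_le_iff₀ hK]
    exact mul_le_mul_of_nonneg_left h1.le (by positivity)
  have h5 := norm_add_le (SS a N (fun w => Φ w - ev q w)) (SS a N (ev q) - L)
  rw [e, add_sub_assoc]
  linarith

end

noncomputable section
open Filter Topology MeasureTheory Set Complex
open scoped Classical

def inBox (N : ℝ) (p : GP) : Prop := |(p.1.re : ℝ)| ≤ N ∧ |(p.1.im : ℝ)| ≤ N

lemma NN_ri (z : GaussianInt) : NN z = (z.re : ℝ) ^ 2 + (z.im : ℝ) ^ 2 := NN_mk z.re z.im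

lemma inBox_NN {N : ℝ} {p : GP} (h : inBox N p) : NN p.1 ≤ 2 * N ^ 2 := by
  rw [NN_ri, ← sq_abs, ← sq_abs (p.1.im : ℝ)]
  have h1 := abs_nonneg (p.1.re : ℝ)
  have h2 := abs_nonneg (p.1.im : ℝ)
  nlinarith [h.1, h.2]

def BB (N : ℝ) : Finset GP := (BX (2 * N ^ 2)).filter (inBox N)

lemma mem_BB {N : ℝ} {p : GP} : p ∈ BB N ↔ inBox N p := by
  simp only [BB, Finset.mem_filter, mem_BX, and_iff_right_iff_imp]
  exact inBox_NN

/-- nonneg log-weight in class `a` -/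
def lw (a : R16ˣ) (p : GP) : ℝ := (if mk16 p.1 = a then 1 else 0) * Real.log (NN p.1)

lemma lw_nonneg (a : R16ˣ) (p : GP) : 0 ≤ lw a p := mul_nonneg (by positivity) (GP_log_nonneg p)

def th (a : R16ˣ) (N : ℝ) : ℝ := ∑ p ∈ BB N, lw a p

lemma th_lower (a : R16ˣ) : ∀ᶠ N : ℝ in atTop, cc 0 / 2 * N ^ 2 ≤ th a N := by
  have hc : 0 < cc 0 := by have := MM_pos; simp [cc]; positivity
  have hX : Tendsto (fun N : ℝ => N ^ 2) atTop atTop := tendsto_pow_atTop two_ne_zero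
  have h := (cls_lim a 0 0 le_rfl).comp hX
  have h2 := ((Complex.continuous_re.tendsto _).comp h).eventually (lt_mem_nhds (a := cc 0 / 2) (by
    rw [Complex.ofReal_re]; linarith))
  filter_upwards [h2, eventually_gt_atTop 0] with N h hN
  have e : TT' (cls a 0) 0 (N ^ 2) = (((N ^ 2)⁻¹ * ∑ p ∈ BX (N ^ 2), lw a p : ℝ) : ℂ) := by
    rw [TT', zero_add, Real.rpow_neg_one]
    push_cast
    congr 1
    refine Finset.sum_congr rfl fun p _ => ?_
    rw [cls, lw]
    split_ifs <;> simp
  simp only [Function.comp, e, Complex.ofReal_re] at h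
  rw [inv_mul_eq_div, lt_div_iff₀ (by positivity)] at h
  refine h.le.trans (Finset.sum_le_sum_of_subset_of_nonneg (fun p hp => ?_) fun p _ _ => lw_nonneg a p)
  rw [mem_BX, NN_ri] at hp
  rw [mem_BB]
  exact ⟨abs_le_of_sq_le_sq (by nlinarith [sq_nonneg (p.1.im : ℝ)]) hN.le, abs_le_of_sq_le_sq (by nlinarith [sq_nonneg (p.1.re : ℝ)]) hN.le⟩

def ph (δ : ℝ) (w : ℂ) : ℝ := max 0 (min 1 ((1 + δ - max |w.re| |w.im|) / δ))

lemma ph_nonneg (δ : ℝ) (w : ℂ) : 0 ≤ ph δ w := le_max_left _ _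
lemma ph_le (δ : ℝ) (w : ℂ) : ph δ w ≤ 1 := max_le zero_le_one (min_le_left _ _)
lemma ph_one {δ : ℝ} (hδ : 0 < δ) {w : ℂ} (h1 : |w.re| ≤ 1) (h2 : |w.im| ≤ 1) : ph δ w = 1 := by
  rw [ph, min_eq_left, max_eq_right zero_le_one]
  rw [le_div_iff₀ hδ]
  have := max_le h1 h2
  linarith
lemma ph_zero {δ : ℝ} (hδ : 0 < δ) {w : ℂ} (h : ¬ (|w.re| ≤ 1 + δ ∧ |w.im| ≤ 1 + δ)) : ph δ w = 0 := by
  rw [← max_le_iff, not_le] at h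
  rw [ph, max_eq_left]
  refine (min_le_right _ _).trans (div_nonpos_of_nonpos_of_nonneg (by linarith) hδ.le)
lemma ph_cont (δ : ℝ) : Continuous (ph δ) := by
  unfold ph
  fun_prop

def SR (a : R16ˣ) (N δ : ℝ) : ℝ := (N ^ 2)⁻¹ * ∑ p ∈ BX (4 * N ^ 2), lw a p * ph δ (GaussianInt.toComplex p.1 / N)

lemma SS_SR (a : R16ˣ) (N δ : ℝ) : SS a N (fun w => (ph δ w : ℂ)) = (SR a N δ : ℂ) := by
  rw [SS, SR]
  push_cast
  congr 1
  refine Finset.sum_congr rfl fun p _ => ?_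
  rw [lw]
  split_ifs <;> simp

lemma div_re' (z : GaussianInt) {N : ℝ} : (GaussianInt.toComplex z / N).re = z.re / N ∧ (GaussianInt.toComplex z / N).im = z.im / N := by
  constructor
  · rw [Complex.div_ofReal_re]; simp
  · rw [Complex.div_ofReal_im]; simp

lemma th_le_SR (a : R16ˣ) (N δ : ℝ) (hN : 0 < N) (hδ : 0 < δ) : th a N ≤ N ^ 2 * SR a N δ := by
  rw [SR, ← mul_assoc, mul_inv_cancel₀ (by positivity), one_mul]
  calc th a N = ∑ p ∈ BB N, lw a p * ph δ (GaussianInt.toComplex p.1 / N) := by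
        refine Finset.sum_congr rfl fun p hp => ?_
        have h := mem_BB.mp hp
        rw [ph_one hδ, mul_one]
        · rw [(div_re' p.1).1, abs_div, abs_of_pos hN, div_le_one hN]; exact h.1
        · rw [(div_re' p.1).2, abs_div, abs_of_pos hN, div_le_one hN]; exact h.2
    _ ≤ _ := by
        refine Finset.sum_le_sum_of_subset_of_nonneg (fun p hp => ?_) fun p _ _ => mul_nonneg (lw_nonneg a p) (ph_nonneg _ _)
        rw [mem_BX]
        have := inBox_NN (mem_BB.mp hp)
        nlinarith [sq_nonneg N]

lemma SR_le_th (a : R16ˣ) (N δ : ℝ) (hN : 0 < N) (hδ : 0 < δ) : N ^ 2 * SR a N δ ≤ th a ((1 + δ) * N) := by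
  rw [SR, ← mul_assoc, mul_inv_cancel₀ (by positivity), one_mul]
  have h : ∀ p : GP, lw a p * ph δ (GaussianInt.toComplex p.1 / N) ≤ if inBox ((1 + δ) * N) p then lw a p else 0 := by
    intro p
    split_ifs with h
    · exact mul_le_of_le_one_right (lw_nonneg a p) (ph_le _ _)
    · rw [ph_zero hδ, mul_zero]
      rw [(div_re' p.1).1, (div_re' p.1).2, abs_div, abs_div, abs_of_pos hN, div_le_iff₀ hN, div_le_iff₀ hN]
      exact h
  refine (Finset.sum_le_sum fun p _ => h p).trans ?_
  rw [← Finset.sum_filter]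
  refine Finset.sum_le_sum_of_subset_of_nonneg (fun p hp => ?_) fun p _ _ => lw_nonneg a p
  rw [mem_BB]
  exact (Finset.mem_filter.mp hp).2

lemma th_ratio (η : ℝ) (hη : 0 < η) (a b : R16ˣ) : ∀ᶠ N : ℝ in atTop, th a N ≤ (1 + η) * th b N := by
  have hc : 0 < cc 0 := by have := MM_pos; simp [cc]; positivity
  obtain ⟨δ, hδ, hδ1⟩ : ∃ δ : ℝ, 0 < δ ∧ (1 + δ) ^ 2 ≤ 1 + η / 2 := by
    refine ⟨min (η / 6) (1 / 4), by positivity, ?_⟩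
    have h1 := min_le_left (η / 6) (1 / 4)
    have h2 := min_le_right (η / 6) (1 / 4)
    have h3 : 0 < min (η / 6) (1 / 4) := by positivity
    nlinarith
  set ε := cc 0 * η / 8 with hε
  have hε0 : 0 < ε := by positivity
  obtain ⟨L, hL⟩ := SS_approx (fun w => (ph δ w : ℂ)) (Complex.continuous_ofReal.comp (ph_cont δ)) ε hε0
  have key : ∀ a, ∀ᶠ N : ℝ in atTop, |SR a N δ - L.re| ≤ ε := by
    intro a
    filter_upwards [hL a] with N h
    rw [SS_SR] at h
    have := (Complex.abs_re_le_norm _).trans h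
    simpa using this
  have hN' : Tendsto (fun N : ℝ => N / (1 + δ)) atTop atTop := tendsto_id.atTop_div_const (by positivity)
  filter_upwards [key a, hN'.eventually (key b), th_lower b, eventually_gt_atTop 0] with N h1 h2 h3 hN
  have a1 := th_le_SR a N δ hN hδ
  have a2 := SR_le_th b (N / (1 + δ)) δ (by positivity) hδ
  rw [mul_div_cancel₀ _ (by positivity), div_pow, div_mul_eq_mul_div, div_le_iff₀ (by positivity)] at a2
  rw [abs_le] at h1 h2
  have hN2 : 0 < N ^ 2 := by positivity
  have hb : 0 ≤ th b N := Finset.sum_nonneg fun p _ => lw_nonneg b p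
  have s1 : N ^ 2 * SR a N δ ≤ N ^ 2 * (SR b (N / (1 + δ)) δ + 2 * ε) := mul_le_mul_of_nonneg_left (by linarith) hN2.le
  have s2 : th b N * (1 + δ) ^ 2 ≤ th b N * (1 + η / 2) := mul_le_mul_of_nonneg_left hδ1 hb
  have s3 : N ^ 2 * (2 * ε) = η / 2 * (cc 0 / 2 * N ^ 2) := by rw [hε]; ring
  have s4 : η / 2 * (cc 0 / 2 * N ^ 2) ≤ η / 2 * th b N := mul_le_mul_of_nonneg_left h3 (by positivity)
  nlinarith
end

noncomputable section
open Filter Topology MeasureTheory Set Complex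
open scoped Classical

def pc (a : R16ˣ) (N : ℝ) : ℝ := ∑ p ∈ BB N, if mk16 p.1 = a then 1 else 0

lemma pc_nonneg (a : R16ˣ) (N : ℝ) : 0 ≤ pc a N := Finset.sum_nonneg fun p _ => by positivity

lemma th_le_pc (a : R16ˣ) (N : ℝ) : th a N ≤ Real.log (2 * N ^ 2) * pc a N := by
  rw [th, pc, Finset.mul_sum]
  refine Finset.sum_le_sum fun p hp => ?_
  rw [lw, mul_comm]
  refine mul_le_mul_of_nonneg_right ?_ (by positivity)
  exact Real.log_le_log (by linarith [GP_two p]) (inBox_NN (mem_BB.mp hp))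

lemma BX_card (y : ℝ) (hy : 1 ≤ y) : ((BX (y ^ 2)).card : ℝ) ≤ 9 * y ^ 2 := by
  set n := ⌊y⌋ with hn
  have hn0 : 0 ≤ n := Int.floor_nonneg.mpr (by linarith)
  have h : (BX (y ^ 2)).card ≤ (Finset.Icc (-n) n ×ˢ Finset.Icc (-n) n).card := by
    refine Finset.card_le_card_of_injOn (fun p => (p.1.re, p.1.im)) (fun p hp => ?_) ?_
    · have hp' := mem_BX.mp hp
      rw [NN_ri] at hp'
      have h1 : |(p.1.re : ℝ)| ≤ y := abs_le_of_sq_le_sq (by nlinarith [sq_nonneg (p.1.im : ℝ)]) (by linarith)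
      have h2 : |(p.1.im : ℝ)| ≤ y := abs_le_of_sq_le_sq (by nlinarith [sq_nonneg (p.1.re : ℝ)]) (by linarith)
      have h1' : |p.1.re| ≤ n := Int.le_floor.mpr (by push_cast; exact h1)
      have h2' : |p.1.im| ≤ n := Int.le_floor.mpr (by push_cast; exact h2)
      simp only [Finset.coe_product, Finset.coe_Icc, Set.mem_prod, Set.mem_Icc]
      exact ⟨abs_le.mp h1', abs_le.mp h2'⟩
    · intro p _ q _ h
      simp only [Prod.mk.injEq] at h
      exact Subtype.ext (Zsqrtd.ext h.1 h.2)
  rw [Finset.card_product, Int.card_Icc] at h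
  have h3 : ((n + 1 - -n).toNat : ℝ) = 2 * n + 1 := by
    have : (((n + 1 - -n).toNat : ℤ) : ℝ) = ((n + 1 - -n : ℤ) : ℝ) := by rw [Int.toNat_of_nonneg (by omega)]
    push_cast at this
    rw [this]; ring
  have h4 : ((BX (y ^ 2)).card : ℝ) ≤ (2 * n + 1) * (2 * n + 1) := by rw [← h3]; exact_mod_cast h
  have h5 : (n : ℝ) ≤ y := Int.floor_le y
  have h6 : (0 : ℝ) ≤ n := by exact_mod_cast hn0
  nlinarith

lemma pc_le_th (a : R16ˣ) (N y : ℝ) (hy : 1 < y) : pc a N ≤ 9 * y ^ 2 + th a N / (2 * Real.log y) := by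
  have hl : 0 < Real.log y := Real.log_pos hy
  have h : ∀ p ∈ BB N, (if mk16 p.1 = a then (1:ℝ) else 0) ≤ (if p ∈ BX (y ^ 2) then 1 else 0) + lw a p / (2 * Real.log y) := by
    intro p _
    by_cases h1 : p ∈ BX (y ^ 2)
    · have := div_nonneg (lw_nonneg a p) (by linarith : 0 ≤ 2 * Real.log y)
      rw [if_pos h1]
      split_ifs <;> linarith
    · rw [if_neg h1, zero_add, lw, le_div_iff₀ (by linarith)]
      refine mul_le_mul_of_nonneg_left ?_ (by positivity)
      rw [mem_BX, not_le] at h1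
      have := Real.log_le_log (by positivity) h1.le
      rw [Real.log_pow] at this
      exact_mod_cast this
  refine (Finset.sum_le_sum h).trans ?_
  rw [Finset.sum_add_distrib, ← Finset.sum_div]
  refine add_le_add_left (le_trans ?_ (BX_card y hy.le)) _
  rw [Finset.sum_ite_mem]
  simp only [Finset.sum_const, nsmul_eq_mul, mul_one]
  exact_mod_cast Finset.card_le_card Finset.inter_subset_right

lemma log_two_sq (N : ℝ) (hN : 2 ≤ N) : Real.log (2 * N ^ 2) = Real.log 2 + 2 * Real.log N := by
  rw [Real.log_mul (by norm_num) (by positivity), Real.log_pow]; push_cast; ring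

lemma pc_ratio (η : ℝ) (hη : 0 < η) (hη1 : η ≤ 1) (a b : R16ˣ) : ∀ᶠ N : ℝ in atTop, pc a N ≤ (1 + 8 * η) * pc b N := by
  have hc : 0 < cc 0 := by have := MM_pos; simp [cc]; positivity
  -- exponent 1/(1+η)
  have hr : 0 < 2 - 2 / (1 + η) := by
    rw [sub_pos, div_lt_iff₀ (by positivity)]; linarith
  have h1 := (isLittleO_log_rpow_atTop hr).bound (c := η * (cc 0 / 2) / 27) (by positivity)
  have h2 : ∀ᶠ N : ℝ in atTop, Real.log 2 / (2 * η) ≤ Real.log N :=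
    Real.tendsto_log_atTop.eventually_ge_atTop _
  filter_upwards [h1, h2, th_ratio η hη a b, th_lower b, eventually_ge_atTop 2] with N h1 h2 h3 h4 hN
  have hN0 : 0 < N := by linarith
  have hl : 0 < Real.log N := Real.log_pos (by linarith)
  have hl2 : 0 < Real.log 2 := Real.log_pos (by norm_num)
  set y := N ^ (1 / (1 + η)) with hy
  have hy1 : 1 < y := Real.one_lt_rpow (by linarith) (by positivity)
  have h5 := pc_le_th a N y hy1
  have hly : Real.log y = Real.log N / (1 + η) := by rw [hy, Real.log_rpow hN0]; ring
  rw [Real.norm_eq_abs, abs_of_pos hl, Real.norm_eq_abs, abs_of_pos (by positivity)] at h1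
  have hlog := log_two_sq N hN
  have hlN : Real.log 2 ≤ Real.log N := Real.log_le_log (by norm_num) hN
  set Λ := Real.log (2 * N ^ 2) with hΛ
  have hΛ0 : 0 < Λ := by linarith
  have hthpc := th_le_pc b N
  have hpb := pc_nonneg b N
  have hthb : 0 ≤ th b N := Finset.sum_nonneg fun p _ => lw_nonneg b p
  -- small part
  have hy2 : y ^ 2 * N ^ (2 - 2 / (1 + η)) = N ^ 2 := by
    rw [hy, ← Real.rpow_natCast, ← Real.rpow_mul hN0.le, ← Real.rpow_add hN0, ← Real.rpow_natCast]
    congr 1; push_cast; ring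
  have s1 : 9 * y ^ 2 * Λ ≤ η * th b N := by
    calc 9 * y ^ 2 * Λ ≤ 9 * y ^ 2 * (3 * Real.log N) := mul_le_mul_of_nonneg_left (by linarith) (by positivity)
      _ ≤ 9 * y ^ 2 * (3 * (η * (cc 0 / 2) / 27 * N ^ (2 - 2 / (1 + η)))) :=
        mul_le_mul_of_nonneg_left (by linarith) (by positivity)
      _ = η * (cc 0 / 2 * (y ^ 2 * N ^ (2 - 2 / (1 + η)))) := by ring
      _ = η * (cc 0 / 2 * N ^ 2) := by rw [hy2]
      _ ≤ η * th b N := mul_le_mul_of_nonneg_left h4 hη.le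
  have s2 : 9 * y ^ 2 ≤ η * pc b N := by
    have : 9 * y ^ 2 * Λ ≤ (η * pc b N) * Λ := by nlinarith
    exact le_of_mul_le_mul_right this hΛ0
  -- main part
  have s3 : Λ ≤ (1 + η) * (2 * Real.log N) := by
    rw [div_le_iff₀ (by positivity)] at h2
    nlinarith
  have s4 : th a N / (2 * Real.log y) ≤ (1 + η) ^ 3 * pc b N := by
    rw [hly, div_le_iff₀ (by positivity)]
    calc th a N ≤ (1 + η) * (Λ * pc b N) := h3.trans (mul_le_mul_of_nonneg_left hthpc (by positivity))
      _ ≤ (1 + η) * (((1 + η) * (2 * Real.log N)) * pc b N) :=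
        mul_le_mul_of_nonneg_left (mul_le_mul_of_nonneg_right s3 hpb) (by positivity)
      _ = _ := by field_simp
  have s5 : (1 + η) ^ 3 ≤ 1 + 7 * η := by nlinarith [mul_nonneg hη.le hη.le, mul_nonneg hη.le (sub_nonneg.mpr hη1)]
  nlinarith

lemma pc_lower (a : R16ˣ) : Tendsto (pc a) atTop atTop := by
  have hc : 0 < cc 0 := by have := MM_pos; simp [cc]; positivity
  refine tendsto_atTop_mono' atTop ?_ (tendsto_id.const_mul_atTop (by positivity : 0 < cc 0 / 6))
  filter_upwards [th_lower a, eventually_ge_atTop 2] with N h hN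
  have h1 := th_le_pc a N
  rw [log_two_sq N hN] at h1
  have h2 : Real.log 2 ≤ Real.log N := Real.log_le_log (by norm_num) hN
  have h3 : Real.log N ≤ N := (Real.log_le_sub_one_of_pos (by linarith)).trans (by linarith)
  have h4 : (Real.log 2 + 2 * Real.log N) * pc a N ≤ (3 * N) * pc a N :=
    mul_le_mul_of_nonneg_right (by linarith) (pc_nonneg a N)
  have h5 : (cc 0 / 6 * N) * (3 * N) ≤ pc a N * (3 * N) := by nlinarith
  exact le_of_mul_le_mul_right h5 (by linarith)

lemma pc_tendsto (a b : R16ˣ) : Tendsto (fun N => pc a N / pc b N) atTop (𝓝 1) := by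
  rw [Metric.tendsto_nhds]
  intro ε hε
  set η := min (ε / 16) 1 with hη
  have h0 : 0 < η := by positivity
  have h1 : η ≤ 1 := min_le_right _ _
  have h2 : η ≤ ε / 16 := min_le_left _ _
  filter_upwards [pc_ratio η h0 h1 a b, pc_ratio η h0 h1 b a, (pc_lower b).eventually_gt_atTop 0] with N ha hb hp
  have ha0 := pc_nonneg a N
  rw [Real.dist_eq, abs_lt]
  have e1 : pc a N / pc b N ≤ 1 + 8 * η := by rw [div_le_iff₀ hp]; exact ha
  have e2 : 1 - 8 * η ≤ pc a N / pc b N := by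
    rw [le_div_iff₀ hp]
    rcases le_or_gt (1 - 8 * η) 0 with h | h
    · nlinarith
    · nlinarith [mul_le_mul_of_nonneg_left hb h.le, mul_nonneg (mul_nonneg h0.le h0.le) ha0]
  constructor <;> linarith
end

noncomputable section
open Filter Topology MeasureTheory Set Complex
open scoped Classical

lemma mk16_iff (z w : GaussianInt) : mk16 z = mk16 w ↔ (16 : GaussianInt) ∣ z - w := by
  rw [Ideal.Quotient.mk_eq_mk_iff_sub_mem, Ideal.mem_span_singleton]

lemma dvd16 (z : GaussianInt) : (16 : GaussianInt) ∣ z ↔ (16 : ℤ) ∣ z.re ∧ (16 : ℤ) ∣ z.im := by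
  have := Zsqrtd.intCast_dvd (d := -1) 16 z
  exact_mod_cast this

lemma unit16_of_odd {z : GaussianInt} (h : (z.re + z.im) % 2 = 1) : IsUnit (mk16 z) := by
  have hn : IsCoprime z.norm 2 := by
    obtain ⟨e, he⟩ : ∃ e, z.re + z.im = 2 * e + 1 := ⟨(z.re + z.im) / 2, by omega⟩
    refine ⟨1, -(2 * e ^ 2 + 2 * e - z.re * z.im), ?_⟩
    rw [Zsqrtd.norm_def]
    linear_combination (z.re + z.im + 2 * e + 1) * he
  obtain ⟨u, v, huv⟩ := hn.pow_right (n := 4)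
  have h1 : z * (star z * (u : GaussianInt)) + (16 : GaussianInt) * (v : GaussianInt) = 1 := by
    have : ((u * z.norm + v * 2 ^ 4 : ℤ) : GaussianInt) = 1 := by rw [huv]; simp
    push_cast at this
    rw [Zsqrtd.norm_eq_mul_conj] at this
    linear_combination this
  refine IsUnit.of_mul_eq_one (mk16 (star z * (u : GaussianInt))) ?_
  rw [← map_mul, ← map_one mk16, ← h1, mk16_add]

lemma odd_of_unit16 {z : GaussianInt} (h : IsUnit (mk16 z)) : (z.re + z.im) % 2 = 1 := by
  obtain ⟨x, hx⟩ := h.exists_right_inv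
  obtain ⟨w, rfl⟩ := Ideal.Quotient.mk_surjective x
  rw [← map_one mk16, ← map_mul, mk16_iff, dvd16] at hx
  obtain ⟨⟨s, hs⟩, ⟨t, ht⟩⟩ := hx
  simp only [Zsqrtd.re_sub, Zsqrtd.im_sub, Zsqrtd.re_mul, Zsqrtd.im_mul, Zsqrtd.re_one, Zsqrtd.im_one] at hs ht
  rcases Int.emod_two_eq_zero_or_one (z.re + z.im) with h1 | h1
  · obtain ⟨e, he⟩ := Int.dvd_of_emod_eq_zero h1
    have h2 : 2 * (e * (w.re + w.im) - z.im * w.im - 8 * s - 8 * t) = 1 := by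
      linear_combination hs + ht - he * (w.re + w.im)
    omega
  · exact h1

def U16 : Finset (Fin 16 × Fin 16) := Finset.univ.filter fun q => (q.1.val + q.2.val) % 2 = 1

lemma U16_card : U16.card = 128 := by decide +kernel

def fU (q : U16) : R16ˣ := IsUnit.unit (a := mk16 ⟨(q.1.1.val : ℤ), (q.1.2.val : ℤ)⟩) (unit16_of_odd (by
  have := (Finset.mem_filter.mp q.2).2
  simp only
  omega))

lemma fU_bij : Function.Bijective fU := by
  constructor
  · rintro ⟨⟨a, b⟩, h⟩ ⟨⟨c, d⟩, h'⟩ e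
    have e1 := congrArg Units.val e
    simp only [fU, IsUnit.unit_spec] at e1
    rw [mk16_iff, dvd16] at e1
    simp only [Zsqrtd.re_sub, Zsqrtd.im_sub] at e1
    have ha := a.2
    have hb := b.2
    have hc := c.2
    have hd := d.2
    have h1 : a = c := Fin.ext (by omega)
    have h2 : b = d := Fin.ext (by omega)
    subst h1; subst h2; rfl
  · intro u
    obtain ⟨z, hz⟩ := Ideal.Quotient.mk_surjective (u : R16)
    have ho := odd_of_unit16 (z := z) (by rw [mk16, hz]; exact u.isUnit)
    have h1 : 0 ≤ z.re % 16 := Int.emod_nonneg _ (by norm_num)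
    have h2 : 0 ≤ z.im % 16 := Int.emod_nonneg _ (by norm_num)
    have hU : ((⟨(z.re % 16).toNat, by omega⟩, ⟨(z.im % 16).toNat, by omega⟩) : Fin 16 × Fin 16) ∈ U16 := by
      simp only [U16, Finset.mem_filter, Finset.mem_univ, true_and]
      omega
    refine ⟨⟨_, hU⟩, Units.ext ?_⟩
    rw [fU, IsUnit.unit_spec, ← hz, mk16_iff, dvd16]
    simp only [Zsqrtd.re_sub, Zsqrtd.im_sub]
    omega

instance fintypeUnits16 : Fintype R16ˣ := Fintype.ofFinite _

lemma card_units16 : Fintype.card R16ˣ = 128 := by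
  rw [← Fintype.card_of_bijective fU_bij, Fintype.card_coe, U16_card]

lemma unit_of_big (p : GP) (h : ¬ NN p.1 ≤ 256) : IsUnit (mk16 p.1) := by
  have h1 : ¬ p.1 ∣ 16 := by
    rintro ⟨r, hr⟩
    apply h
    have hr0 : r ≠ 0 := by rintro rfl; norm_num at hr
    have h2 : NN (16 : GaussianInt) = 256 := by
      rw [NN_eq, Zsqrtd.norm_def]; norm_num
    rw [← h2, hr, NN_mul]
    have := NN_ge_one hr0
    nlinarith [NN_nonneg p.1]
  obtain ⟨u, v, huv⟩ := (p.2.irreducible.coprime_iff_not_dvd.mpr h1)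
  refine IsUnit.of_mul_eq_one (mk16 u) ?_
  rw [← map_mul, ← map_one mk16, ← huv, mul_comm u, mul_comm v, mk16_add]

lemma BB_card (N : ℝ) : ∃ E : ℝ, 0 ≤ E ∧ E ≤ ((BX 256).card : ℝ) ∧ ((BB N).card : ℝ) = (∑ a : R16ˣ, pc a N) + E := by
  refine ⟨∑ p ∈ BB N, if IsUnit (mk16 p.1) then 0 else 1, Finset.sum_nonneg fun p _ => by positivity, ?_, ?_⟩
  · calc _ ≤ ∑ p ∈ BB N, (if p ∈ BX 256 then (1:ℝ) else 0) := by
          refine Finset.sum_le_sum fun p _ => ?_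
          by_cases h : p ∈ BX 256
          · rw [if_pos h]; split_ifs <;> norm_num
          · rw [if_neg h, if_pos (unit_of_big p (by rwa [mem_BX] at h))]
      _ ≤ _ := by
          rw [Finset.sum_ite_mem]
          simp only [Finset.sum_const, nsmul_eq_mul, mul_one]
          exact_mod_cast Finset.card_le_card Finset.inter_subset_right
  · simp only [pc]
    rw [Finset.sum_comm, ← Finset.sum_add_distrib, Finset.card_eq_sum_ones, Nat.cast_sum]
    refine Finset.sum_congr rfl fun p _ => ?_
    by_cases h : IsUnit (mk16 p.1)
    · obtain ⟨u, hu⟩ := h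
      rw [← hu]
      simp [Units.val_inj]
    · rw [if_neg h, Finset.sum_eq_zero]
      · simp
      · intro a _
        rw [if_neg]
        intro h2; exact h (h2 ▸ a.isUnit)

lemma final_lim (a : R16ˣ) : Tendsto (fun N : ℝ => pc a N / ((BB N).card : ℝ)) atTop (𝓝 (1 / 128)) := by
  choose E hE0 hE1 hE using BB_card
  have h1 : Tendsto (fun N : ℝ => ∑ b : R16ˣ, pc b N / pc a N) atTop (𝓝 (∑ b : R16ˣ, 1)) :=
    tendsto_finsetSum _ fun b _ => pc_tendsto b a
  have h2 : Tendsto (fun N : ℝ => E N / pc a N) atTop (𝓝 0) := by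
    refine squeeze_zero (fun N => div_nonneg (hE0 N) (pc_nonneg a N))
      (fun N => div_le_div_of_nonneg_right (hE1 N) (pc_nonneg a N)) ((pc_lower a).const_div_atTop _)
  have h3 := (h1.add h2).inv₀ (by simp [card_units16])
  have e : ((∑ b : R16ˣ, (1:ℝ)) + 0)⁻¹ = 1 / 128 := by simp [card_units16]
  rw [e] at h3
  refine h3.congr fun N => ?_
  rw [hE, ← Finset.sum_div, ← add_div, inv_div]

lemma ncard_eq (N : ℕ) (P : GaussianInt → Prop) :
    ({z : GaussianInt | Prime z ∧ |z.re| ≤ (N : ℤ) ∧ |z.im| ≤ (N : ℤ) ∧ P z}.ncard : ℕ) =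
      ((BB N).filter fun p => P p.1).card := by
  rw [← Set.ncard_coe_finset, ← Set.ncard_image_of_injective _ Subtype.val_injective]
  congr 1
  ext z
  simp only [Set.mem_image, Finset.coe_filter, mem_BB, inBox]
  constructor
  · rintro ⟨h1, h2, h3, h4⟩
    exact ⟨⟨z, h1⟩, ⟨⟨by exact_mod_cast h2, by exact_mod_cast h3⟩, h4⟩, rfl⟩
  · rintro ⟨p, ⟨⟨h2, h3⟩, h4⟩, rfl⟩
    exact ⟨p.2, by exact_mod_cast h2, by exact_mod_cast h3, h4⟩

lemma final_counts (g : GaussianInt) (hg : (g.re + g.im) % 2 = 1) :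
    Tendsto (fun N : ℕ => (({z : GaussianInt | Prime z ∧ |z.re| ≤ (N : ℤ) ∧ |z.im| ≤ (N : ℤ) ∧
      (16 : GaussianInt) ∣ (z - g)}.ncard : ℕ) : ℝ) / (({z : GaussianInt | Prime z ∧ |z.re| ≤ (N : ℤ) ∧ |z.im| ≤ (N : ℤ)}.ncard : ℕ) : ℝ))
      atTop (𝓝 (1 / 128)) := by
  refine ((final_lim (unit16_of_odd hg).unit).comp tendsto_natCast_atTop_atTop).congr fun N => ?_
  have h2 := ncard_eq N (fun _ => True)
  simp only [and_true, Finset.filter_true] at h2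
  rw [h2, ncard_eq N (fun z => (16 : GaussianInt) ∣ (z - g)), Function.comp]
  congr 1
  simp only [pc, IsUnit.unit_spec, mk16_iff]
  simp
end

/-- the Gaussian primes congruent to `-1-6i (mod 16)` have relative natural
density `1/128` among all Gaussian primes, counting in boxes `{|x| ≤ N, |y| ≤ N}`. -/
theorem stmt18 :
    Filter.Tendsto (fun N : ℕ => (Acount N : ℝ) / (Bcount N : ℝ)) Filter.atTop
      (nhds (1 / 128)) := by
  have hg : ((-1 - 6 * gi : GaussianInt).re + (-1 - 6 * gi : GaussianInt).im) % 2 = 1 := by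
    have h6 : (6 : GaussianInt) = ⟨6, 0⟩ := rfl
    rw [h6]
    simp [gi]
  exact final_counts (-1 - 6 * gi) hg
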